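/- arXiv:1505.00386 — 4 statements merged into one kernel-verified Lean document; each statement's English description precedes it below -/
import Mathlib

section
/- Let G be a connected graph that is {K_{1,3}, B_{1,1}}-free. Then G contains P_5 as an induced subgraph if and only if G belongs to P(5). -/
open SimpleGraph

def graphOfList (n : ℕ) (E : List (Fin n × Fin n)) : SimpleGraph (Fin n) :=
  SimpleGraph.fromRel (fun a b => (a, b) ∈ E)

/-- The claw `K_{1,3}`, with center `0`. -/
def K13 : SimpleGraph (Fin 4) := graphOfList 4 [(0,1), (0,2), (0,3)]

/-- `B_{1,m} = N_{1,m,0}`: a triangle `0,1,2`, a pendant vertex `3` attached to `0`,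
and a path `4,5,…,m+3` of length `m` attached at the vertex `1`. -/
def Bgraph (m : ℕ) : SimpleGraph (Fin (m + 4)) :=
  SimpleGraph.fromRel (fun a b =>
    (a.val = 0 ∧ b.val = 1) ∨ (a.val = 0 ∧ b.val = 2) ∨ (a.val = 1 ∧ b.val = 2) ∨
    (a.val = 0 ∧ b.val = 3) ∨ (a.val = 1 ∧ b.val = 4) ∨
    (4 ≤ a.val ∧ b.val = a.val + 1))

/-- `G` contains `H` as an induced subgraph. -/
def ContainsInduced {V W : Type*} (G : SimpleGraph V) (H : SimpleGraph W) : Prop :=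
  Nonempty (H ↪g G)

/-- The cliques `L 0, …, L (l-1)` form an (induced) fat `l`-path decomposition:
they are nonempty, pairwise disjoint, and two distinct vertices lying in them are adjacent
iff they lie in the same clique or in consecutive cliques. -/
def IsFatPathDecomp {V : Type*} (G : SimpleGraph V) (l : ℕ) (L : Fin l → Set V) : Prop :=
  (∀ i, (L i).Nonempty) ∧
  (∀ i j, i ≠ j → Disjoint (L i) (L j)) ∧
  (∀ (i j : Fin l) (u v : V), u ∈ L i → v ∈ L j → u ≠ v →
    (G.Adj u v ↔ i = j ∨ (i : ℕ) + 1 = (j : ℕ) ∨ (j : ℕ) + 1 = (i : ℕ)))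

/-- The cliques `L 0, …, L l` form an (induced) fat `l`-cycle decomposition:
they are nonempty, pairwise disjoint, and two distinct vertices lying in them are adjacent
iff they lie in the same clique or in (cyclically) consecutive cliques. -/
def IsFatCycleDecomp {V : Type*} (G : SimpleGraph V) (l : ℕ) (L : Fin (l + 1) → Set V) : Prop :=
  (∀ i, (L i).Nonempty) ∧
  (∀ i j, i ≠ j → Disjoint (L i) (L j)) ∧
  (∀ (i j : Fin (l + 1)) (u v : V), u ∈ L i → v ∈ L j → u ≠ v →
    (G.Adj u v ↔ i = j ∨ ((i : ℕ) + 1) % (l + 1) = (j : ℕ) ∨ ((j : ℕ) + 1) % (l + 1) = (i : ℕ)))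

/-- `G` is a fat `l`-path (so `l ≥ 5` and the fundamental cliques cover `G`). -/
def IsFatPath {V : Type*} (G : SimpleGraph V) (l : ℕ) : Prop :=
  5 ≤ l ∧ ∃ L : Fin l → Set V, IsFatPathDecomp G l L ∧ ∀ v : V, ∃ i, v ∈ L i

/-- `G` is a fat `l`-cycle (so `l ≥ 5` and the `l+1` fundamental cliques cover `G`). -/
def IsFatCycle {V : Type*} (G : SimpleGraph V) (l : ℕ) : Prop :=
  5 ≤ l ∧ ∃ L : Fin (l + 1) → Set V, IsFatCycleDecomp G l L ∧ ∀ v : V, ∃ i, v ∈ L i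

/-- `G` belongs to the family `𝒫(p)` of all fat `i`-paths and fat `i`-cycles with `i ≥ p`. -/
def MemFatFamily {V : Type*} (G : SimpleGraph V) (p : ℕ) : Prop :=
  ∃ l, p ≤ l ∧ (IsFatPath G l ∨ IsFatCycle G l)

structure FatH {V : Type*} (R : V → V → Prop) : Prop where
  refl : ∀ v, R v v
  symm : ∀ u v, R u v → R v u
  claw : ∀ v x y z, R v x → R v y → R v z → ¬ R x y → ¬ R x z → ¬ R y z → False
  bull : ∀ a b c d e, R a b → R a c → R b c → R a d → R b e →
    ¬ R d b → ¬ R d c → ¬ R d e → ¬ R e a → ¬ R e c → False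
  conn : ∀ S : Set V, S.Nonempty → (∀ u v, u ∈ S → R u v → v ∈ S) → ∀ v, v ∈ S

namespace FatH

variable {V : Type*} {R : V → V → Prop}

def IsP (R : V → V → Prop) (p : ℤ → V) (n : ℤ) : Prop :=
  ∀ i j, 0 ≤ i → i < n → 0 ≤ j → j < n → (R (p i) (p j) ↔ i - j ≤ 1 ∧ j - i ≤ 1)

def Like (R : V → V → Prop) (p : ℤ → V) (n : ℤ) (v : V) (i : ℤ) : Prop :=
  ∀ j, 0 ≤ j → j < n → (R v (p j) ↔ i - j ≤ 1 ∧ j - i ≤ 1)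

def IsC (R : V → V → Prop) (c : ℤ → V) (m : ℤ) : Prop :=
  (∀ i, c (i + m) = c i) ∧
  ∀ i j, i - j ≤ m - 2 → j - i ≤ m - 2 → (R (c i) (c j) ↔ i - j ≤ 1 ∧ j - i ≤ 1)

def LikeC (R : V → V → Prop) (c : ℤ → V) (m : ℤ) (v : V) (i : ℤ) : Prop :=
  ∀ j, i - j ≤ m - 2 → j - i ≤ m - 2 → (R v (c j) ↔ i - j ≤ 1 ∧ j - i ≤ 1)

def Pat (r0 r1 r2 r3 r4 : Prop) : Prop :=
  (r1 → r0 ∨ r2) ∧ (r2 → r1 ∨ r3) ∧ (r3 → r2 ∨ r4) ∧ ¬ (r0 ∧ r2 ∧ r4) ∧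
  (r1 → r2 → r0 ∨ r3) ∧ (r2 → r3 → r1 ∨ r4) ∧
  ¬ (r0 ∧ r1 ∧ r4) ∧ ¬ (r0 ∧ r3 ∧ r4) ∧ ¬ (r0 ∧ r2 ∧ r3) ∧ ¬ (r1 ∧ r2 ∧ r4)

theorem pat (H : FatH R) (a0 a1 a2 a3 a4 v : V)
    (h01 : R a0 a1) (h12 : R a1 a2) (h23 : R a2 a3) (h34 : R a3 a4)
    (h02 : ¬ R a0 a2) (h03 : ¬ R a0 a3) (h04 : ¬ R a0 a4)
    (h13 : ¬ R a1 a3) (h14 : ¬ R a1 a4) (h24 : ¬ R a2 a4) :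
    Pat (R v a0) (R v a1) (R v a2) (R v a3) (R v a4) := by
  have s := H.symm
  have c1 := H.claw a1 a0 a2 v
  have c2 := H.claw a2 a1 a3 v
  have c3 := H.claw a3 a2 a4 v
  have c4 := H.claw v a0 a2 a4
  have b1 := H.bull a1 a2 v a0 a3
  have b2 := H.bull a2 a3 v a1 a4
  have b3 := H.bull v a1 a0 a4 a2
  have b4 := H.bull v a3 a4 a0 a2
  have b5 := H.bull v a3 a2 a0 a4
  have b6 := H.bull v a1 a2 a4 a0
  have w : ∀ x y, R x y ↔ R y x := fun x y => ⟨s x y, s y x⟩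
  simp only [w a1 a0, w a2 a0, w a3 a0, w a4 a0, w a2 a1, w a3 a1, w a4 a1, w a3 a2, w a4 a2,
    w a4 a3, w a0 v, w a1 v, w a2 v, w a3 v, w a4 v] at *
  unfold Pat
  clear s w H
  refine ⟨?_, ?_, ?_, ?_, ?_, ?_, ?_, ?_, ?_, ?_⟩ <;> grind

theorem win (H : FatH R) {p : ℤ → V} {n : ℤ} (hp : IsP R p n) (v : V) (s : ℤ) (h0 : 0 ≤ s)
    (h1 : s + 4 < n) :
    Pat (R v (p s)) (R v (p (s+1))) (R v (p (s+2))) (R v (p (s+3))) (R v (p (s+4))) := by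
  apply H.pat <;> rw [hp _ _ (by omega) (by omega) (by omega) (by omega)] <;> omega

theorem upd (H : FatH R) {p : ℤ → V} {n : ℤ} (hp : IsP R p n) {u : V} {i : ℤ} 
    (hu : Like R p n u i) : IsP R (Function.update p i u) n := by
  intro a b ha ha' hb hb'
  by_cases h1 : a = i <;> by_cases h2 : b = i
  · subst h1; subst h2; simp [H.refl]
  · subst h1; simp [Function.update_of_ne h2, hu b hb hb']
  · subst h2
    have := hu a ha ha'
    have s1 := H.symm u (p a)
    have s2 := H.symm (p a) u
    simp only [Function.update_of_ne h1, Function.update_self]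
    constructor
    · intro h; have := this.1 (s2 h); omega
    · intro h; exact s1 (this.2 (by omega))
  · simp [Function.update_of_ne h1, Function.update_of_ne h2, hp a b ha ha' hb hb']

theorem P3le (H : FatH R) {p : ℤ → V} {n : ℤ} (hn : 5 ≤ n) (hp : IsP R p n) {u v : V} {i j : ℤ}
    (hi : 0 ≤ i) (hj : j < n) (hij : i ≤ j)
    (hu : Like R p n u i) (hv : Like R p n v j) : R u v ↔ j - i ≤ 1 := by
  have hui : ∀ k, 0 ≤ k → k < n → k - i ≤ 1 → i - k ≤ 1 → R u (p k) := 
    fun k h1 h2 h3 h4 => (hu k h1 h2).2 ⟨h4, h3⟩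
  have hvi : ∀ k, 0 ≤ k → k < n → k - j ≤ 1 → j - k ≤ 1 → R v (p k) := 
    fun k h1 h2 h3 h4 => (hv k h1 h2).2 ⟨h4, h3⟩
  have hun : ∀ k, 0 ≤ k → k < n → (k - i ≥ 2 ∨ i - k ≥ 2) → ¬ R u (p k) := 
    fun k h1 h2 h3 h4 => by have := (hu k h1 h2).1 h4; omega
  have hvn : ∀ k, 0 ≤ k → k < n → (k - j ≥ 2 ∨ j - k ≥ 2) → ¬ R v (p k) := 
    fun k h1 h2 h3 h4 => by have := (hv k h1 h2).1 h4; omega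
  have hpi : ∀ k l, 0 ≤ k → k < n → 0 ≤ l → l < n → k - l ≤ 1 → l - k ≤ 1 → R (p k) (p l) := 
    fun k l h1 h2 h3 h4 h5 h6 => (hp k l h1 h2 h3 h4).2 ⟨h5, h6⟩
  have hpn : ∀ k l, 0 ≤ k → k < n → 0 ≤ l → l < n → (k - l ≥ 2 ∨ l - k ≥ 2) → ¬ R (p k) (p l) := 
    fun k l h1 h2 h3 h4 h5 h6 => by have := (hp k l h1 h2 h3 h4).1 h6; omega
  have S := H.symm
  have Sn : ∀ x y, ¬ R x y → ¬ R y x := fun x y h h' => h (S _ _ h')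
  have wu := fun s h0 h1 => H.win (H.upd hp hu) v s h0 h1
  have wv := fun s h0 h1 => H.win (H.upd hp hv) u s h0 h1
  have ev : ∀ (q : V) (k l : ℤ), k ≠ l → Function.update p l q k = p k := 
    fun q k l h => Function.update_of_ne h _ _
  have eq : ∀ (q : V) (k l : ℤ), k = l → Function.update p l q k = q := 
    fun q k l h => by subst h; simp
  constructor
  · intro h
    by_contra hc
    by_cases h3 : j - i = 2
    · obtain rfl : j = i + 2 := by omega
      by_cases h4 : i + 4 < n
      · have w := wu i hi (by omega)
        rw [eq _ _ _ rfl, ev _ _ _ (by omega), ev _ _ _ (by omega), ev _ _ _ (by omega),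
          ev _ _ _ (by omega)] at w
        have := hvi (i+1) (by omega) (by omega) (by omega) (by omega)
        have := hvi (i+2) (by omega) (by omega) (by omega) (by omega)
        have := hvi (i+3) (by omega) (by omega) (by omega) (by omega)
        have := S _ _ h
        unfold Pat at w; grind
      · by_cases h5 : i + 3 < n
        · have w := wu (i-1) (by omega) (by omega)
          rw [ev _ _ _ (by omega), eq _ _ _ (by omega), ev _ _ _ (by omega), ev _ _ _ (by omega),
            ev _ _ _ (by omega)] at w
          have := hvi (i-1+2) (by omega) (by omega) (by omega) (by omega)
          have := hvi (i-1+3) (by omega) (by omega) (by omega) (by omega)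
          have := hvi (i-1+4) (by omega) (by omega) (by omega) (by omega)
          have := S _ _ h
          unfold Pat at w; grind
        · have w := wv (i-2) (by omega) (by omega)
          rw [ev _ _ _ (by omega), ev _ _ _ (by omega), ev _ _ _ (by omega), ev _ _ _ (by omega),
            eq _ _ _ (by omega)] at w
          have := hui (i-2+1) (by omega) (by omega) (by omega) (by omega)
          have := hui (i-2+2) (by omega) (by omega) (by omega) (by omega)
          have := hui (i-2+3) (by omega) (by omega) (by omega) (by omega)
          unfold Pat at w; grind
    · by_cases h4 : 1 ≤ i
      · exact H.claw u v (p (i-1)) (p (i+1)) h (hui _ (by omega) (by omega) (by omega) (by omega))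
          (hui _ (by omega) (by omega) (by omega) (by omega))
          (hvn _ (by omega) (by omega) (by omega)) (hvn _ (by omega) (by omega) (by omega))
          (hpn _ _ (by omega) (by omega) (by omega) (by omega) (by omega))
      · by_cases h5 : j + 1 < n
        · exact H.claw v u (p (j-1)) (p (j+1)) (S _ _ h)
            (hvi _ (by omega) (by omega) (by omega) (by omega))
            (hvi _ (by omega) (by omega) (by omega) (by omega))
            (hun _ (by omega) (by omega) (by omega)) (hun _ (by omega) (by omega) (by omega))
            (hpn _ _ (by omega) (by omega) (by omega) (by omega) (by omega))
        · exact H.bull v (p (j-1)) (p j) u (p (j-2)) 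
            (hvi _ (by omega) (by omega) (by omega) (by omega))
            (hvi _ (by omega) (by omega) (by omega) (by omega))
            (hpi _ _ (by omega) (by omega) (by omega) (by omega) (by omega) (by omega))
            (S _ _ h)
            (hpi _ _ (by omega) (by omega) (by omega) (by omega) (by omega) (by omega))
            (hun _ (by omega) (by omega) (by omega)) (hun _ (by omega) (by omega) (by omega))
            (hun _ (by omega) (by omega) (by omega)) 
            (Sn _ _ (hvn _ (by omega) (by omega) (by omega)))
            (hpn _ _ (by omega) (by omega) (by omega) (by omega) (by omega))
  · intro h
    by_contra hc
    by_cases h3 : j = i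
    · subst h3
      by_cases h4 : 2 ≤ j
      · exact H.claw (p (j-1)) (p (j-2)) u v 
          (hpi _ _ (by omega) (by omega) (by omega) (by omega) (by omega) (by omega))
          (S _ _ (hui _ (by omega) (by omega) (by omega) (by omega)))
          (S _ _ (hvi _ (by omega) (by omega) (by omega) (by omega)))
          (Sn _ _ (hun _ (by omega) (by omega) (by omega)))
          (Sn _ _ (hvn _ (by omega) (by omega) (by omega))) hc
      · exact H.claw (p (j+1)) (p (j+2)) u v 
          (hpi _ _ (by omega) (by omega) (by omega) (by omega) (by omega) (by omega))
          (S _ _ (hui _ (by omega) (by omega) (by omega) (by omega)))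
          (S _ _ (hvi _ (by omega) (by omega) (by omega) (by omega)))
          (Sn _ _ (hun _ (by omega) (by omega) (by omega)))
          (Sn _ _ (hvn _ (by omega) (by omega) (by omega))) hc
    · obtain rfl : j = i + 1 := by omega
      have hc' := Sn _ _ hc
      by_cases h4 : i + 4 < n
      · have w := wu i hi (by omega)
        rw [eq _ _ _ rfl, ev _ _ _ (by omega), ev _ _ _ (by omega), ev _ _ _ (by omega),
          ev _ _ _ (by omega)] at w
        have := hvi (i+1) (by omega) (by omega) (by omega) (by omega)
        have := hvi (i+2) (by omega) (by omega) (by omega) (by omega)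
        have := hvn (i+3) (by omega) (by omega) (by omega)
        unfold Pat at w; grind
      · by_cases h5 : i + 3 < n
        · have w := wu (i-1) (by omega) (by omega)
          rw [ev _ _ _ (by omega), eq _ _ _ (by omega), ev _ _ _ (by omega), ev _ _ _ (by omega),
            ev _ _ _ (by omega)] at w
          have := hvi (i-1+2) (by omega) (by omega) (by omega) (by omega)
          have := hvi (i-1+3) (by omega) (by omega) (by omega) (by omega)
          have := hvn (i-1+4) (by omega) (by omega) (by omega)
          unfold Pat at w; grind
        · by_cases h6 : i + 2 < n
          · have w := wv (i-2) (by omega) (by omega)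
            rw [ev _ _ _ (by omega), ev _ _ _ (by omega), ev _ _ _ (by omega), eq _ _ _ (by omega),
              ev _ _ _ (by omega)] at w
            have := hun (i-2) (by omega) (by omega) (by omega)
            have := hui (i-2+1) (by omega) (by omega) (by omega) (by omega)
            have := hui (i-2+2) (by omega) (by omega) (by omega) (by omega)
            unfold Pat at w; grind
          · have w := wv (i-3) (by omega) (by omega)
            rw [ev _ _ _ (by omega), ev _ _ _ (by omega), ev _ _ _ (by omega), ev _ _ _ (by omega),
              eq _ _ _ (by omega)] at w
            have := hun (i-3+1) (by omega) (by omega) (by omega)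
            have := hui (i-3+2) (by omega) (by omega) (by omega) (by omega)
            have := hui (i-3+3) (by omega) (by omega) (by omega) (by omega)
            unfold Pat at w; grind

theorem P3 (H : FatH R) {p : ℤ → V} {n : ℤ} (hn : 5 ≤ n) (hp : IsP R p n) {u v : V} {i j : ℤ}
    (hi : 0 ≤ i) (hi' : i < n) (hj0 : 0 ≤ j) (hj : j < n)
    (hu : Like R p n u i) (hv : Like R p n v j) : R u v ↔ i - j ≤ 1 ∧ j - i ≤ 1 := by
  rcases le_total i j with h | h
  · rw [H.P3le hn hp hi hj h hu hv]; omega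
  · have := H.P3le hn hp hj0 hi' h hv hu
    have : R u v ↔ R v u := ⟨H.symm _ _, H.symm _ _⟩
    grind

/-- Cycle: every vertex seeing the cycle is like a cycle vertex. -/
theorem C1 (H : FatH R) {c : ℤ → V} {m : ℤ} (hm : 6 ≤ m) (hc : IsC R c m) {v : V} {k : ℤ}
    (hk : R v (c k)) : ∃ i, LikeC R c m v i := by
  obtain ⟨hper, hR⟩ := hc
  have W : ∀ s, Pat (R v (c s)) (R v (c (s+1))) (R v (c (s+2))) (R v (c (s+3))) (R v (c (s+4))) := by
    intro s
    apply H.pat <;> rw [hR _ _ (by omega) (by omega)] <;> omega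
  have key : ∃ i, R v (c (i-1)) ∧ R v (c i) ∧ R v (c (i+1)) := by
    have w := W (k-2)
    rw [show k - 2 + 1 = k - 1 by ring, show k - 2 + 2 = k by ring, show k - 2 + 3 = k + 1 by ring,
      show k - 2 + 4 = k + 2 by ring] at w
    by_cases h1 : R v (c (k-1))
    · by_cases h2 : R v (c (k+1))
      · exact ⟨k, h1, hk, h2⟩
      · refine ⟨k-1, ?_, h1, by simpa using hk⟩
        rw [show k - 1 - 1 = k - 2 by ring]
        unfold Pat at w; grind
    · refine ⟨k+1, by simpa using hk, ?_, ?_⟩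
      · unfold Pat at w; grind
      · rw [show k + 1 + 1 = k + 2 by ring]
        unfold Pat at w; grind
  obtain ⟨i, h1, h2, h3⟩ := key
  have hA : ∀ j, i - 2 ≤ j → j ≤ i + m - 3 → (R v (c j) ↔ i - j ≤ 1 ∧ j - i ≤ 1) := by
    intro j hj1 hj2
    constructor
    · intro h
      by_contra hcon
      have w := W (i-2)
      rw [show i - 2 + 1 = i - 1 by ring, show i - 2 + 2 = i by ring, 
        show i - 2 + 3 = i + 1 by ring, show i - 2 + 4 = i + 2 by ring] at w
      by_cases e1 : j = i - 2
      · subst e1; unfold Pat at w; grind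
      by_cases e2 : j = i + 2
      · subst e2; unfold Pat at w; grind
      refine H.claw v (c (i-1)) (c (i+1)) (c j) h1 h3 h ?_ ?_ ?_ <;>
        rw [hR _ _ (by omega) (by omega)] <;> omega
    · intro h
      have : j = i - 1 ∨ j = i ∨ j = i + 1 := by omega
      rcases this with rfl | rfl | rfl <;> assumption
  refine ⟨i, fun j hj1 hj2 => ?_⟩
  by_cases e1 : j < i - 2
  · rw [← hper j, hA _ (by omega) (by omega)]; omega
  · by_cases e2 : j ≤ i + m - 3
    · exact hA j (by omega) e2
    · have := hper (j - m)
      rw [sub_add_cancel] at this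
      rw [this, hA _ (by omega) (by omega)]; omega

theorem C2 (H : FatH R) {c : ℤ → V} {m : ℤ} (hm : 6 ≤ m) (hc : IsC R c m) (v : V) :
    ∃ i, 0 ≤ i ∧ i < m ∧ LikeC R c m v i := by
  have h : v ∈ {v | ∃ k, R v (c k)} := by
    apply H.conn
    · exact ⟨c 0, 0, H.refl _⟩
    · rintro u w ⟨k, hk⟩ huw
      obtain ⟨i, hi⟩ := H.C1 hm hc hk
      by_contra hcon
      have hn : ∀ k, ¬ R w (c k) := fun k hk => hcon ⟨k, hk⟩
      refine H.claw u w (c (i-1)) (c (i+1)) huw ?_ ?_ (hn _) (hn _) ?_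
      · rw [hi _ (by omega) (by omega)]; omega
      · rw [hi _ (by omega) (by omega)]; omega
      · rw [hc.2 _ _ (by omega) (by omega)]; omega
  obtain ⟨k, hk⟩ := h
  have hper : Function.Periodic c m := hc.1
  obtain ⟨i, hi⟩ := H.C1 hm hc hk
  refine ⟨i % m, Int.emod_nonneg _ (by omega), Int.emod_lt_of_pos _ (by omega), ?_⟩
  intro j h1 h2
  have e : c j = c (j + (i / m) * m) := by
    have := (hper.int_mul (i / m)) j
    simpa using this.symm
  have e2 := Int.emod_add_mul_ediv i m
  rw [mul_comm] at e2
  rw [e, hi _ (by omega) (by omega)]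
  omega

theorem C3 (H : FatH R) {c : ℤ → V} {m : ℤ} (hm : 6 ≤ m) (hc : IsC R c m) {u v : V} {i j : ℤ}
    (h1 : i ≤ j) (h2 : j ≤ i + m - 2) (hu : LikeC R c m u i) (hv : LikeC R c m v j) :
    R u v ↔ j - i ≤ 1 := by
  have hp : IsP R (fun k => c (i + k)) (m-1) := by
    intro a b _ _ _ _
    simp only
    rw [hc.2 _ _ (by omega) (by omega)]; omega
  have := H.P3le (by omega) hp (u := u) (v := v) (i := 0) (j := j - i) le_rfl (by omega) (by omega)
    (fun k _ _ => by rw [hu _ (by omega) (by omega)]; omega)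
    (fun k _ _ => by rw [hv _ (by omega) (by omega)]; omega)
  rw [this]; omega

theorem C4 (H : FatH R) {c : ℤ → V} {m : ℤ} (hm : 6 ≤ m) (hc : IsC R c m) {u v : V} {i j : ℤ}
    (h1 : i ≤ j) (h0 : 0 ≤ i) (h2 : j < m) (hu : LikeC R c m u i) (hv : LikeC R c m v j) :
    R u v ↔ j - i ≤ 1 ∨ j - i = m - 1 := by
  by_cases h : j - i = m - 1
  · have hu' : LikeC R c m u (i + m) := by
      intro k _ _
      have := hc.1 (k - m)
      rw [sub_add_cancel] at this
      rw [this, hu _ (by omega) (by omega)]; omega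
    have := H.C3 hm hc (by omega) (by omega) hv hu'
    have s : R u v ↔ R v u := ⟨H.symm _ _, H.symm _ _⟩
    rw [s, this]; omega
  · rw [H.C3 hm hc h1 (by omega) hu hv]; omega

theorem P1 (H : FatH R) {p : ℤ → V} {n : ℤ} (hn : 5 ≤ n) (hp : IsP R p n) {v : V} {k : ℤ}
    (hk0 : 0 ≤ k) (hkn : k < n) (hk : R v (p k)) :
    (∃ i, 0 ≤ i ∧ i < n ∧ Like R p n v i) ∨ 
    (∀ j, 0 ≤ j → j < n → (R v (p j) ↔ j = 0)) ∨ 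
    (∀ j, 0 ≤ j → j < n → (R v (p j) ↔ j = n - 1)) ∨
    (∀ j, 0 ≤ j → j < n → (R v (p j) ↔ j = 0 ∨ j = n - 1)) := by
  have hpi : ∀ k l, 0 ≤ k → k < n → 0 ≤ l → l < n → k - l ≤ 1 → l - k ≤ 1 → R (p k) (p l) := 
    fun k l h1 h2 h3 h4 h5 h6 => (hp k l h1 h2 h3 h4).2 ⟨h5, h6⟩
  have hpn : ∀ k l, 0 ≤ k → k < n → 0 ≤ l → l < n → (k - l ≥ 2 ∨ l - k ≥ 2) → ¬ R (p k) (p l) := 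
    fun k l h1 h2 h3 h4 h5 h6 => by have := (hp k l h1 h2 h3 h4).1 h6; omega
  have S := H.symm
  have Sn : ∀ x y, ¬ R x y → ¬ R y x := fun x y h h' => h (S _ _ h')
  have W := fun s h0 h1 => H.win hp v s h0 h1
  by_cases key : ∃ i, 1 ≤ i ∧ i + 1 < n ∧ R v (p (i-1)) ∧ R v (p i) ∧ R v (p (i+1))
  · left
    obtain ⟨i, h4, h5, h1, h2, h3⟩ := key
    refine ⟨i, by omega, by omega, fun j hj1 hj2 => ⟨fun h => ?_, fun h => ?_⟩⟩
    · by_contra hcon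
      by_cases e1 : j = i - 2
      · subst e1
        by_cases e : i + 2 < n
        · have w := W (i-2) (by omega) (by omega)
          rw [show i - 2 + 1 = i - 1 by ring, show i - 2 + 2 = i by ring, 
            show i - 2 + 3 = i + 1 by ring, show i - 2 + 4 = i + 2 by ring] at w
          unfold Pat at w; grind
        · have w := W (i-3) (by omega) (by omega)
          rw [show i - 3 + 1 = i - 2 by ring, show i - 3 + 2 = i - 1 by ring, 
            show i - 3 + 3 = i by ring, show i - 3 + 4 = i + 1 by ring] at w
          unfold Pat at w; grind
      by_cases e2 : j = i + 2
      · subst e2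
        by_cases e : 2 ≤ i
        · have w := W (i-2) (by omega) (by omega)
          rw [show i - 2 + 1 = i - 1 by ring, show i - 2 + 2 = i by ring, 
            show i - 2 + 3 = i + 1 by ring, show i - 2 + 4 = i + 2 by ring] at w
          unfold Pat at w; grind
        · have w := W (i-1) (by omega) (by omega)
          rw [show i - 1 + 1 = i by ring, show i - 1 + 2 = i + 1 by ring, 
            show i - 1 + 3 = i + 2 by ring, show i - 1 + 4 = i + 3 by ring] at w
          unfold Pat at w; grind
      exact H.claw v (p (i-1)) (p (i+1)) (p j) h1 h3 h
        (hpn _ _ (by omega) (by omega) (by omega) (by omega) (by omega))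
        (hpn _ _ (by omega) (by omega) (by omega) (by omega) (by omega))
        (hpn _ _ (by omega) (by omega) (by omega) (by omega) (by omega))
    · have : j = i - 1 ∨ j = i ∨ j = i + 1 := by omega
      rcases this with rfl | rfl | rfl <;> assumption
  · have key' : ∀ i, 1 ≤ i → i + 1 < n → R v (p (i-1)) → R v (p i) → R v (p (i+1)) → False :=
      fun i a b c d e => key ⟨i, a, b, c, d, e⟩
    have mid : ∀ j, 2 ≤ j → j + 2 < n → ¬ R v (p j) := by
      intro j h1 h2 h
      have w := W (j-2) (by omega) (by omega)
      rw [show j - 2 + 1 = j - 1 by ring, show j - 2 + 2 = j by ring, show j - 2 + 3 = j + 1 by ring,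
        show j - 2 + 4 = j + 2 by ring] at w
      have k1 := key' (j-1) (by omega) (by omega)
      have k2 := key' j (by omega) (by omega)
      have k3 := key' (j+1) (by omega) (by omega)
      rw [show j - 1 - 1 = j - 2 by ring, show j - 1 + 1 = j by ring] at k1
      rw [show j + 1 - 1 = j by ring, show j + 1 + 1 = j + 2 by ring] at k3
      unfold Pat at w; grind
    have w0 := W 0 (by omega) (by omega)
    have wn := W (n-5) (by omega) (by omega)
    simp only [zero_add] at w0
    rw [show n - 5 + 1 = n - 4 by ring, show n - 5 + 2 = n - 3 by ring, 
      show n - 5 + 3 = n - 2 by ring, show n - 5 + 4 = n - 1 by ring] at wn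
    have m0 := mid 2 (by omega) (by omega)
    have m1 := mid (n-3) (by omega) (by omega)
    have all : ∀ j, 0 ≤ j → j < n → R v (p j) → j = 0 ∨ j = 1 ∨ j = n - 2 ∨ j = n - 1 := by
      intro j h1 h2 h
      by_contra hcon
      exact mid j (by omega) (by omega) h
    have q1 : R v (p 1) → R v (p 0) := by unfold Pat at w0; grind
    have q2 : R v (p (n-2)) → R v (p (n-1)) := by unfold Pat at wn; grind
    have b1 : R v (p 1) → R v (p (n-1)) → False := fun h1 h2 =>
      H.bull v (p 1) (p 0) (p (n-1)) (p 2) h1 (q1 h1) 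
        (hpi _ _ (by omega) (by omega) (by omega) (by omega) (by omega) (by omega)) h2
        (hpi _ _ (by omega) (by omega) (by omega) (by omega) (by omega) (by omega))
        (hpn _ _ (by omega) (by omega) (by omega) (by omega) (by omega))
        (hpn _ _ (by omega) (by omega) (by omega) (by omega) (by omega))
        (hpn _ _ (by omega) (by omega) (by omega) (by omega) (by omega))
        (Sn _ _ m0)
        (hpn _ _ (by omega) (by omega) (by omega) (by omega) (by omega))
    have b2 : R v (p (n-2)) → R v (p 0) → False := fun h1 h2 =>
      H.bull v (p (n-2)) (p (n-1)) (p 0) (p (n-3)) h1 (q2 h1) 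
        (hpi _ _ (by omega) (by omega) (by omega) (by omega) (by omega) (by omega)) h2
        (hpi _ _ (by omega) (by omega) (by omega) (by omega) (by omega) (by omega))
        (hpn _ _ (by omega) (by omega) (by omega) (by omega) (by omega))
        (hpn _ _ (by omega) (by omega) (by omega) (by omega) (by omega))
        (hpn _ _ (by omega) (by omega) (by omega) (by omega) (by omega))
        (Sn _ _ m1)
        (hpn _ _ (by omega) (by omega) (by omega) (by omega) (by omega))
    have k4 := all k hk0 hkn hk
    have red : ∀ (Q : ℤ → Prop), (R v (p 0) ↔ Q 0) → (R v (p 1) ↔ Q 1) → 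
        (R v (p (n-2)) ↔ Q (n-2)) → (R v (p (n-1)) ↔ Q (n-1)) → 
        (∀ j, 2 ≤ j → j + 2 < n → ¬ Q j) → ∀ j, 0 ≤ j → j < n → (R v (p j) ↔ Q j) := by
      intro Q a b c d e j h1 h2
      by_cases hj : 2 ≤ j ∧ j + 2 < n
      · exact iff_of_false (mid j hj.1 hj.2) (e j hj.1 hj.2)
      · have : j = 0 ∨ j = 1 ∨ j = n - 2 ∨ j = n - 1 := by omega
        rcases this with rfl | rfl | rfl | rfl <;> assumption
    have d : R v (p 0) ∨ R v (p (n-1)) := by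
      rcases k4 with rfl | rfl | rfl | rfl <;> tauto
    by_cases r1 : R v (p 1)
    · left
      refine ⟨0, le_rfl, by omega, red (fun j => 0 - j ≤ 1 ∧ j - 0 ≤ 1) ?_ ?_ ?_ ?_ ?_⟩
      · exact iff_of_true (q1 r1) (by omega)
      · exact iff_of_true r1 (by omega)
      · exact iff_of_false (fun h => b1 r1 (q2 h)) (by omega)
      · exact iff_of_false (fun h => b1 r1 h) (by omega)
      · intro j _ _; omega
    by_cases r2 : R v (p (n-2))
    · left
      refine ⟨n-1, by omega, by omega, red (fun j => n-1 - j ≤ 1 ∧ j - (n-1) ≤ 1) ?_ ?_ ?_ ?_ ?_⟩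
      · exact iff_of_false (fun h => b2 r2 h) (by omega)
      · exact iff_of_false r1 (by omega)
      · exact iff_of_true r2 (by omega)
      · exact iff_of_true (q2 r2) (by omega)
      · intro j _ _; omega
    right
    by_cases r0 : R v (p 0) <;> by_cases r3 : R v (p (n-1))
    · right; right
      refine red (fun j => j = 0 ∨ j = n-1) ?_ ?_ ?_ ?_ ?_
      · exact iff_of_true r0 (by omega)
      · exact iff_of_false r1 (by omega)
      · exact iff_of_false r2 (by omega)
      · exact iff_of_true r3 (by omega)
      · intro j _ _; omega
    · left
      refine red (fun j => j = 0) ?_ ?_ ?_ ?_ ?_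
      · exact iff_of_true r0 (by omega)
      · exact iff_of_false r1 (by omega)
      · exact iff_of_false r2 (by omega)
      · exact iff_of_false r3 (by omega)
      · intro j _ _; omega
    · right; left
      refine red (fun j => j = n-1) ?_ ?_ ?_ ?_ ?_
      · exact iff_of_false r0 (by omega)
      · exact iff_of_false r1 (by omega)
      · exact iff_of_false r2 (by omega)
      · exact iff_of_true r3 (by omega)
      · intro j _ _; omega
    · tauto

theorem rev {p : ℤ → V} {n : ℤ} (hp : IsP R p n) : IsP R (fun k => p (n - 1 - k)) n := by
  intro i j _ _ _ _
  simp only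
  rw [hp _ _ (by omega) (by omega) (by omega) (by omega)]; omega

theorem ext0 (H : FatH R) {p : ℤ → V} {n : ℤ} (hp : IsP R p n) {v : V}
    (hv : ∀ j, 0 ≤ j → j < n → (R v (p j) ↔ j = 0)) : ∃ q, IsP R q (n+1) := by
  refine ⟨fun k => if k = 0 then v else p (k - 1), ?_⟩
  intro i j _ _ _ _
  have s : ∀ x, R x v ↔ R v x := fun x => ⟨H.symm _ _, H.symm _ _⟩
  by_cases h1 : i = 0 <;> by_cases h2 : j = 0
  · simp [h1, h2, H.refl]
  · simp only [h1, h2, if_true, if_false]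
    rw [hv _ (by omega) (by omega)]; omega
  · simp only [h1, h2, if_true, if_false]
    rw [s, hv _ (by omega) (by omega)]; omega
  · simp only [h1, h2, if_false]
    rw [hp _ _ (by omega) (by omega) (by omega) (by omega)]; omega

theorem extn (H : FatH R) {p : ℤ → V} {n : ℤ} (hp : IsP R p n) {v : V}
    (hv : ∀ j, 0 ≤ j → j < n → (R v (p j) ↔ j = n - 1)) : ∃ q, IsP R q (n+1) := by
  apply H.ext0 (rev hp) (v := v)
  intro j _ _
  rw [hv _ (by omega) (by omega)]; omega

theorem mkC (H : FatH R) {p : ℤ → V} {n : ℤ} (hn : 5 ≤ n) (hp : IsP R p n) {v : V}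
    (hv : ∀ j, 0 ≤ j → j < n → (R v (p j) ↔ j = 0 ∨ j = n - 1)) : ∃ c, IsC R c (n+1) := by
  have s : ∀ x, R x v ↔ R v x := fun x => ⟨H.symm _ _, H.symm _ _⟩
  have hq : ∀ i j, 0 ≤ i → i ≤ n → 0 ≤ j → j ≤ n → 
      (R (if i = n then v else p i) (if j = n then v else p j) ↔ 
      (i - j ≤ 1 ∧ j - i ≤ 1) ∨ i - j = n ∨ j - i = n) := by
    intro i j _ _ _ _
    by_cases h1 : i = n <;> by_cases h2 : j = n
    · simp [h1, h2, H.refl]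
    · simp only [h1, h2, if_true, if_false]
      rw [hv _ (by omega) (by omega)]; omega
    · simp only [h1, h2, if_true, if_false]
      rw [s, hv _ (by omega) (by omega)]; omega
    · simp only [h1, h2, if_false]
      rw [hp _ _ (by omega) (by omega) (by omega) (by omega)]; omega
  refine ⟨fun k => if k % (n+1) = n then v else p (k % (n+1)), fun i => by simp, ?_⟩
  intro i j h1 h2
  simp only
  have a1 := Int.emod_nonneg i (show n+1 ≠ 0 by omega)
  have a2 := Int.emod_lt_of_pos i (show 0 < n+1 by omega)
  have b1 := Int.emod_nonneg j (show n+1 ≠ 0 by omega)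
  have b2 := Int.emod_lt_of_pos j (show 0 < n+1 by omega)
  rw [hq _ _ a1 (by omega) b1 (by omega)]
  have ea := Int.emod_add_mul_ediv i (n+1)
  have eb := Int.emod_add_mul_ediv j (n+1)
  generalize i % (n+1) = a at *
  generalize j % (n+1) = b at *
  obtain ⟨t, ht⟩ : ∃ t, i / (n+1) = j / (n+1) + t := ⟨i / (n+1) - j / (n+1), by ring⟩
  rw [ht, mul_add] at ea
  generalize (n+1) * (j / (n+1)) = z at *
  have t1 : t < 2 := by nlinarith
  have t2 : -2 < t := by nlinarith
  have : t = -1 ∨ t = 0 ∨ t = 1 := by omega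
  rcases this with rfl | rfl | rfl <;> simp at ea <;> omega

theorem main [Fintype V] (H : FatH R) {p : ℤ → V} (hp : IsP R p 5) :
    (∃ c m, 6 ≤ m ∧ IsC R c m) ∨ 
    (∃ p n, 5 ≤ n ∧ IsP R p n ∧ ∀ v, ∃ i, 0 ≤ i ∧ i < n ∧ Like R p n v i) := by
  obtain ⟨n, ⟨p, hp'⟩, hmax⟩ := Int.exists_greatest_of_bdd (P := fun n => ∃ p, IsP R p n)
    ⟨max 5 (Fintype.card V), by
      rintro z ⟨q, hq⟩
      by_contra hz
      push Not at hz
      rw [max_lt_iff] at hz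
      have hinj : Function.Injective (fun i : Fin z.toNat => q (i : ℕ)) := by
        intro a b hab
        have ha : ((a : ℕ) : ℤ) < z := by have := a.2; omega
        have hb : ((b : ℕ) : ℤ) < z := by have := b.2; omega
        simp only at hab
        have key : ∀ k : ℤ, 0 ≤ k → k < z → 
          (((a : ℕ) : ℤ) - k ≤ 1 ∧ k - (a : ℕ) ≤ 1 ↔ ((b : ℕ) : ℤ) - k ≤ 1 ∧ k - (b : ℕ) ≤ 1) := by
          intro k h0 h1
          rw [← hq _ _ (by omega) ha h0 h1, ← hq _ _ (by omega) hb h0 h1, hab]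
        ext
        by_contra hne
        have k1 := key a (by omega) ha
        by_cases h : (a : ℕ) < b
        · by_cases h0 : (a : ℕ) = 0
          · have := key 2 (by omega) (by omega); omega
          · have := key (a - 1) (by omega) (by omega); omega
        · by_cases h0 : (b : ℕ) = 0
          · have := key 2 (by omega) (by omega); omega
          · have := key (b - 1) (by omega) (by omega); omega
      have := Fintype.card_le_of_injective _ hinj
      simp at this
      omega⟩ ⟨5, p, hp⟩
  have hn : 5 ≤ n := hmax 5 ⟨_, hp⟩
  have hno : ∀ q, ¬ IsP R q (n+1) := fun q hq => by have := hmax _ ⟨q, hq⟩; omega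
  by_cases hcyc : ∃ c m, 6 ≤ m ∧ IsC R c m
  · exact Or.inl hcyc
  right
  refine ⟨p, n, hn, hp', ?_⟩
  have hL : ∀ v, (∃ k, 0 ≤ k ∧ k < n ∧ R v (p k)) → ∃ i, 0 ≤ i ∧ i < n ∧ Like R p n v i := by
    rintro v ⟨k, h0, h1, h⟩
    rcases H.P1 hn hp' h0 h1 h with h | h | h | h
    · exact h
    · obtain ⟨q, hq⟩ := H.ext0 hp' h
      exact absurd hq (hno q)
    · obtain ⟨q, hq⟩ := H.extn hp' h
      exact absurd hq (hno q)
    · obtain ⟨c, hc⟩ := H.mkC hn hp' h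
      exact absurd ⟨c, n+1, by omega, hc⟩ hcyc
  intro v
  apply hL
  change v ∈ {v | ∃ k, 0 ≤ k ∧ k < n ∧ R v (p k)}
  apply H.conn
  · exact ⟨p 0, 0, le_rfl, by omega, H.refl _⟩
  · intro u w hu huw
    obtain ⟨i, h0, h1, hi⟩ := hL u hu
    by_contra hcon
    have hw : ∀ k, 0 ≤ k → k < n → ¬ R w (p k) := fun k a b c => hcon ⟨k, a, b, c⟩
    have hS := H.symm _ _ huw
    have hupd : ∀ j, 0 ≤ j → j < n → (R w (Function.update p i u j) ↔ j = i) := by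
      intro j a b
      by_cases hj : j = i
      · subst hj; simp [hS]
      · simp [Function.update_of_ne hj, hj, hw j a b]
    by_cases e0 : i = 0
    · subst e0
      obtain ⟨q, hq⟩ := H.ext0 (H.upd hp' hi) hupd
      exact hno q hq
    by_cases e1 : i = n - 1
    · subst e1
      obtain ⟨q, hq⟩ := H.extn (H.upd hp' hi) hupd
      exact hno q hq
    refine H.claw u w (p (i-1)) (p (i+1)) huw ?_ ?_ (hw _ (by omega) (by omega))
      (hw _ (by omega) (by omega)) ?_
    · rw [hi _ (by omega) (by omega)]; omega
    · rw [hi _ (by omega) (by omega)]; omega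
    · rw [hp' _ _ (by omega) (by omega) (by omega) (by omega)]; omega

end FatH

theorem fatH_of {V : Type*} (G : SimpleGraph V) (hconn : G.Connected)
    (hK13 : ¬ ContainsInduced G K13) (hB11 : ¬ ContainsInduced G (Bgraph 1)) :
    FatH (fun u v => u = v ∨ G.Adj u v) where
  refl v := Or.inl rfl
  symm u v h := h.imp Eq.symm (fun h => h.symm)
  claw v x y z h1 h2 h3 h4 h5 h6 := by
    push Not at h4 h5 h6
    have a1 : G.Adj v x := by grind [SimpleGraph.adj_comm]
    have a2 : G.Adj v y := by grind [SimpleGraph.adj_comm]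
    have a3 : G.Adj v z := by grind [SimpleGraph.adj_comm]
    apply hK13
    refine ⟨⟨⟨![v, x, y, z], ?_⟩, ?_⟩⟩
    · intro i j
      have := a1.ne
      have := a2.ne
      have := a3.ne
      fin_cases i <;> fin_cases j <;> simp <;> grind
    · intro i j
      change G.Adj (![v, x, y, z] i) (![v, x, y, z] j) ↔ _
      fin_cases i <;> fin_cases j <;> 
        simp [K13, graphOfList, SimpleGraph.fromRel_adj, a1, a2, a3, a1.symm, a2.symm, a3.symm,
          h4, h5, h6, G.adj_comm y x, G.adj_comm z x, G.adj_comm z y]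
  bull a b c d e h1 h2 h3 h4 h5 n1 n2 n3 n4 n5 := by
    push Not at n1 n2 n3 n4 n5
    have a1 : G.Adj a b := by grind [SimpleGraph.adj_comm]
    have a2 : G.Adj a c := by grind [SimpleGraph.adj_comm]
    have a3 : G.Adj b c := by grind [SimpleGraph.adj_comm]
    have a4 : G.Adj a d := by grind [SimpleGraph.adj_comm]
    have a5 : G.Adj b e := by grind [SimpleGraph.adj_comm]
    apply hB11
    refine ⟨⟨⟨![a, b, c, d, e], ?_⟩, ?_⟩⟩
    · intro i j
      have := a1.ne
      have := a2.ne
      have := a3.ne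
      have := a4.ne
      have := a5.ne
      fin_cases i <;> fin_cases j <;> simp <;> grind
    · intro i j
      change G.Adj (![a, b, c, d, e] i) (![a, b, c, d, e] j) ↔ _
      fin_cases i <;> fin_cases j <;> 
        simp [Bgraph, SimpleGraph.fromRel_adj, a1, a2, a3, a4, a5, a1.symm, a2.symm, a3.symm,
          a4.symm, a5.symm, n1, n2, n3, n4, n5, G.adj_comm b d, G.adj_comm c d, G.adj_comm e d,
          G.adj_comm a e, G.adj_comm c e]
  conn S hS hcl v := by
    obtain ⟨s, hs⟩ := hS
    obtain ⟨w⟩ := hconn.preconnected s v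
    induction w with
    | nil => exact hs
    | cons h _ ih => exact ih (hcl _ _ hs (Or.inr h))

theorem stmt1 {V : Type*} [Fintype V] (G : SimpleGraph V) (hconn : G.Connected)
    (hK13 : ¬ ContainsInduced G K13) (hB11 : ¬ ContainsInduced G (Bgraph 1)) :
    ContainsInduced G (SimpleGraph.pathGraph 5) ↔ MemFatFamily G 5 := by
  have H := fatH_of G hconn hK13 hB11
  constructor
  · rintro ⟨f⟩
    have hp : FatH.IsP (fun u v => u = v ∨ G.Adj u v) 
        (fun k => if h : k.toNat < 5 then f ⟨k.toNat, h⟩ else f 0) 5 := by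
      intro i j _ _ _ _
      have hi : i.toNat < 5 := by omega
      have hj : j.toNat < 5 := by omega
      simp only [hi, hj, dif_pos, f.injective.eq_iff, f.map_adj_iff, SimpleGraph.pathGraph_adj,
        Fin.mk.injEq]
      omega
    rcases H.main hp with ⟨c, m, hm, hc⟩ | ⟨p, n, hn, hp, hall⟩
    · obtain ⟨l, rfl⟩ : ∃ l : ℕ, m = l + 1 := ⟨(m-1).toNat, by omega⟩
      refine ⟨l, by omega, Or.inr ⟨by omega, 
        fun i => {v | FatH.LikeC (fun u v => u = v ∨ G.Adj u v) c (l+1) v (i : ℕ)}, ⟨?_, ?_, ?_⟩, ?_⟩⟩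
      · intro i
        exact ⟨c (i : ℕ), fun j h1 h2 => hc.2 _ _ h1 h2⟩
      · intro i j hij
        have key : ∀ a b : Fin (l+1), (a : ℕ) < b → ∀ v, FatH.LikeC (fun u v => u = v ∨ G.Adj u v) c (l+1) v (a : ℕ) →
            FatH.LikeC (fun u v => u = v ∨ G.Adj u v) c (l+1) v (b : ℕ) → False := by
          intro a b hab v ha hb
          have hb2 := b.2
          by_cases h : (b : ℕ) - (a : ℕ) = l
          · have x1 := ha (a + 1) (by omega) (by omega)
            have x2 := hb (a + 1) (by omega) (by omega)
            rw [x1] at x2; omega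
          · have x1 := ha (b + 1) 
            have x2 := hb (b + 1) (by omega) (by omega)
            by_cases h' : (b : ℕ) - (a : ℕ) = l - 1
            · have x1 := ha (a + 1) (by omega) (by omega)
              have x2 := hb (a + 1) (by omega) (by omega)
              rw [x1] at x2; omega
            · have x1 := x1 (by omega) (by omega)
              rw [x1] at x2; omega
        rw [Set.disjoint_left]
        intro v hv hv'
        have : (i : ℕ) ≠ j := fun h => hij (Fin.ext h)
        rcases lt_or_gt_of_ne this with h | h
        · exact key _ _ h v hv hv'
        · exact key _ _ h v hv' hv
      · have key : ∀ a b : Fin (l+1), (a : ℕ) ≤ b → ∀ u v, FatH.LikeC (fun u v => u = v ∨ G.Adj u v) c (l+1) u (a : ℕ) →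
            FatH.LikeC (fun u v => u = v ∨ G.Adj u v) c (l+1) v (b : ℕ) → u ≠ v → 
            (G.Adj u v ↔ a = b ∨ ((a : ℕ) + 1) % (l + 1) = (b : ℕ) 
              ∨ ((b : ℕ) + 1) % (l + 1) = (a : ℕ)) := by
          intro a b hab u v hu hv huv
          have hb2 := b.2
          have := H.C4 hm hc (by omega) (by omega) (by omega) hu hv
          simp only [huv, false_or] at this
          rw [this, Fin.ext_iff]
          by_cases hb : (b : ℕ) = l
          · rw [hb, Nat.mod_self]
            by_cases ha : (a : ℕ) = l
            · omega
            · rw [Nat.mod_eq_of_lt (by omega)]; omega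
          · rw [Nat.mod_eq_of_lt (by omega), Nat.mod_eq_of_lt (by omega)]; omega
        intro i j u v hu hv huv
        rcases le_total (i : ℕ) j with h | h
        · exact key i j h u v hu hv huv
        · rw [G.adj_comm, key j i h v u hv hu huv.symm]
          constructor <;> (rintro (h | h | h) <;> simp [h])
      · intro v
        obtain ⟨i, h0, h1, hi⟩ := H.C2 hm hc v
        refine ⟨⟨i.toNat, by omega⟩, ?_⟩
        simp only [Set.mem_setOf_eq]
        rwa [Int.toNat_of_nonneg h0]
    · obtain ⟨l, rfl⟩ : ∃ l : ℕ, n = l := ⟨n.toNat, by omega⟩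
      refine ⟨l, by omega, Or.inl ⟨by omega, 
        fun i => {v | FatH.Like (fun u v => u = v ∨ G.Adj u v) p l v (i : ℕ)}, ⟨?_, ?_, ?_⟩, ?_⟩⟩
      · intro i
        exact ⟨p (i : ℕ), fun j h1 h2 => hp _ _ (by omega) (by have := i.2; omega) h1 h2⟩
      · intro i j hij
        have key : ∀ a b : Fin l, (a : ℕ) < b → ∀ v, FatH.Like (fun u v => u = v ∨ G.Adj u v) p l v (a : ℕ) →
            FatH.Like (fun u v => u = v ∨ G.Adj u v) p l v (b : ℕ) → False := by
          intro a b hab v ha hb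
          have hb2 := b.2
          by_cases h : (a : ℕ) = 0
          · have x1 := ha 0 (by omega) (by omega)
            have x2 := hb 0 (by omega) (by omega)
            have y1 := ha 2 (by omega) (by omega)
            have y2 := hb 2 (by omega) (by omega)
            rw [x1] at x2; rw [y1] at y2; omega
          · have x1 := ha (a - 1) (by omega) (by omega)
            have x2 := hb (a - 1) (by omega) (by omega)
            rw [x1] at x2; omega
        rw [Set.disjoint_left]
        intro v hv hv'
        have : (i : ℕ) ≠ j := fun h => hij (Fin.ext h)
        rcases lt_or_gt_of_ne this with h | h
        · exact key _ _ h v hv hv'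
        · exact key _ _ h v hv' hv
      · intro i j u v hu hv huv
        have hi := i.2
        have hj := j.2
        have := H.P3 hn hp (by omega) (by omega) (by omega) (by omega) hu hv
        simp only [huv, false_or] at this
        rw [this, Fin.ext_iff]; omega
      · intro v
        obtain ⟨i, h0, h1, hi⟩ := hall v
        refine ⟨⟨i.toNat, by omega⟩, ?_⟩
        simp only [Set.mem_setOf_eq]
        rwa [Int.toNat_of_nonneg h0]
  · have fin : ∀ x : Fin 5 → V, Function.Injective x → 
        (∀ i j, i ≠ j → (G.Adj (x i) (x j) ↔ (i : ℕ) + 1 = j ∨ (j : ℕ) + 1 = i)) → 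
        ContainsInduced G (SimpleGraph.pathGraph 5) := by
      intro x hx h
      refine ⟨⟨⟨x, hx⟩, ?_⟩⟩
      intro i j
      by_cases hij : i = j
      · subst hij; simp
      · simp [SimpleGraph.pathGraph_adj, h i j hij]
    have inj : ∀ (l : ℕ) (L : Fin l → Set V) (hl : 5 ≤ l) (y : Fin l → V), 
        (∀ i, y i ∈ L i) → (∀ i j, i ≠ j → Disjoint (L i) (L j)) →
        Function.Injective (fun i => y (Fin.castLE hl i)) := by
      intro l L hl y hy hd i j hij
      by_contra hne
      have := hd (Fin.castLE hl i) (Fin.castLE hl j) (by simpa using hne)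
      rw [Set.disjoint_left] at this
      apply this (hy _)
      simp only at hij
      rw [hij]; exact hy _
    rintro ⟨l, hl, ⟨_, L, ⟨hne, hd, hadj⟩, -⟩ | ⟨_, L, ⟨hne, hd, hadj⟩, -⟩⟩
    · choose y hy using hne
      have hI := inj l L hl y hy hd
      refine fin _ hI ?_
      intro i j hij
      rw [hadj _ _ _ _ (hy _) (hy _) (hI.ne hij)]
      simp [hij]
    · choose y hy using hne
      have hI := inj (l+1) L (by omega) y hy hd
      refine fin _ hI ?_
      intro i j hij
      have := i.2
      have := j.2
      rw [hadj _ _ _ _ (hy _) (hy _) (hI.ne hij)]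
      simp only [Fin.val_castLE]
      rw [Nat.mod_eq_of_lt (by omega), Nat.mod_eq_of_lt (by omega)]
      simp [hij]
end

section
/- Let G be a connected graph that is {K_{1,3}, B_{1,2}}-free. Then G contains P_6 as an induced subgraph if and only if G belongs to P(6). -/
open SimpleGraph

namespace FatAux

theorem claw_of {V : Type*} {G : SimpleGraph V} (h : ¬ ContainsInduced G K13)
    (a b c d : V) (hab : G.Adj a b) (hac : G.Adj a c) (had : G.Adj a d)
    (bc : b ≠ c) (bd : b ≠ d) (cd : c ≠ d)
    (nbc : ¬ G.Adj b c) (nbd : ¬ G.Adj b d) (ncd : ¬ G.Adj c d) : False := by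
  apply h
  have hba := hab.symm
  have hca := hac.symm
  have hda := had.symm
  have ncb : ¬ G.Adj c b := fun h => nbc h.symm
  have ndb : ¬ G.Adj d b := fun h => nbd h.symm
  have ndc : ¬ G.Adj d c := fun h => ncd h.symm
  have e1 := hab.ne
  have e2 := hac.ne
  have e3 := had.ne
  refine ⟨⟨⟨![a, b, c, d], ?_⟩, ?_⟩⟩
  · intro i j hij
    fin_cases i <;> fin_cases j <;> simp_all
  · intro i j
    change G.Adj ((![a, b, c, d] : Fin 4 → V) i) ((![a, b, c, d] : Fin 4 → V) j) ↔ _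
    fin_cases i <;> fin_cases j <;> simp [K13, graphOfList] <;> assumption

theorem bull_inj : ∀ i j : Fin 6, (∀ k, (Bgraph 2).Adj i k ↔ (Bgraph 2).Adj j k) → i = j := by
  intro i j h
  have h0 := h 0
  have h1 := h 1
  have h2 := h 2
  have h3 := h 3
  have h4 := h 4
  have h5 := h 5
  clear h
  fin_cases i <;> fin_cases j <;> simp [Bgraph] at h0 h1 h2 h3 h4 h5 ⊢

theorem bull_of {V : Type*} {G : SimpleGraph V} (h : ¬ ContainsInduced G (Bgraph 2))
    (a b c x y z : V) (hab : G.Adj a b) (hac : G.Adj a c) (hbc : G.Adj b c)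
    (hax : G.Adj a x) (hby : G.Adj b y) (hyz : G.Adj y z)
    (nay : ¬ G.Adj a y) (naz : ¬ G.Adj a z) (nbx : ¬ G.Adj b x) (nbz : ¬ G.Adj b z)
    (ncx : ¬ G.Adj c x) (ncy : ¬ G.Adj c y) (ncz : ¬ G.Adj c z)
    (nxy : ¬ G.Adj x y) (nxz : ¬ G.Adj x z) : False := by
  apply h
  have key : ∀ i j : Fin 6, G.Adj ((![a, b, c, x, y, z] : Fin 6 → V) i)
      ((![a, b, c, x, y, z] : Fin 6 → V) j) ↔ (Bgraph 2).Adj i j := by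
    intro i j
    have := G.adj_comm
    fin_cases i <;> fin_cases j <;> simp [Bgraph] <;> first | assumption | (rw [G.adj_comm]; assumption)
  refine ⟨⟨⟨![a, b, c, x, y, z], ?_⟩, ?_⟩⟩
  · intro i j hij
    apply bull_inj
    intro k
    rw [← key, ← key, hij]
  · intro i j
    exact key i j

/-- induced path on `p 0, …, p (l-1)` -/
def IP {V : Type*} (G : SimpleGraph V) (p : ℕ → V) (l : ℕ) : Prop :=
  ∀ i, i < l → ∀ j, j < l → (p i = p j → i = j) ∧ (G.Adj (p i) (p j) ↔ i + 1 = j ∨ j + 1 = i)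

def Pat (N : ℕ → Prop) (l : ℕ) : Prop :=
  (∀ k, k < l → ¬ N k) ∨ (∀ k, k < l → (N k ↔ k = 0)) ∨ (∀ k, k < l → (N k ↔ k + 1 = l)) ∨
  (∃ i, i < l ∧ ∀ k, k < l → (N k ↔ k ≤ i + 1 ∧ i ≤ k + 1)) ∨
  (∀ k, k < l → (N k ↔ k = 0 ∨ k + 1 = l))

theorem pat6_aux (b0 b1 b2 b3 b4 b5 : Prop)
    (c1 : b1 → b0 ∨ b2) (c2 : b2 → b1 ∨ b3) (c3 : b3 → b2 ∨ b4) (c4 : b4 → b3 ∨ b5)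
    (t1 : b0 → b3 → b5 → False) (t2 : b0 → b2 → b4 → False) (t3 : b1 → b3 → b5 → False)
    (t4 : b0 → b2 → b5 → False)
    (d1 : b1 → b2 → ¬ b0 → ¬ b3 → ¬ b4 → False)
    (d2 : b2 → b3 → ¬ b1 → ¬ b4 → ¬ b5 → False)
    (d3 : b3 → b4 → ¬ b1 → ¬ b2 → ¬ b5 → False)
    (d4 : b0 → b1 → b5 → ¬ b2 → ¬ b3 → False)
    (d5 : b2 → b3 → b5 → ¬ b0 → ¬ b1 → False)
    (d6 : b0 → b1 → b4 → ¬ b2 → ¬ b5 → False)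
    (d7 : b1 → b2 → b4 → ¬ b0 → ¬ b5 → False)
    (d8 : b0 → b4 → b5 → ¬ b1 → ¬ b3 → False)
    (d9 : b1 → b4 → b5 → ¬ b0 → ¬ b3 → False)
    (d10 : b0 → b2 → b3 → ¬ b4 → ¬ b5 → False) :
    (¬b0 ∧ ¬b1 ∧ ¬b2 ∧ ¬b3 ∧ ¬b4 ∧ ¬b5) ∨ (b0 ∧ ¬b1 ∧ ¬b2 ∧ ¬b3 ∧ ¬b4 ∧ ¬b5) ∨
    (¬b0 ∧ ¬b1 ∧ ¬b2 ∧ ¬b3 ∧ ¬b4 ∧ b5) ∨ (b0 ∧ b1 ∧ ¬b2 ∧ ¬b3 ∧ ¬b4 ∧ ¬b5) ∨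
    (b0 ∧ b1 ∧ b2 ∧ ¬b3 ∧ ¬b4 ∧ ¬b5) ∨ (¬b0 ∧ b1 ∧ b2 ∧ b3 ∧ ¬b4 ∧ ¬b5) ∨
    (¬b0 ∧ ¬b1 ∧ b2 ∧ b3 ∧ b4 ∧ ¬b5) ∨ (¬b0 ∧ ¬b1 ∧ ¬b2 ∧ b3 ∧ b4 ∧ b5) ∨
    (¬b0 ∧ ¬b1 ∧ ¬b2 ∧ ¬b3 ∧ b4 ∧ b5) ∨ (b0 ∧ ¬b1 ∧ ¬b2 ∧ ¬b3 ∧ ¬b4 ∧ b5) := by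
  by_cases b0 <;> by_cases b1 <;> by_cases b2 <;> by_cases b3 <;> by_cases b4 <;> by_cases b5 <;>
    simp_all

theorem all6 (Q : ℕ → Prop) (h0 : Q 0) (h1 : Q 1) (h2 : Q 2) (h3 : Q 3) (h4 : Q 4) (h5 : Q 5) :
    ∀ k, k < 6 → Q k := by
  intro k hk
  interval_cases k <;> assumption

theorem pat6 {V : Type*} {G : SimpleGraph V} (hK : ¬ ContainsInduced G K13)
    (hB : ¬ ContainsInduced G (Bgraph 2)) (p : ℕ → V) (hp : IP G p 6) (v : V)
    (hv : ∀ k, k < 6 → v ≠ p k) : Pat (fun k => G.Adj v (p k)) 6 := by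
  have E : ∀ i, i < 6 → ∀ j, j < 6 → (i + 1 = j ∨ j + 1 = i) → G.Adj (p i) (p j) :=
    fun i hi j hj h => ((hp i hi j hj).2).2 h
  have N : ∀ i, i < 6 → ∀ j, j < 6 → ¬ (i + 1 = j ∨ j + 1 = i) → ¬ G.Adj (p i) (p j) :=
    fun i hi j hj h h' => h (((hp i hi j hj).2).1 h')
  have D : ∀ i, i < 6 → ∀ j, j < 6 → i ≠ j → p i ≠ p j :=
    fun i hi j hj h h' => h ((hp i hi j hj).1 h')
  have C : ∀ i, 0 < i → i < 5 → G.Adj v (p i) → G.Adj v (p (i-1)) ∨ G.Adj v (p (i+1)) := by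
    intro i h0 h5 h
    by_contra hc
    rw [not_or] at hc
    exact claw_of hK (p i) (p (i-1)) (p (i+1)) v (E _ (by omega) _ (by omega) (by omega))
      (E _ (by omega) _ (by omega) (by omega)) h.symm (D _ (by omega) _ (by omega) (by omega))
      (hv _ (by omega)).symm (hv _ (by omega)).symm (N _ (by omega) _ (by omega) (by omega))
      (fun h => hc.1 h.symm) (fun h => hc.2 h.symm)
  have T : ∀ i j k, i + 1 < j → j + 1 < k → k < 6 → G.Adj v (p i) → G.Adj v (p j) →
      G.Adj v (p k) → False := by
    intro i j k hij hjk hk h1 h2 h3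
    exact claw_of hK v (p i) (p j) (p k) h1 h2 h3
      (D _ (by omega) _ (by omega) (by omega)) (D _ (by omega) _ (by omega) (by omega))
      (D _ (by omega) _ (by omega) (by omega))
      (N _ (by omega) _ (by omega) (by omega)) (N _ (by omega) _ (by omega) (by omega))
      (N _ (by omega) _ (by omega) (by omega))
  have key := pat6_aux (G.Adj v (p 0)) (G.Adj v (p 1)) (G.Adj v (p 2)) (G.Adj v (p 3))
    (G.Adj v (p 4)) (G.Adj v (p 5)) (C 1 (by omega) (by omega)) (C 2 (by omega) (by omega))
    (C 3 (by omega) (by omega)) (C 4 (by omega) (by omega))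
    (T 0 3 5 (by omega) (by omega) (by omega)) (T 0 2 4 (by omega) (by omega) (by omega))
    (T 1 3 5 (by omega) (by omega) (by omega)) (T 0 2 5 (by omega) (by omega) (by omega))
    (fun h1 h2 n0 n3 n4 => bull_of hB (p 1) (p 2) v (p 0) (p 3) (p 4)
      (E _ (by omega) _ (by omega) (by omega)) h1.symm h2.symm
      (E _ (by omega) _ (by omega) (by omega)) (E _ (by omega) _ (by omega) (by omega))
      (E _ (by omega) _ (by omega) (by omega)) (N _ (by omega) _ (by omega) (by omega))
      (N _ (by omega) _ (by omega) (by omega)) (N _ (by omega) _ (by omega) (by omega))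
      (N _ (by omega) _ (by omega) (by omega)) n0 n3 n4
      (N _ (by omega) _ (by omega) (by omega)) (N _ (by omega) _ (by omega) (by omega)))
    (fun h1 h2 n0 n3 n4 => bull_of hB (p 2) (p 3) v (p 1) (p 4) (p 5)
      (E _ (by omega) _ (by omega) (by omega)) h1.symm h2.symm
      (E _ (by omega) _ (by omega) (by omega)) (E _ (by omega) _ (by omega) (by omega))
      (E _ (by omega) _ (by omega) (by omega)) (N _ (by omega) _ (by omega) (by omega))
      (N _ (by omega) _ (by omega) (by omega)) (N _ (by omega) _ (by omega) (by omega))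
      (N _ (by omega) _ (by omega) (by omega)) n0 n3 n4
      (N _ (by omega) _ (by omega) (by omega)) (N _ (by omega) _ (by omega) (by omega)))
    (fun h3 h4 n1 n2 n5 => bull_of hB (p 4) (p 3) v (p 5) (p 2) (p 1)
      (E _ (by omega) _ (by omega) (by omega)) h4.symm h3.symm
      (E _ (by omega) _ (by omega) (by omega)) (E _ (by omega) _ (by omega) (by omega))
      (E _ (by omega) _ (by omega) (by omega)) (N _ (by omega) _ (by omega) (by omega))
      (N _ (by omega) _ (by omega) (by omega)) (N _ (by omega) _ (by omega) (by omega))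
      (N _ (by omega) _ (by omega) (by omega)) n5 n2 n1
      (N _ (by omega) _ (by omega) (by omega)) (N _ (by omega) _ (by omega) (by omega)))
    (fun h0 h1 h5 n2 n3 => bull_of hB v (p 1) (p 0) (p 5) (p 2) (p 3)
      h1 h0 (E _ (by omega) _ (by omega) (by omega)) h5
      (E _ (by omega) _ (by omega) (by omega)) (E _ (by omega) _ (by omega) (by omega))
      n2 n3 (N _ (by omega) _ (by omega) (by omega)) (N _ (by omega) _ (by omega) (by omega))
      (N _ (by omega) _ (by omega) (by omega)) (N _ (by omega) _ (by omega) (by omega))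
      (N _ (by omega) _ (by omega) (by omega)) (N _ (by omega) _ (by omega) (by omega))
      (N _ (by omega) _ (by omega) (by omega)))
    (fun h2 h3 h5 n0 n1 => bull_of hB v (p 2) (p 3) (p 5) (p 1) (p 0)
      h2 h3 (E _ (by omega) _ (by omega) (by omega)) h5
      (E _ (by omega) _ (by omega) (by omega)) (E _ (by omega) _ (by omega) (by omega))
      n1 n0 (N _ (by omega) _ (by omega) (by omega)) (N _ (by omega) _ (by omega) (by omega))
      (N _ (by omega) _ (by omega) (by omega)) (N _ (by omega) _ (by omega) (by omega))
      (N _ (by omega) _ (by omega) (by omega)) (N _ (by omega) _ (by omega) (by omega))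
      (N _ (by omega) _ (by omega) (by omega)))
    (fun h0 h1 h4 n2 n5 => bull_of hB (p 1) v (p 0) (p 2) (p 4) (p 5)
      h1.symm (E _ (by omega) _ (by omega) (by omega)) h0
      (E _ (by omega) _ (by omega) (by omega)) h4 (E _ (by omega) _ (by omega) (by omega))
      (N _ (by omega) _ (by omega) (by omega)) (N _ (by omega) _ (by omega) (by omega))
      n2 n5
      (N _ (by omega) _ (by omega) (by omega)) (N _ (by omega) _ (by omega) (by omega))
      (N _ (by omega) _ (by omega) (by omega)) (N _ (by omega) _ (by omega) (by omega))
      (N _ (by omega) _ (by omega) (by omega)))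
    (fun h1 h2 h4 n0 n5 => bull_of hB (p 1) v (p 2) (p 0) (p 4) (p 5)
      h1.symm (E _ (by omega) _ (by omega) (by omega)) h2
      (E _ (by omega) _ (by omega) (by omega)) h4 (E _ (by omega) _ (by omega) (by omega))
      (N _ (by omega) _ (by omega) (by omega)) (N _ (by omega) _ (by omega) (by omega))
      n0 n5
      (N _ (by omega) _ (by omega) (by omega)) (N _ (by omega) _ (by omega) (by omega))
      (N _ (by omega) _ (by omega) (by omega)) (N _ (by omega) _ (by omega) (by omega))
      (N _ (by omega) _ (by omega) (by omega)))
    (fun h0 h4 h5 n1 n3 => bull_of hB (p 4) v (p 5) (p 3) (p 0) (p 1)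
      h4.symm (E _ (by omega) _ (by omega) (by omega)) h5
      (E _ (by omega) _ (by omega) (by omega)) h0 (E _ (by omega) _ (by omega) (by omega))
      (N _ (by omega) _ (by omega) (by omega)) (N _ (by omega) _ (by omega) (by omega))
      n3 n1
      (N _ (by omega) _ (by omega) (by omega)) (N _ (by omega) _ (by omega) (by omega))
      (N _ (by omega) _ (by omega) (by omega)) (N _ (by omega) _ (by omega) (by omega))
      (N _ (by omega) _ (by omega) (by omega)))
    (fun h1 h4 h5 n0 n3 => bull_of hB (p 4) v (p 5) (p 3) (p 1) (p 0)
      h4.symm (E _ (by omega) _ (by omega) (by omega)) h5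
      (E _ (by omega) _ (by omega) (by omega)) h1 (E _ (by omega) _ (by omega) (by omega))
      (N _ (by omega) _ (by omega) (by omega)) (N _ (by omega) _ (by omega) (by omega))
      n3 n0
      (N _ (by omega) _ (by omega) (by omega)) (N _ (by omega) _ (by omega) (by omega))
      (N _ (by omega) _ (by omega) (by omega)) (N _ (by omega) _ (by omega) (by omega))
      (N _ (by omega) _ (by omega) (by omega)))
    (fun h0 h2 h3 n4 n5 => bull_of hB v (p 3) (p 2) (p 0) (p 4) (p 5)
      h3 h2 (E _ (by omega) _ (by omega) (by omega)) h0
      (E _ (by omega) _ (by omega) (by omega)) (E _ (by omega) _ (by omega) (by omega))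
      n4 n5 (N _ (by omega) _ (by omega) (by omega)) (N _ (by omega) _ (by omega) (by omega))
      (N _ (by omega) _ (by omega) (by omega)) (N _ (by omega) _ (by omega) (by omega))
      (N _ (by omega) _ (by omega) (by omega)) (N _ (by omega) _ (by omega) (by omega))
      (N _ (by omega) _ (by omega) (by omega)))
  unfold Pat
  rcases key with h | h | h | h | h | h | h | h | h | h <;> obtain ⟨h0, h1, h2, h3, h4, h5⟩ := h
  · exact Or.inl (all6 _ h0 h1 h2 h3 h4 h5)
  · exact Or.inr (Or.inl (all6 _ (by simpa) (by simpa) (by simpa) (by simpa) (by simpa) (by simpa)))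
  · exact Or.inr (Or.inr (Or.inl (all6 _ (by simpa) (by simpa) (by simpa) (by simpa) (by simpa) (by simpa))))
  · exact Or.inr (Or.inr (Or.inr (Or.inl ⟨0, by omega, all6 _ (by simpa) (by simpa) (by simpa) (by simpa) (by simpa) (by simpa)⟩)))
  · exact Or.inr (Or.inr (Or.inr (Or.inl ⟨1, by omega, all6 _ (by simpa) (by simpa) (by simpa) (by simpa) (by simpa) (by simpa)⟩)))
  · exact Or.inr (Or.inr (Or.inr (Or.inl ⟨2, by omega, all6 _ (by simpa) (by simpa) (by simpa) (by simpa) (by simpa) (by simpa)⟩)))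
  · exact Or.inr (Or.inr (Or.inr (Or.inl ⟨3, by omega, all6 _ (by simpa) (by simpa) (by simpa) (by simpa) (by simpa) (by simpa)⟩)))
  · exact Or.inr (Or.inr (Or.inr (Or.inl ⟨4, by omega, all6 _ (by simpa) (by simpa) (by simpa) (by simpa) (by simpa) (by simpa)⟩)))
  · exact Or.inr (Or.inr (Or.inr (Or.inl ⟨5, by omega, all6 _ (by simpa) (by simpa) (by simpa) (by simpa) (by simpa) (by simpa)⟩)))
  · exact Or.inr (Or.inr (Or.inr (Or.inr (all6 _ (by simpa) (by simpa) (by simpa) (by simpa) (by simpa) (by simpa)))))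

theorem pat_step (N : ℕ → Prop) (l : ℕ) (hl : 6 ≤ l) (hA : Pat N l) (hB0 : Pat (fun k => N (k+1)) l)
    (h1 : N 0 → N 1 → N l → ¬ N 2 → ¬ N (l-1) → False)
    (h2 : N l → N (l-1) → N 0 → ¬ N (l-2) → ¬ N 1 → False) : Pat N (l+1) := by
  have hB := hB0
  simp only [Pat] at hB
  have ext : ∀ Q : ℕ → Prop, (∀ k, k < l → (N k ↔ Q k)) → (N l ↔ Q l) →
      ∀ k, k < l + 1 → (N k ↔ Q k) := by
    intro Q h h' k hk
    rcases Nat.lt_succ_iff_lt_or_eq.1 hk with h'' | rfl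
    · exact h k h''
    · exact h'
  -- consequences of hB at selected indices
  have F : ∀ i, i + 2 ≤ l → N (i+1) → 0 < i → (N i ∨ N (i+2)) := by
    intro i hi hN hi0
    rcases hB with h | h | h | ⟨c, hc, h⟩ | h
    · exact absurd hN (h i (by omega))
    · have := (h i (by omega)).1 hN; omega
    · have := (h i (by omega)).1 hN; omega
    · have a := (h i (by omega)).1 hN
      by_cases hci : c ≤ i
      · left
        have := (h (i-1) (by omega)).2 (by omega)
        have e : i - 1 + 1 = i := by omega
        simpa [e] using this
      · right
        exact (h (i+1) (by omega)).2 (by omega)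
    · have := (h i (by omega)).1 hN; omega
  by_cases hNl : N l
  · -- l ∈ N
    have hB' : (∀ k, k < l → (N (k+1) ↔ k + 1 = l)) ∨
        (∀ k, k < l → (N (k+1) ↔ l ≤ k + 2)) ∨ (∀ k, k < l → (N (k+1) ↔ l ≤ k + 3)) ∨
        (∀ k, k < l → (N (k+1) ↔ k = 0 ∨ k + 1 = l)) := by
      have e : l - 1 + 1 = l := by omega
      rcases hB with h | h | h | ⟨c, hc, h⟩ | h
      · exact absurd hNl (by simpa [e] using h (l-1) (by omega))
      · have := (h (l-1) (by omega)).1 (by simpa [e] using hNl); omega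
      · exact Or.inl h
      · have := (h (l-1) (by omega)).1 (by simpa [e] using hNl)
        by_cases hcl : c + 1 = l
        · right; left; intro k hk; rw [h k hk]; omega
        · right; right; left; intro k hk; rw [h k hk]; omega
      · exact Or.inr (Or.inr (Or.inr h))
    have shift : ∀ Q : ℕ → Prop, (∀ k, k < l → (N (k+1) ↔ Q (k+1))) → (N 0 ↔ Q 0) →
        ∀ k, k < l + 1 → (N k ↔ Q k) := by
      intro Q h h' k hk
      rcases k with _ | k
      · exact h'
      · exact h k (by omega)
    have e1 : l - 2 + 1 = l - 1 := by omega
    have e2 : l - 3 + 1 = l - 2 := by omega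
    rcases hB' with h | h | h | h
    · by_cases h0 : N 0
      · right; right; right; right
        exact shift (fun k => k = 0 ∨ k + 1 = l + 1) (fun k hk => by rw [h k hk]; omega) (by simpa)
      · right; right; left
        refine shift (fun k => k + 1 = l + 1) (fun k hk => by rw [h k hk]; omega) ?_
        simp only [h0, false_iff]; omega
    · by_cases h0 : N 0
      · exfalso
        refine h2 hNl ?_ h0 ?_ ?_
        · have := (h (l-2) (by omega)).2 (by omega); rwa [e1] at this
        · intro hh; rw [← e2] at hh
          have := (h (l-3) (by omega)).1 hh; omega
        · intro hh
          have := (h 0 (by omega)).1 hh; omega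
      · right; right; right; left
        refine ⟨l, by omega, shift (fun k => k ≤ l + 1 ∧ l ≤ k + 1) (fun k hk => by rw [h k hk]; omega) ?_⟩
        simp only [h0, false_iff]; omega
    · by_cases h0 : N 0
      · exfalso
        have a1 : N (l-1) := by
          have := (h (l-2) (by omega)).2 (by omega); rwa [e1] at this
        have a2 : N (l-2) := by
          have := (h (l-3) (by omega)).2 (by omega); rwa [e2] at this
        rcases hA with h | h | h | ⟨c, hc, h⟩ | h
        · exact h 0 (by omega) h0
        · have := (h (l-1) (by omega)).1 a1; omega
        · have := (h 0 (by omega)).1 h0; omega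
        · have := (h 0 (by omega)).1 h0; have := (h (l-1) (by omega)).1 a1; omega
        · have := (h (l-2) (by omega)).1 a2; omega
      · right; right; right; left
        refine ⟨l-1, by omega, shift (fun k => k ≤ l - 1 + 1 ∧ l - 1 ≤ k + 1) (fun k hk => by rw [h k hk]; omega) ?_⟩
        simp only [h0, false_iff]; omega
    · exfalso
      have a1 : N 1 := (h 0 (by omega)).2 (by omega)
      have a2 : ¬ N 2 := fun hh => by have := (h 1 (by omega)).1 hh; omega
      have a3 : ¬ N (l-1) := fun hh => by
        rw [← e1] at hh
        have := (h (l-2) (by omega)).1 hh; omega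
      have a0 : N 0 := by
        rcases hA with h | h | h | ⟨c, hc, h⟩ | h
        · exact absurd a1 (h 1 (by omega))
        · have := (h 1 (by omega)).1 a1; omega
        · have := (h 1 (by omega)).1 a1; omega
        · have := (h 1 (by omega)).1 a1
          have b : ¬ (2 ≤ c + 1 ∧ c ≤ 2 + 1) := fun hh => a2 ((h 2 (by omega)).2 hh)
          exact (h 0 (by omega)).2 (by omega)
        · have := (h 1 (by omega)).1 a1; omega
      exact h1 a0 a1 hNl a2 a3
  · rcases hA with h | h | h | ⟨c, hc, h⟩ | h
    · left; intro k hk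
      rcases Nat.lt_succ_iff_lt_or_eq.1 hk with h'' | rfl
      · exact h k h''
      · exact hNl
    · right; left
      exact ext _ h (by simp only [hNl, false_iff]; omega)
    · exfalso
      have a : N (l-2+1) := (h _ (by omega)).2 (by omega)
      rcases hB with g | g | g | ⟨c, hc, g⟩ | g
      · exact g _ (by omega) a
      · have := (g _ (by omega)).1 a; omega
      · have := (g _ (by omega)).1 a; omega
      · have h3 := (g _ (by omega)).1 a
        have h4 : ¬ (l - 1 ≤ c + 1 ∧ c ≤ l - 1 + 1) := fun hh => hNl (by
          have := (g (l-1) (by omega)).2 hh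
          have e : l - 1 + 1 = l := by omega
          simpa [e] using this)
        have h5 : N (l-3+1) := (g (l-3) (by omega)).2 (by omega)
        have := (h _ (by omega)).1 h5
        omega
      · have := (g _ (by omega)).1 a; omega
    · by_cases hcl : c + 1 = l
      · exfalso
        have a : N (l-2+1) := (h _ (by omega)).2 (by omega)
        have a' : N (l-3+1) := (h _ (by omega)).2 (by omega)
        have a'' : ¬ N (l-4+1) := fun hh => by have := (h _ (by omega)).1 hh; omega
        rcases hB with g | g | g | ⟨c, hc, g⟩ | g
        · exact g _ (by omega) a
        · have := (g _ (by omega)).1 a; omega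
        · have := (g _ (by omega)).1 a; omega
        · have h3 := (g _ (by omega)).1 a
          have h4 : ¬ (l - 1 ≤ c + 1 ∧ c ≤ l - 1 + 1) := fun hh => hNl (by
            have := (g (l-1) (by omega)).2 hh
            have e : l - 1 + 1 = l := by omega
            simpa [e] using this)
          exact a'' ((g (l-4) (by omega)).2 (by omega))
        · have := (g _ (by omega)).1 a; omega
      · right; right; right; left
        exact ⟨c, by omega, ext _ h (by simp only [hNl, false_iff]; omega)⟩
    · exfalso
      have a : N (l-2+1) := (h _ (by omega)).2 (by omega)
      have a' : ¬ N (l-3+1) := fun hh => by have := (h _ (by omega)).1 hh; omega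
      rcases F (l-2) (by omega) a (by omega) with hh | hh
      · have e : l - 3 + 1 = l - 2 := by omega
        rw [e] at a'; exact a' hh
      · have e : l - 2 + 2 = l := by omega
        rw [e] at hh; exact hNl hh

theorem IP.mono {V : Type*} {G : SimpleGraph V} {p : ℕ → V} {l m : ℕ} (h : IP G p l) (hm : m ≤ l) :
    IP G p m := fun i hi j hj => h i (by omega) j (by omega)

theorem IP.shift {V : Type*} {G : SimpleGraph V} {p : ℕ → V} {l : ℕ} (h : IP G p (l+1)) :
    IP G (fun k => p (k+1)) l := by
  intro i hi j hj
  have := h (i+1) (by omega) (j+1) (by omega)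
  refine ⟨fun hh => ?_, ?_⟩
  · have := this.1 hh; omega
  · rw [this.2]; omega

theorem pat_path {V : Type*} {G : SimpleGraph V} (hK : ¬ ContainsInduced G K13)
    (hB : ¬ ContainsInduced G (Bgraph 2)) (v : V) (l : ℕ) (hl : 6 ≤ l) :
    ∀ p : ℕ → V, IP G p l → (∀ k, k < l → v ≠ p k) → Pat (fun k => G.Adj v (p k)) l := by
  induction l, hl using Nat.le_induction with
  | base => exact fun p hp hv => pat6 hK hB p hp v hv
  | succ l hl ih =>
    intro p hp hv
    have E : ∀ i, i < l+1 → ∀ j, j < l+1 → (i + 1 = j ∨ j + 1 = i) → G.Adj (p i) (p j) :=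
      fun i hi j hj h => ((hp i hi j hj).2).2 h
    have N : ∀ i, i < l+1 → ∀ j, j < l+1 → ¬ (i + 1 = j ∨ j + 1 = i) → ¬ G.Adj (p i) (p j) :=
      fun i hi j hj h h' => h (((hp i hi j hj).2).1 h')
    refine pat_step _ l hl (ih p (hp.mono (by omega)) (fun k hk => hv k (by omega)))
      (ih (fun k => p (k+1)) hp.shift (fun k hk => hv (k+1) (by omega))) ?_ ?_
    · intro h0 h1 h2 n2 n3
      exact bull_of hB (p 1) v (p 0) (p 2) (p l) (p (l-1)) h1.symm
        (E _ (by omega) _ (by omega) (by omega)) h0 (E _ (by omega) _ (by omega) (by omega)) h2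
        (E _ (by omega) _ (by omega) (by omega)) (N _ (by omega) _ (by omega) (by omega))
        (N _ (by omega) _ (by omega) (by omega)) n2 n3
        (N _ (by omega) _ (by omega) (by omega)) (N _ (by omega) _ (by omega) (by omega))
        (N _ (by omega) _ (by omega) (by omega)) (N _ (by omega) _ (by omega) (by omega))
        (N _ (by omega) _ (by omega) (by omega))
    · intro h0 h1 h2 n2 n3
      exact bull_of hB (p (l-1)) v (p l) (p (l-2)) (p 0) (p 1) h1.symm
        (E _ (by omega) _ (by omega) (by omega)) h0 (E _ (by omega) _ (by omega) (by omega)) h2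
        (E _ (by omega) _ (by omega) (by omega)) (N _ (by omega) _ (by omega) (by omega))
        (N _ (by omega) _ (by omega) (by omega)) n2 n3
        (N _ (by omega) _ (by omega) (by omega)) (N _ (by omega) _ (by omega) (by omega))
        (N _ (by omega) _ (by omega) (by omega)) (N _ (by omega) _ (by omega) (by omega))
        (N _ (by omega) _ (by omega) (by omega))

/-- closed adjacency -/
def R {V : Type*} (G : SimpleGraph V) (v w : V) : Prop := v = w ∨ G.Adj v w

theorem R_comm {V : Type*} {G : SimpleGraph V} {v w : V} : R G v w ↔ R G w v := by
  unfold R; rw [G.adj_comm, eq_comm]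

theorem IP.R_iff {V : Type*} {G : SimpleGraph V} {p : ℕ → V} {l : ℕ} (h : IP G p l) {i j : ℕ}
    (hi : i < l) (hj : j < l) : R G (p i) (p j) ↔ j ≤ i + 1 ∧ i ≤ j + 1 := by
  have := h i hi j hj
  unfold R
  rw [this.2]
  constructor
  · rintro (h | h)
    · have := this.1 h; omega
    · omega
  · intro h
    by_cases e : i = j
    · left; rw [e]
    · right; omega

theorem pat_R {V : Type*} {G : SimpleGraph V} (hK : ¬ ContainsInduced G K13)
    (hB : ¬ ContainsInduced G (Bgraph 2)) (v : V) (l : ℕ) (hl : 6 ≤ l)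
    (p : ℕ → V) (hp : IP G p l) : Pat (fun k => R G v (p k)) l := by
  by_cases hv : ∀ k, k < l → v ≠ p k
  · have h := pat_path hK hB v l hl p hp hv
    have e : ∀ k, k < l → (R G v (p k) ↔ G.Adj v (p k)) := fun k hk => by
      simp [R, hv k hk]
    rcases h with h | h | h | ⟨c, hc, h⟩ | h
    · exact Or.inl fun k hk => by beta_reduce; rw [e k hk]; exact h k hk
    · exact Or.inr (Or.inl fun k hk => by beta_reduce; rw [e k hk]; exact h k hk)
    · exact Or.inr (Or.inr (Or.inl fun k hk => by beta_reduce; rw [e k hk]; exact h k hk))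
    · exact Or.inr (Or.inr (Or.inr (Or.inl ⟨c, hc, fun k hk => by beta_reduce; rw [e k hk]; exact h k hk⟩)))
    · exact Or.inr (Or.inr (Or.inr (Or.inr fun k hk => by beta_reduce; rw [e k hk]; exact h k hk)))
  · push Not at hv
    obtain ⟨c, hc, rfl⟩ := hv
    exact Or.inr (Or.inr (Or.inr (Or.inl ⟨c, hc, fun k hk => hp.R_iff hc hk⟩)))

def Good {V ι : Type*} (G : SimpleGraph V) (C : ι → ι → Prop) (p : ι → V) : Prop :=
  ∀ i j, (p i = p j → i = j) ∧ (R G (p i) (p j) ↔ C i j)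

theorem main_abs {V ι : Type*} [Nonempty ι] (G : SimpleGraph V) (hconn : G.Connected)
    (C : ι → ι → Prop) (hrefl : ∀ i, C i i) (hsymm : ∀ i j, C i j → C j i)
    (htwin : ∀ i j, (∀ k, C k i ↔ C k j) → i = j)
    (hdeg : ∀ i j, ∃ k, k ≠ i ∧ C k j)
    (hswap : ∀ i j i' j', (∀ k, k ≠ i → (C k j' ↔ C k j)) → (∀ k, k ≠ j → (C k i' ↔ C k i)) →
      j' = j ∨ i' = i)
    (H : ∀ p, Good G C p → ∀ v, (∃ k, R G v (p k)) → ∃ j, ∀ k, R G v (p k) ↔ C k j)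
    (p : ι → V) (hp : Good G C p) :
    ∃ L : ι → Set V, (∀ i, (L i).Nonempty) ∧ (∀ i j, i ≠ j → Disjoint (L i) (L j)) ∧
      (∀ (i j : ι) (u v : V), u ∈ L i → v ∈ L j → u ≠ v → (G.Adj u v ↔ C i j)) ∧
      ∀ v : V, ∃ i, v ∈ L i := by
  classical
  have hs : ∀ i j, C i j ↔ C j i := fun i j => ⟨hsymm i j, hsymm j i⟩
  let L : ι → Set V := fun i => {v | ∀ k, R G v (p k) ↔ C k i}
  have hL : ∀ i v, v ∈ L i ↔ ∀ k, R G v (p k) ↔ C k i := fun i v => Iff.rfl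
  have hpL : ∀ i, p i ∈ L i := fun i k => by rw [(hp i k).2, hs]
  have hself : ∀ v, R G v v := fun v => Or.inl rfl
  have hupd : ∀ i u, u ∈ L i → Good G C (Function.update p i u) := by
    intro i u hu
    have hne : ∀ b, b ≠ i → u ≠ p b := by
      intro b hb e
      apply hb
      apply htwin
      intro k
      rw [← (hL i u).1 hu k, e, (hp b k).2, hs]
    intro a b
    by_cases ha : a = i <;> by_cases hb : b = i
    · subst ha; subst hb
      simp [hself, hrefl]
    · subst ha
      rw [Function.update_self, Function.update_of_ne hb]
      refine ⟨fun e => absurd e (hne b hb), ?_⟩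
      rw [(hL a u).1 hu b, hs]
    · subst hb
      rw [Function.update_self, Function.update_of_ne ha]
      refine ⟨fun e => absurd e.symm (hne a ha), ?_⟩
      rw [R_comm, (hL b u).1 hu a]
    · rw [Function.update_of_ne ha, Function.update_of_ne hb]
      exact hp a b
  have hrep : ∀ i u v, u ∈ L i → R G v u → ∃ j', (∀ k, k ≠ i → (R G v (p k) ↔ C k j')) ∧ (R G v u ↔ C i j') := by
    intro i u v hu hvu
    obtain ⟨j', hj'⟩ := H _ (hupd i u hu) v ⟨i, by rwa [Function.update_self]⟩
    refine ⟨j', fun k hk => ?_, ?_⟩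
    · have := hj' k
      rwa [Function.update_of_ne hk] at this
    · have := hj' i
      rwa [Function.update_self] at this
  have hrep2 : ∀ i j u v, u ∈ L i → v ∈ L j → ∃ j', (∀ k, k ≠ i → (C k j' ↔ C k j)) ∧ (R G v u ↔ C i j') := by
    intro i j u v hu hv
    obtain ⟨k0, hk0, hk0'⟩ := hdeg i j
    obtain ⟨j', hj'⟩ := H _ (hupd i u hu) v
      ⟨k0, by rw [Function.update_of_ne hk0]; exact ((hL j v).1 hv k0).2 hk0'⟩
    refine ⟨j', fun k hk => ?_, ?_⟩
    · have := hj' k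
      rw [Function.update_of_ne hk] at this
      rw [← this, (hL j v).1 hv k]
    · have := hj' i
      rwa [Function.update_self] at this
  refine ⟨L, fun i => ⟨p i, hpL i⟩, ?_, ?_, ?_⟩
  · intro i j hij
    rw [Set.disjoint_left]
    intro v hi hj
    apply hij
    apply htwin
    intro k
    rw [← (hL i v).1 hi k, (hL j v).1 hj k]
  · intro i j u v hu hv huv
    have e : G.Adj u v ↔ R G u v := by simp [R, huv]
    rw [e]
    obtain ⟨j', h1, h2⟩ := hrep2 i j u v hu hv
    obtain ⟨i', h3, h4⟩ := hrep2 j i v u hv hu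
    rcases hswap i j i' j' h1 h3 with rfl | rfl
    · rw [R_comm, h2]
    · rw [h4, hs]
  · have step : ∀ v w, (∃ i, v ∈ L i) → G.Adj v w → ∃ i, w ∈ L i := by
      rintro v w ⟨i, hv⟩ hvw
      obtain ⟨j', h1, h2⟩ := hrep i v w hv (Or.inr hvw.symm)
      obtain ⟨k0, hk0, hk0'⟩ := hdeg i j'
      obtain ⟨j, hj⟩ := H p hp w ⟨k0, (h1 k0 hk0).2 hk0'⟩
      exact ⟨j, hj⟩
    obtain ⟨i0⟩ := ‹Nonempty ι›
    intro v
    obtain ⟨w⟩ := hconn.preconnected (p i0) v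
    have : ∀ a b (w : G.Walk a b), (∃ i, a ∈ L i) → ∃ i, b ∈ L i := by
      intro a b w
      induction w with
      | nil => exact id
      | cons h _ ih => exact fun ha => ih (step _ _ ha h)
    exact this _ _ w ⟨i0, hpL i0⟩

def cyc (n i j : ℕ) : Prop :=
  i = j ∨ i + 1 = j ∨ j + 1 = i ∨ (i = 0 ∧ j + 1 = n) ∨ (j = 0 ∧ i + 1 = n)

def CycN {V : Type*} (G : SimpleGraph V) (p : ℕ → V) (n : ℕ) : Prop :=
  ∀ i, i < n → ∀ j, j < n → (p i = p j → i = j) ∧ (R G (p i) (p j) ↔ cyc n i j)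

theorem adj_iff_R {V : Type*} {G : SimpleGraph V} {v w : V} : G.Adj v w ↔ R G v w ∧ v ≠ w := by
  unfold R
  constructor
  · exact fun h => ⟨Or.inr h, h.ne⟩
  · rintro ⟨h | h, h'⟩
    · exact absurd h h'
    · exact h

theorem CycN.path {V : Type*} {G : SimpleGraph V} {p : ℕ → V} {n : ℕ} (h : CycN G p n) :
    IP G p (n - 1) := by
  intro i hi j hj
  have := h i (by omega) j (by omega)
  refine ⟨this.1, ?_⟩
  rw [adj_iff_R, this.2]
  have e : p i ≠ p j ↔ i ≠ j := ⟨fun h e => h (by rw [e]), fun h e => h (this.1 e)⟩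
  rw [e]
  unfold cyc
  omega

def rot (n s k : ℕ) : ℕ := if s + k < n then s + k else s + k - n

theorem CycN.rotate {V : Type*} {G : SimpleGraph V} {p : ℕ → V} {n : ℕ} (h : CycN G p n) (s : ℕ)
    (hs : s < n) : CycN G (fun k => p (rot n s k)) n := by
  intro i hi j hj
  have hi' : rot n s i < n := by unfold rot; split_ifs <;> omega
  have hj' : rot n s j < n := by unfold rot; split_ifs <;> omega
  have := h _ hi' _ hj'
  refine ⟨fun e => ?_, ?_⟩
  · have := this.1 e
    unfold rot at this
    split_ifs at this <;> omega
  · rw [this.2]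
    unfold rot cyc
    split_ifs <;> omega

theorem cyc2 {V : Type*} {G : SimpleGraph V} (hK : ¬ ContainsInduced G K13)
    (hB : ¬ ContainsInduced G (Bgraph 2)) {p : ℕ → V} {n : ℕ} (hn : 7 ≤ n) (h : CycN G p n) (v : V)
    (hv : R G v (p 2)) :
    ∃ i, 1 ≤ i ∧ i ≤ 3 ∧ ∀ k, k < n → (R G v (p k) ↔ k ≤ i + 1 ∧ i ≤ k + 1) := by
  have h1 := pat_R hK hB v (n-1) (by omega) p h.path
  have h2 := pat_R hK hB v (n-1) (by omega) _ (h.rotate (n-1) (by omega)).path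
  have key : ∃ i, 1 ≤ i ∧ i ≤ 3 ∧ ∀ k, k < n-1 → (R G v (p k) ↔ k ≤ i + 1 ∧ i ≤ k + 1) := by
    rcases h1 with g | g | g | ⟨c, hc, g⟩ | g
    · exact absurd hv (g 2 (by omega))
    · have := (g 2 (by omega)).1 hv; omega
    · have := (g 2 (by omega)).1 hv; omega
    · have := (g 2 (by omega)).1 hv
      exact ⟨c, by omega, by omega, g⟩
    · have := (g 2 (by omega)).1 hv; omega
  obtain ⟨i, hi1, hi3, hi⟩ := key
  refine ⟨i, hi1, hi3, ?_⟩
  have e0 : rot n (n-1) 0 = n - 1 := by unfold rot; split_ifs <;> omega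
  have e1 : ∀ k, k < n-1 → rot n (n-1) (k+1) = k := by intro k hk; unfold rot; split_ifs <;> omega
  have last : ¬ R G v (p (n-1)) := by
    have a0 : R G v (p (rot n (n-1) (i-1+1))) := by
      rw [e1 _ (by omega), hi _ (by omega)]; omega
    have a1 : R G v (p (rot n (n-1) (i+1))) := by
      rw [e1 _ (by omega), hi _ (by omega)]; omega
    have a2 : R G v (p (rot n (n-1) (i+1+1))) := by
      rw [e1 _ (by omega), hi _ (by omega)]; omega
    intro hl
    have hl' : R G v (p (rot n (n-1) 0)) := by rwa [e0]
    rcases h2 with g | g | g | ⟨c, hc, g⟩ | g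
    · exact absurd a1 (g _ (by omega))
    · have := (g _ (by omega)).1 a1; omega
    · have := (g _ (by omega)).1 a1
      have := (g _ (by omega)).1 a0; omega
    · have := (g _ (by omega)).1 a0
      have := (g _ (by omega)).1 a2
      have := (g _ (by omega)).1 hl'
      omega
    · have := (g _ (by omega)).1 a1
      have := (g _ (by omega)).1 a0; omega
  intro k hk
  by_cases hk' : k < n - 1
  · exact hi k hk'
  · have : k = n - 1 := by omega
    subst this
    simp only [last, false_iff]
    omega

theorem cyc_sees {V : Type*} {G : SimpleGraph V} (hK : ¬ ContainsInduced G K13)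
    (hB : ¬ ContainsInduced G (Bgraph 2)) {p : ℕ → V} {n : ℕ} (hn : 7 ≤ n) (h : CycN G p n) (v : V)
    (k0 : ℕ) (hk0 : k0 < n) (hv : R G v (p k0)) :
    ∃ j, j < n ∧ ∀ k, k < n → (R G v (p k) ↔ cyc n k j) := by
  obtain ⟨s, hs, hs2⟩ : ∃ s, s < n ∧ rot n s 2 = k0 := by
    by_cases h2 : 2 ≤ k0
    · exact ⟨k0 - 2, by omega, by unfold rot; split_ifs <;> omega⟩
    · exact ⟨k0 + n - 2, by omega, by unfold rot; split_ifs <;> omega⟩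
  obtain ⟨i, hi1, hi3, hi⟩ := cyc2 hK hB hn (h.rotate s hs) v (by rwa [hs2])
  refine ⟨rot n s i, by unfold rot; split_ifs <;> omega, ?_⟩
  intro k hk
  obtain ⟨t, ht, ht2⟩ : ∃ t, t < n ∧ rot n s t = k := by
    by_cases h2 : s ≤ k
    · exact ⟨k - s, by omega, by unfold rot; split_ifs <;> omega⟩
    · exact ⟨k + n - s, by omega, by unfold rot; split_ifs <;> omega⟩
  have := hi t ht
  rw [ht2] at this
  rw [this, ← ht2]
  unfold rot cyc
  split_ifs <;> omega

theorem ex_succ {m : ℕ} (j : Fin (m+1)) :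
    ∃ s : Fin (m+1), ((j:ℕ) = m ∧ (s:ℕ) = 0) ∨ ((j:ℕ) < m ∧ (s:ℕ) = j + 1) := by
  by_cases h : (j:ℕ) = m
  · exact ⟨⟨0, by omega⟩, Or.inl ⟨h, rfl⟩⟩
  · exact ⟨⟨j + 1, by omega⟩, Or.inr ⟨by omega, rfl⟩⟩

theorem ex_pred {m : ℕ} (j : Fin (m+1)) :
    ∃ s : Fin (m+1), ((j:ℕ) = 0 ∧ (s:ℕ) = m) ∨ ((s:ℕ) < m ∧ (s:ℕ) + 1 = j) := by
  by_cases h : (j:ℕ) = 0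
  · exact ⟨⟨m, by omega⟩, Or.inl ⟨h, rfl⟩⟩
  · exact ⟨⟨j - 1, by omega⟩, Or.inr ⟨by simp only; omega, by simp only; omega⟩⟩

theorem cyc_inj {m : ℕ} (hm : 6 ≤ m) (i j j' : Fin (m+1))
    (hk : ∀ k : Fin (m+1), k ≠ i → (cyc (m+1) k j' ↔ cyc (m+1) k j)) : j' = j := by
  obtain ⟨s, hs⟩ := ex_succ j
  obtain ⟨t, ht⟩ := ex_pred j
  obtain ⟨s', hs'⟩ := ex_succ j'
  obtain ⟨t', ht'⟩ := ex_pred j'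
  have f1 : ∀ k, cyc (m+1) (k : Fin (m+1)) j → (k : ℕ) = i ∨ cyc (m+1) k j' := by
    intro k h
    by_cases e : k = i
    · exact Or.inl (by rw [e])
    · exact Or.inr ((hk k e).2 h)
  have f2 : ∀ k, cyc (m+1) (k : Fin (m+1)) j' → (k : ℕ) = i ∨ cyc (m+1) k j := by
    intro k h
    by_cases e : k = i
    · exact Or.inl (by rw [e])
    · exact Or.inr ((hk k e).1 h)
  have b1 := f1 s (by unfold cyc; omega)
  have b2 := f1 t (by unfold cyc; omega)
  have b3 := f1 j (Or.inl rfl)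
  have b4 := f2 s' (by unfold cyc; omega)
  have b5 := f2 t' (by unfold cyc; omega)
  have l1 := i.2
  have l2 := j.2
  have l3 := j'.2
  clear hk f1 f2
  rw [Fin.ext_iff]
  generalize (i:ℕ) = i at *
  generalize (j:ℕ) = j at *
  generalize (j':ℕ) = j' at *
  generalize (s:ℕ) = s at *
  generalize (t:ℕ) = t at *
  generalize (s':ℕ) = s' at *
  generalize (t':ℕ) = t' at *
  have c : j' = j ∨ j' = s ∨ j' = t := by
    clear b4 b5 hs' ht'
    unfold cyc at b1 b2 b3
    rcases hs with hs | hs <;> rcases ht with ht | ht <;> rcases b3 with b3 | b3 | b3 | b3 | b3 <;>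
      omega
  rcases c with c | c | c
  · exact c
  · exfalso
    subst c
    have h1 : ¬ cyc (m+1) t j' := by
      unfold cyc; omega
    have h2 : ¬ cyc (m+1) s' j := by
      unfold cyc; omega
    have h3 : t = i := b2.resolve_right h1
    have h4 : s' = i := b4.resolve_right h2
    clear b1 b2 b3 b4 b5 h1 h2
    omega
  · exfalso
    subst c
    have h1 : ¬ cyc (m+1) s j' := by
      unfold cyc; omega
    have h2 : ¬ cyc (m+1) t' j := by
      unfold cyc; omega
    have h3 : s = i := b1.resolve_right h1
    have h4 : t' = i := b5.resolve_right h2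
    clear b1 b2 b3 b4 b5 h1 h2
    omega

theorem fatCycle_of {V : Type*} {G : SimpleGraph V} (hconn : G.Connected)
    (hK : ¬ ContainsInduced G K13) (hB : ¬ ContainsInduced G (Bgraph 2))
    {P : ℕ → V} {m : ℕ} (hm : 6 ≤ m) (h : CycN G P (m+1)) : IsFatCycle G m := by
  have hcyc : ∀ i j : Fin (m+1), cyc (m+1) i j ↔
      (i = j ∨ ((i : ℕ) + 1) % (m + 1) = (j : ℕ) ∨ ((j : ℕ) + 1) % (m + 1) = (i : ℕ)) := by
    intro i j
    have e : ∀ a : Fin (m+1), ((a : ℕ) + 1) % (m+1) = if (a : ℕ) = m then 0 else (a : ℕ) + 1 := by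
      intro a
      split_ifs with ha
      · rw [ha, Nat.mod_self]
      · exact Nat.mod_eq_of_lt (by omega)
    rw [e, e, Fin.ext_iff]
    unfold cyc
    split_ifs <;> omega
  refine Exists.elim (main_abs G hconn (fun i j : Fin (m+1) => cyc (m+1) i j)
    (fun i => Or.inl rfl) (fun i j => by unfold cyc; omega)
    ?_ ?_ ?_ ?_ (fun i => P i) ?_) ?_
  · exact fun i j hk => cyc_inj hm i j i (fun k _ => hk k)
  · intro i j
    by_cases hij : j = i
    · refine ⟨⟨if (i:ℕ) = m then 0 else i + 1, by split_ifs <;> omega⟩, ?_, ?_⟩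
      · rw [Ne, Fin.ext_iff]
        simp only
        split_ifs <;> omega
      · simp only [cyc, hij]
        split_ifs <;> omega
    · exact ⟨j, hij, Or.inl rfl⟩
  · intro i j i' j' hk _
    exact Or.inl (cyc_inj hm i j j' hk)
  · intro p hp v ⟨k, hk⟩
    let Q : ℕ → V := fun k => if h : k < m + 1 then p ⟨k, h⟩ else p 0
    have hQ : ∀ k (h : k < m+1), Q k = p ⟨k, h⟩ := fun k h => dif_pos h
    have hQC : CycN G Q (m+1) := by
      intro i hi j hj
      rw [hQ i hi, hQ j hj]
      refine ⟨fun e => ?_, (hp _ _).2⟩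
      have := (hp _ _).1 e
      simpa using this
    obtain ⟨j, hj, hjk⟩ := cyc_sees hK hB (by omega) hQC v k k.2 (by rw [hQ k k.2]; exact hk)
    refine ⟨⟨j, hj⟩, fun k => ?_⟩
    rw [← hQ k k.2]
    exact hjk k k.2
  · intro i j
    have := h i i.2 j j.2
    exact ⟨fun e => Fin.ext (this.1 e), this.2⟩
  · rintro L ⟨h1, h2, h3, h4⟩
    exact ⟨by omega, L, ⟨h1, h2, fun i j u v hu hv huv => by rw [h3 i j u v hu hv huv]; exact hcyc i j⟩, h4⟩

theorem path_sees {V : Type*} {G : SimpleGraph V} (hK : ¬ ContainsInduced G K13)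
    (hB : ¬ ContainsInduced G (Bgraph 2)) {p : ℕ → V} {l : ℕ} (hl : 6 ≤ l) (h : IP G p l)
    (hmax : ¬ ∃ q, IP G q (l+1)) (hcyc : ¬ ∃ q, CycN G q (l+1)) (v : V)
    (k0 : ℕ) (hk0 : k0 < l) (hv : R G v (p k0)) :
    ∃ j, j < l ∧ ∀ k, k < l → (R G v (p k) ↔ k ≤ j + 1 ∧ j ≤ k + 1) := by
  have hne : ∀ k, k < l → v = p k → R G v (p k) ∧ (k + 1 < l → R G v (p (k+1))) ∧
      (0 < k → R G v (p (k-1))) := by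
    intro k hk e
    subst e
    refine ⟨Or.inl rfl, fun hh => ?_, fun hh => ?_⟩
    · rw [h.R_iff hk hh]; omega
    · rw [h.R_iff hk (by omega)]; omega
  rcases pat_R hK hB v l hl p h with g | g | g | ⟨c, hc, g⟩ | g
  · exact absurd hv (g _ hk0)
  · exfalso
    have hn : ∀ k, k < l → v ≠ p k := by
      intro k hk e
      obtain ⟨a1, a2, a3⟩ := hne k hk e
      have b1 := (g k hk).1 a1
      have b2 := (g (k+1) (by omega)).1 (a2 (by omega))
      omega
    apply hmax
    refine ⟨fun k => if k = 0 then v else p (k-1), ?_⟩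
    intro i hi j hj
    by_cases h0 : i = 0 <;> by_cases h1 : j = 0
    · subst h0; subst h1; simp
    · simp only [h0, h1, if_true, if_false]
      refine ⟨fun e => absurd e (hn _ (by omega)), ?_⟩
      rw [adj_iff_R, and_iff_left (hn _ (by omega))]
      have := g (j-1) (by omega)
      beta_reduce at this
      rw [this]; omega
    · simp only [h0, h1, if_true, if_false]
      refine ⟨fun e => absurd e.symm (hn _ (by omega)), ?_⟩
      rw [G.adj_comm, adj_iff_R, and_iff_left (hn _ (by omega))]
      have := g (i-1) (by omega)
      beta_reduce at this
      rw [this]; omega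
    · simp only [h0, h1, if_false]
      have := h (i-1) (by omega) (j-1) (by omega)
      refine ⟨fun e => ?_, ?_⟩
      · have := this.1 e; omega
      · rw [this.2]; omega
  · exfalso
    have hn : ∀ k, k < l → v ≠ p k := by
      intro k hk e
      obtain ⟨a1, a2, a3⟩ := hne k hk e
      have b1 := (g k hk).1 a1
      have b2 := (g (k-1) (by omega)).1 (a3 (by omega))
      omega
    apply hmax
    refine ⟨fun k => if k < l then p k else v, ?_⟩
    intro i hi j hj
    by_cases h0 : i < l <;> by_cases h1 : j < l
    · simp only [h0, h1, if_true]
      exact h i h0 j h1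
    · simp only [h0, h1, if_true, if_false]
      refine ⟨fun e => absurd e.symm (hn _ h0), ?_⟩
      rw [G.adj_comm, adj_iff_R, and_iff_left (hn _ h0)]
      have := g i h0
      beta_reduce at this
      rw [this]; omega
    · simp only [h0, h1, if_true, if_false]
      refine ⟨fun e => absurd e (hn _ h1), ?_⟩
      rw [adj_iff_R, and_iff_left (hn _ h1)]
      have := g j h1
      beta_reduce at this
      rw [this]; omega
    · have : i = j := by omega
      subst this
      simp
  · exact ⟨c, hc, g⟩
  · exfalso
    have hn : ∀ k, k < l → v ≠ p k := by
      intro k hk e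
      obtain ⟨a1, a2, a3⟩ := hne k hk e
      have b1 := (g k hk).1 a1
      rcases b1 with b1 | b1
      · have b2 := (g (k+1) (by omega)).1 (a2 (by omega))
        omega
      · have b2 := (g (k-1) (by omega)).1 (a3 (by omega))
        omega
    apply hcyc
    refine ⟨fun k => if k < l then p k else v, ?_⟩
    intro i hi j hj
    by_cases h0 : i < l <;> by_cases h1 : j < l
    · simp only [h0, h1, if_true]
      refine ⟨(h i h0 j h1).1, ?_⟩
      rw [h.R_iff h0 h1]
      unfold cyc
      omega
    · simp only [h0, h1, if_true, if_false]
      refine ⟨fun e => absurd e.symm (hn _ h0), ?_⟩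
      rw [R_comm]
      have := g i h0
      beta_reduce at this
      rw [this]
      unfold cyc
      omega
    · simp only [h0, h1, if_true, if_false]
      refine ⟨fun e => absurd e (hn _ h1), ?_⟩
      have := g j h1
      beta_reduce at this
      rw [this]
      unfold cyc
      omega
    · have : i = j := by omega
      subst this
      simp [R, cyc]

theorem fatPath_of {V : Type*} {G : SimpleGraph V} (hconn : G.Connected)
    (hK : ¬ ContainsInduced G K13) (hB : ¬ ContainsInduced G (Bgraph 2))
    {P : ℕ → V} {l : ℕ} (hl : 6 ≤ l) (h : IP G P l)
    (hmax : ¬ ∃ q, IP G q (l+1)) (hcyc : ¬ ∃ q, CycN G q (l+1)) : IsFatPath G l := by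
  have : Nonempty (Fin l) := ⟨⟨0, by omega⟩⟩
  have swp : ∀ i j j' : Fin l, (∀ k : Fin l, k ≠ i →
      (((k:ℕ) ≤ j' + 1 ∧ (j':ℕ) ≤ k + 1) ↔ ((k:ℕ) ≤ j + 1 ∧ (j:ℕ) ≤ k + 1))) → j' ≠ j →
      (((i:ℕ) = 2 ∧ (j:ℕ) < 2) ∨ ((i:ℕ) + 3 = l ∧ l ≤ (j:ℕ) + 2)) := by
    intro i j j' hk hne
    have q1 := i.2
    have q2 := j.2
    have q3 := j'.2
    have a1 := hk ⟨if (j:ℕ) + 1 = l then j else j + 1, by split_ifs <;> omega⟩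
    have a2 := hk ⟨j - 1, by omega⟩
    have a3 := hk j
    have a4 := hk ⟨if (j':ℕ) + 1 = l then j' else j' + 1, by split_ifs <;> omega⟩
    have a5 := hk ⟨j' - 1, by omega⟩
    have a6 := hk j'
    simp only [Ne, Fin.ext_iff] at a1 a2 a3 a4 a5 a6 hne
    split_ifs at a1 a4 <;> omega
  refine Exists.elim (main_abs G hconn
    (fun i j : Fin l => (i:ℕ) ≤ j + 1 ∧ (j:ℕ) ≤ i + 1)
    (fun i => by omega) (fun i j => by omega)
    ?_ ?_ ?_ ?_ (fun i => P i) ?_) ?_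
  · intro i j hk
    have q1 := i.2
    have q2 := j.2
    have a1 := hk i
    have a2 := hk ⟨if (i:ℕ) + 1 = l then i else i + 1, by split_ifs <;> omega⟩
    have a3 := hk ⟨i - 1, by omega⟩
    have a4 := hk j
    have a5 := hk ⟨if (j:ℕ) + 1 = l then j else j + 1, by split_ifs <;> omega⟩
    have a6 := hk ⟨j - 1, by omega⟩
    rw [Fin.ext_iff]
    simp only at a1 a2 a3 a4 a5 a6
    split_ifs at a2 a5 <;> omega
  · intro i j
    by_cases hij : j = i
    · refine ⟨⟨if (i:ℕ) + 1 = l then i - 1 else i + 1, by split_ifs <;> omega⟩, ?_, ?_⟩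
      · rw [Ne, Fin.ext_iff]
        simp only
        split_ifs <;> omega
      · simp only [hij]
        split_ifs <;> omega
    · exact ⟨j, hij, by omega⟩
  · intro i j i' j' hk hk'
    by_contra hc
    rw [not_or] at hc
    have b1 := swp i j j' hk hc.1
    have b2 := swp j i i' hk' hc.2
    omega
  · intro p hp v ⟨k, hk⟩
    let Q : ℕ → V := fun k => if h : k < l then p ⟨k, h⟩ else p ⟨0, by omega⟩
    have hQ : ∀ k (h : k < l), Q k = p ⟨k, h⟩ := fun k h => dif_pos h
    have hQC : IP G Q l := by
      intro i hi j hj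
      rw [hQ i hi, hQ j hj]
      have e1 : p ⟨i, hi⟩ = p ⟨j, hj⟩ → i = j := fun e => by
        have := (hp _ _).1 e
        simpa using this
      refine ⟨e1, ?_⟩
      have e : p ⟨i, hi⟩ ≠ p ⟨j, hj⟩ ↔ i ≠ j :=
        ⟨fun h e => h (by simp only [e]), fun h e => h (e1 e)⟩
      rw [adj_iff_R, (hp _ _).2, e]
      simp only
      omega
    obtain ⟨j, hj, hjk⟩ := path_sees hK hB hl hQC hmax hcyc v k k.2 (by rw [hQ k k.2]; exact hk)
    refine ⟨⟨j, hj⟩, fun k => ?_⟩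
    rw [← hQ k k.2]
    exact hjk k k.2
  · intro i j
    refine ⟨fun e => Fin.ext ((h i i.2 j j.2).1 e), ?_⟩
    rw [h.R_iff i.2 j.2]
    omega
  · rintro L ⟨h1, h2, h3, h4⟩
    refine ⟨by omega, L, ⟨h1, h2, fun i j u v hu hv huv => ?_⟩, h4⟩
    rw [h3 i j u v hu hv huv, Fin.ext_iff]
    omega

theorem forward {V : Type*} [Fintype V] {G : SimpleGraph V} (hconn : G.Connected)
    (hK : ¬ ContainsInduced G K13) (hB : ¬ ContainsInduced G (Bgraph 2))
    (h6 : ContainsInduced G (SimpleGraph.pathGraph 6)) : MemFatFamily G 6 := by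
  obtain ⟨f⟩ := h6
  by_cases hc : ∃ m, 6 ≤ m ∧ ∃ P, CycN G P (m+1)
  · obtain ⟨m, hm, P, hP⟩ := hc
    exact ⟨m, hm, Or.inr (fatCycle_of hconn hK hB hm hP)⟩
  · have base : ∃ p, IP G p 6 := by
      refine ⟨fun k => if h : k < 6 then f ⟨k, h⟩ else f 0, ?_⟩
      intro i hi j hj
      simp only [hi, hj, dif_pos]
      refine ⟨fun e => by simpa using f.injective e, ?_⟩
      rw [f.map_adj_iff, SimpleGraph.pathGraph_adj]
    obtain ⟨l, hl, ⟨p, hp⟩, hmax⟩ : ∃ l, 6 ≤ l ∧ (∃ p, IP G p l) ∧ ¬ ∃ p, IP G p (l+1) := by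
      by_contra hcon
      push Not at hcon
      have all : ∀ l, 6 ≤ l → ∃ p, IP G p l := by
        intro l hl
        induction l, hl using Nat.le_induction with
        | base => exact base
        | succ l hl ih =>
          obtain ⟨p, hp⟩ := ih
          exact hcon l hl ⟨p, hp⟩
      obtain ⟨p, hp⟩ := all (Fintype.card V + 6) (by omega)
      have inj : Function.Injective (fun k : Fin (Fintype.card V + 6) => p k) := by
        intro i j e
        exact Fin.ext ((hp i i.2 j j.2).1 e)
      have := Fintype.card_le_of_injective _ inj
      simp at this
    exact ⟨l, hl, Or.inl (fatPath_of hconn hK hB hl hp hmax (fun ⟨q, hq⟩ => hc ⟨l, hl, q, hq⟩))⟩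

theorem embed6 {V : Type*} {G : SimpleGraph V} (x : Fin 6 → V) (hi : Function.Injective x)
    (h : ∀ i j : Fin 6, i ≠ j → (G.Adj (x i) (x j) ↔ (i:ℕ) + 1 = j ∨ (j:ℕ) + 1 = i)) :
    ContainsInduced G (SimpleGraph.pathGraph 6) := by
  refine ⟨⟨⟨x, hi⟩, ?_⟩⟩
  intro i j
  change G.Adj (x i) (x j) ↔ _
  rw [SimpleGraph.pathGraph_adj]
  by_cases e : i = j
  · subst e; simp
  · exact h i j e

theorem backward {V : Type*} {G : SimpleGraph V} (h : MemFatFamily G 6) :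
    ContainsInduced G (SimpleGraph.pathGraph 6) := by
  obtain ⟨l, hl, ⟨-, L, ⟨h1, h2, h3⟩, -⟩ | ⟨-, L, ⟨h1, h2, h3⟩, -⟩⟩ := h
  · choose x hx using h1
    have inj : Function.Injective x := by
      intro i j e
      by_contra hij
      exact Set.disjoint_left.1 (h2 i j hij) (hx i) (e ▸ hx j)
    have inj' : Function.Injective (Fin.castLE hl) := Fin.castLE_injective hl
    refine embed6 (fun i => x (Fin.castLE hl i)) (inj.comp inj') ?_
    intro i j hij
    rw [h3 _ _ _ _ (hx _) (hx _) (fun e => hij (inj' (inj e)))]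
    rw [Fin.ext_iff] at *
    simp only [Fin.val_castLE]
    omega
  · choose x hx using h1
    have inj : Function.Injective x := by
      intro i j e
      by_contra hij
      exact Set.disjoint_left.1 (h2 i j hij) (hx i) (e ▸ hx j)
    have hl' : 6 ≤ l + 1 := by omega
    have inj' : Function.Injective (Fin.castLE hl') := Fin.castLE_injective hl'
    refine embed6 (fun i => x (Fin.castLE hl' i)) (inj.comp inj') ?_
    intro i j hij
    rw [h3 _ _ _ _ (hx _) (hx _) (fun e => hij (inj' (inj e)))]
    rw [Fin.ext_iff] at *
    simp only [Fin.val_castLE]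
    rw [Nat.mod_eq_of_lt (by omega), Nat.mod_eq_of_lt (by omega)]
    omega

end FatAux

/-- **Theorem 3 (Statement 2).** Let `G` be a connected `{K_{1,3}, B_{1,2}}`-free graph.
Then `G` contains `P₆` as an induced subgraph iff `G` belongs to `𝒫(6)`. -/
theorem stmt2 {V : Type*} [Fintype V] (G : SimpleGraph V) (hconn : G.Connected)
    (hK13 : ¬ ContainsInduced G K13) (hB12 : ¬ ContainsInduced G (Bgraph 2)) :
    ContainsInduced G (SimpleGraph.pathGraph 6) ↔ MemFatFamily G 6 := by
  exact ⟨FatAux.forward hconn hK13 hB12, FatAux.backward⟩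
end

section
/- Let m ≥ 1 be an integer and let G be a connected graph that is {K_{1,3}, B_{1,m}}-free. Then G contains P_{max{3m, m+4}} as an induced subgraph if and only if G belongs to P(max{3m, m+4}). -/
open SimpleGraph

def IndPath {V : Type*} (G : SimpleGraph V) (f : ℕ → V) (l : ℕ) : Prop :=
  (∀ i < l, ∀ j < l, f i = f j → i = j) ∧
  (∀ i < l, ∀ j < l, (G.Adj (f i) (f j) ↔ i + 1 = j ∨ j + 1 = i))

lemma iff_of_eq_pt {A : ℕ → Prop} {P : Prop} {n : ℕ} (j : ℕ) (h : P → n = j) (hj : A j)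
    (h' : ¬ P → ¬ A n) : A n ↔ P :=
  ⟨fun ha => by_contra fun hp => h' hp ha, fun hp => (h hp).symm ▸ hj⟩

lemma mk_emb {V W : Type*} {G : SimpleGraph V} {H : SimpleGraph W} (f : W → V)
    (hf : ∀ x y, f x = f y → x = y) (ha : ∀ x y, G.Adj (f x) (f y) ↔ H.Adj x y) :
    ContainsInduced G H := ⟨⟨⟨f, fun x y h => hf x y h⟩, fun {x y} => ha x y⟩⟩

lemma no_claw {V : Type*} {G : SimpleGraph V} (h : ¬ ContainsInduced G K13)
    (a x y z : V) (hx : G.Adj a x) (hy : G.Adj a y) (hz : G.Adj a z)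
    (xy : x ≠ y) (xz : x ≠ z) (yz : y ≠ z)
    (hxy : ¬ G.Adj x y) (hxz : ¬ G.Adj x z) (hyz : ¬ G.Adj y z) : False := by
  apply h
  have h1 := hx.ne
  have h2 := hy.ne
  have h3 := hz.ne
  refine mk_emb ![a, x, y, z] ?_ ?_
  · intro i j hij
    fin_cases i <;> fin_cases j <;> simp_all
  · intro i j
    have hxy' : ¬ G.Adj y x := fun h => hxy h.symm
    have hxz' : ¬ G.Adj z x := fun h => hxz h.symm
    have hyz' : ¬ G.Adj z y := fun h => hyz h.symm
    fin_cases i <;> fin_cases j <;> simp_all [K13, graphOfList, G.adj_comm]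

lemma no_B {V : Type*} {G : SimpleGraph V} {m : ℕ} (h : ¬ ContainsInduced G (Bgraph m))
    (a c d : V) (g : ℕ → V) (hg : IndPath G g (m + 1))
    (hac : G.Adj a c) (had : G.Adj a d) (hcd : ¬ G.Adj c d)
    (ha : ∀ k < m + 1, (G.Adj a (g k) ↔ k = 0))
    (hc : ∀ k < m + 1, (G.Adj c (g k) ↔ k = 0))
    (hd : ∀ k < m + 1, ¬ G.Adj d (g k)) : False := by
  apply h
  obtain ⟨hi, hadj⟩ := hg
  have ac := hac.ne
  have ad := had.ne
  have cd : c ≠ d := by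
    rintro rfl
    exact hd 0 (by omega) ((hc 0 (by omega)).2 rfl)
  have ag : ∀ k < m + 1, a ≠ g k := by
    rintro k hk rfl
    exact hd k hk had.symm
  have cg : ∀ k < m + 1, c ≠ g k := by
    rintro k hk rfl
    have := (ha k hk).1 hac
    subst this
    have := (hc 0 hk).2 rfl
    exact this.ne rfl
  have dg : ∀ k < m + 1, d ≠ g k := by
    rintro k hk rfl
    have := (ha k hk).1 had
    subst this
    exact hcd ((hc 0 hk).2 rfl)
  have ha' : ∀ k < m + 1, (G.Adj (g k) a ↔ k = 0) := fun k hk => by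
    rw [G.adj_comm]; exact ha k hk
  have hc' : ∀ k < m + 1, (G.Adj (g k) c ↔ k = 0) := fun k hk => by
    rw [G.adj_comm]; exact hc k hk
  have hd' : ∀ k < m + 1, ¬ G.Adj (g k) d := fun k hk h => hd k hk h.symm
  have hcd' : ¬ G.Adj d c := fun h => hcd h.symm
  let e : ℕ → V := fun x =>
    if x = 0 then a else if x = 2 then c else if x = 3 then d else
      if x = 1 then g 0 else g (x - 3)
  have e0 : e 0 = a := rfl
  have e1 : e 1 = g 0 := rfl
  have e2 : e 2 = c := rfl
  have e3 : e 3 = d := rfl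
  have e4 : ∀ k, e (k + 4) = g (k + 1) := fun k => by simp [e]
  have key : ∀ x : ℕ, x = 0 ∨ x = 1 ∨ x = 2 ∨ x = 3 ∨ ∃ k, x = k + 4 := by
    intro x
    by_cases hx : 4 ≤ x
    · right; right; right; right; exact ⟨x - 4, by omega⟩
    · omega
  refine mk_emb (fun x => e x.val) ?_ ?_
  · rintro ⟨x, hx⟩ ⟨y, hy⟩ hxy
    simp only [Fin.mk.injEq] at hxy ⊢
    rcases key x with rfl | rfl | rfl | rfl | ⟨k, rfl⟩ <;>
    rcases key y with rfl | rfl | rfl | rfl | ⟨k', rfl⟩ <;>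
    simp only [e0, e1, e2, e3, e4] at hxy <;> grind
  · rintro ⟨x, hx⟩ ⟨y, hy⟩
    simp only [Bgraph, SimpleGraph.fromRel_adj, ne_eq, Fin.mk.injEq]
    have := had.symm
    have := hac.symm
    rcases key x with rfl | rfl | rfl | rfl | ⟨k, rfl⟩ <;>
    rcases key y with rfl | rfl | rfl | rfl | ⟨k', rfl⟩ <;>
    simp only [e0, e1, e2, e3, e4] <;> grind [SimpleGraph.irrefl]

def Allowed (A : ℕ → Prop) (l : ℕ) : Prop :=
  (∀ k < l, ¬ A k) ∨ (∀ k < l, (A k ↔ k = 0)) ∨ (∀ k < l, (A k ↔ k + 1 = l)) ∨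
  (∀ k < l, (A k ↔ k = 0 ∨ k + 1 = l)) ∨
  ∃ j < l, ∀ k < l, (A k ↔ k = j ∨ k + 1 = j ∨ j + 1 = k)

lemma allowed {V : Type*} {G : SimpleGraph V} {m : ℕ} (hm : 1 ≤ m)
    (hK : ¬ ContainsInduced G K13) (hB : ¬ ContainsInduced G (Bgraph m))
    (f : ℕ → V) (l : ℕ) (hl1 : 3 * m ≤ l) (hl2 : m + 4 ≤ l) (hf : IndPath G f l)
    (v : V) (hv : ∀ k < l, v ≠ f k) : Allowed (fun k => G.Adj v (f k)) l := by
  obtain ⟨hi, hadj⟩ := hf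
  obtain ⟨A, hA⟩ : ∃ A : ℕ → Prop, ∀ k, A k ↔ G.Adj v (f k) := ⟨_, fun k => Iff.rfl⟩
  have hA' : ∀ k, A k ↔ G.Adj (f k) v := fun k => by rw [hA, G.adj_comm]
  have hvv : ¬ G.Adj v v := G.irrefl
  have hne : ∀ i < l, ∀ j < l, i ≠ j → f i ≠ f j := fun i h j h' n e => n (hi i h j h' e)
  have C1 : ∀ i j k, i + 1 < j → j + 1 < k → k < l → A i → A j → A k → False := by
    intro i j k h1 h2 h3 a1 a2 a3
    refine no_claw hK v (f i) (f j) (f k) ((hA _).1 a1) ((hA _).1 a2) ((hA _).1 a3)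
      (hne _ (by omega) _ (by omega) (by omega)) (hne _ (by omega) _ (by omega) (by omega))
      (hne _ (by omega) _ (by omega) (by omega)) ?_ ?_ ?_ <;>
    rw [hadj _ (by omega) _ (by omega)] <;> omega
  have C2 : ∀ i, i + 2 < l → A (i + 1) → A i ∨ A (i + 2) := by
    intro i h1 a1
    by_contra hh
    push Not at hh
    refine no_claw hK (f (i+1)) (f i) (f (i+2)) v ?_ ?_ ((hA' _).1 a1)
      (hne _ (by omega) _ (by omega) (by omega)) (hv _ (by omega)).symm
      (hv _ (by omega)).symm ?_ ?_ ?_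
    · rw [hadj _ (by omega) _ (by omega)]; omega
    · rw [hadj _ (by omega) _ (by omega)]; omega
    · rw [hadj _ (by omega) _ (by omega)]; omega
    · rw [← hA']; exact hh.1
    · rw [← hA']; exact hh.2
  have down : ∀ i, m ≤ i → i < l → IndPath G (fun k => f (i - k)) (m + 1) := by
    intro i h1 h2
    refine ⟨fun a ha b hb e => ?_, fun a ha b hb => ?_⟩
    · have := hi _ (by omega) _ (by omega) e
      omega
    · rw [hadj _ (by omega) _ (by omega)]; omega
  have up : ∀ i, i + m < l → IndPath G (fun k => f (i + k)) (m + 1) := by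
    intro i h2
    refine ⟨fun a ha b hb e => ?_, fun a ha b hb => ?_⟩
    · have := hi _ (by omega) _ (by omega) e
      omega
    · rw [hadj _ (by omega) _ (by omega)]; omega
  have B1 : ∀ i, m ≤ i → i + 2 < l → A i → A (i+1) → ¬ A (i+2) →
      (∀ k, i ≤ k + m → k < i → ¬ A k) → False := by
    intro i h1 h2 a1 a2 a3 a4
    refine no_B hB (f (i+1)) v (f (i+2)) _ (down i h1 (by omega)) ((hA' _).1 a2)
      ((hadj _ (by omega) _ (by omega)).2 (by omega)) (by rwa [← hA]) ?_ ?_ ?_ <;> intro k hk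
    · rw [hadj _ (by omega) _ (by omega)]; omega
    · rw [← hA]; exact iff_of_eq_pt _ (by omega) a1 (fun e => a4 _ (by omega) (by omega))
    · rw [hadj _ (by omega) _ (by omega)]; omega
  have B3 : ∀ i j, m ≤ i → (i + 2 < j ∨ j + m + 1 < i) → i + 1 < l → j < l → A i → A (i+1) → A j →
      (∀ k, i ≤ k + m → k < i → ¬ A k) → False := by
    intro i j h1 h2 h2b h3 a1 a2 a3 a4
    refine no_B hB v (f (i+1)) (f j) _ (down i h1 (by omega)) ((hA _).1 a2)
      ((hA _).1 a3) (by rw [hadj _ (by omega) _ (by omega)]; omega) ?_ ?_ ?_ <;> intro k hk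
    · rw [← hA]; exact iff_of_eq_pt _ (by omega) a1 (fun e => a4 _ (by omega) (by omega))
    · rw [hadj _ (by omega) _ (by omega)]; omega
    · rw [hadj _ (by omega) _ (by omega)]; omega
  have B2 : ∀ i, i + 2 + m < l → A (i+1) → A (i+2) → ¬ A i →
      (∀ k, i + 2 < k → k ≤ i + 2 + m → ¬ A k) → False := by
    intro i h2 a1 a2 a3 a4
    refine no_B hB (f (i+1)) v (f i) _ (up (i+2) h2) ((hA' _).1 a1)
      ((hadj _ (by omega) _ (by omega)).2 (by omega)) (by rwa [← hA]) ?_ ?_ ?_ <;> intro k hk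
    · rw [hadj _ (by omega) _ (by omega)]; omega
    · rw [← hA]; exact iff_of_eq_pt _ (by omega) a2 (fun e => a4 _ (by omega) (by omega))
    · rw [hadj _ (by omega) _ (by omega)]; omega
  have B3' : ∀ i j, i + 1 + m < l → j < l → (j + 1 < i ∨ i + 2 + m < j) →
      A i → A (i+1) → A j →
      (∀ k, i + 1 < k → k ≤ i + 1 + m → ¬ A k) → False := by
    intro i j h1 h2 h3 a1 a2 a3 a4
    refine no_B hB v (f i) (f j) _ (up (i+1) h1) ((hA _).1 a1)
      ((hA _).1 a3) (by rw [hadj _ (by omega) _ (by omega)]; omega) ?_ ?_ ?_ <;> intro k hk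
    · rw [← hA]; exact iff_of_eq_pt _ (by omega) a2 (fun e => a4 _ (by omega) (by omega))
    · rw [hadj _ (by omega) _ (by omega)]; omega
    · rw [hadj _ (by omega) _ (by omega)]; omega
  have vdown : ∀ j, m ≤ j + 1 → j < l → A j → (∀ k < j, ¬ A k) →
      IndPath G (fun k => if k = 0 then v else f (j + 1 - k)) (m + 1) := by
    intro j h1 h2 a1 a2
    refine ⟨fun a ha b hb e => ?_, fun a ha b hb => ?_⟩
    · dsimp only at e
      split_ifs at e with p q q
      · omega
      · exact absurd e (hv _ (by omega))
      · exact absurd e.symm (hv _ (by omega))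
      · have := hi _ (by omega) _ (by omega) e
        omega
    · dsimp only
      split_ifs with p q q
      · simp; omega
      · rw [← hA]; exact iff_of_eq_pt _ (by omega) a1 (fun e => a2 _ (by omega))
      · rw [← hA']; exact iff_of_eq_pt _ (by omega) a1 (fun e => a2 _ (by omega))
      · rw [hadj _ (by omega) _ (by omega)]; omega
  have vup : ∀ j, j + m ≤ l → A (j) → (∀ k, j < k → k < l → ¬ A k) →
      IndPath G (fun k => if k = 0 then v else f (j + k - 1)) (m + 1) := by
    intro j h1 a1 a2
    refine ⟨fun a ha b hb e => ?_, fun a ha b hb => ?_⟩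
    · dsimp only at e
      split_ifs at e with p q q
      · omega
      · exact absurd e (hv _ (by omega))
      · exact absurd e.symm (hv _ (by omega))
      · have := hi _ (by omega) _ (by omega) e
        omega
    · dsimp only
      split_ifs with p q q
      · simp; omega
      · rw [← hA]; exact iff_of_eq_pt _ (by omega) a1 (fun e => a2 _ (by omega) (by omega))
      · rw [← hA']; exact iff_of_eq_pt _ (by omega) a1 (fun e => a2 _ (by omega) (by omega))
      · rw [hadj _ (by omega) _ (by omega)]; omega
  -- pendant i+2 at i+1, path from v
  have B4 : ∀ i j, i + 3 < j → j + m ≤ l → A i → A (i+1) → ¬ A (i+2) → A j →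
      (∀ k, j < k → k < l → ¬ A k) → False := by
    intro i j h1 h2 a1 a2 a3 a4 a5
    refine no_B hB (f (i+1)) (f i) (f (i+2)) _ (vup j h2 a4 a5)
      ((hadj _ (by omega) _ (by omega)).2 (by omega))
      ((hadj _ (by omega) _ (by omega)).2 (by omega))
      (by rw [hadj _ (by omega) _ (by omega)]; omega) ?_ ?_ ?_ <;> intro k hk <;>
      split_ifs with hk0
    · rw [← hA']; tauto
    · rw [hadj _ (by omega) _ (by omega)]; omega
    · rw [← hA']; tauto
    · rw [hadj _ (by omega) _ (by omega)]; omega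
    · rw [← hA']; tauto
    · rw [hadj _ (by omega) _ (by omega)]; omega
  have B5 : ∀ i j, j + 1 < i → m ≤ j + 1 → i + 2 < l → A i → A (i+1) → ¬ A (i+2) → A j →
      (∀ k < j, ¬ A k) → False := by
    intro i j h1 h2 h3 a1 a2 a3 a4 a5
    refine no_B hB (f (i+1)) (f i) (f (i+2)) _ (vdown j h2 (by omega) a4 a5)
      ((hadj _ (by omega) _ (by omega)).2 (by omega))
      ((hadj _ (by omega) _ (by omega)).2 (by omega))
      (by rw [hadj _ (by omega) _ (by omega)]; omega) ?_ ?_ ?_ <;> intro k hk <;>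
      split_ifs with hk0
    · rw [← hA']; tauto
    · rw [hadj _ (by omega) _ (by omega)]; omega
    · rw [← hA']; tauto
    · rw [hadj _ (by omega) _ (by omega)]; omega
    · rw [← hA']; tauto
    · rw [hadj _ (by omega) _ (by omega)]; omega
  -- pendant i-1 at i (shifted), path from v downwards
  have B4' : ∀ i j, j + 1 < i → m ≤ j + 1 → i + 2 < l → A (i+1) → A (i+2) → ¬ A i → A j →
      (∀ k < j, ¬ A k) → False := by
    intro i j h1 h2 h3 a1 a2 a3 a4 a5
    refine no_B hB (f (i+1)) (f (i+2)) (f i) _ (vdown j h2 (by omega) a4 a5)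
      ((hadj _ (by omega) _ (by omega)).2 (by omega))
      ((hadj _ (by omega) _ (by omega)).2 (by omega))
      (by rw [hadj _ (by omega) _ (by omega)]; omega) ?_ ?_ ?_ <;> intro k hk <;>
      split_ifs with hk0
    · rw [← hA']; tauto
    · rw [hadj _ (by omega) _ (by omega)]; omega
    · rw [← hA']; tauto
    · rw [hadj _ (by omega) _ (by omega)]; omega
    · rw [← hA']; tauto
    · rw [hadj _ (by omega) _ (by omega)]; omega
  have hfun : (fun k => G.Adj v (f k)) = A := by
    funext k; exact propext (hA k).symm
  rw [hfun]
  clear hfun vup vdown up down hne hA hA' hvv hadj hi hv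
  by_cases hex : ∃ k, k < l ∧ A k
  swap
  · left; intro k hk h; exact hex ⟨k, hk, h⟩
  obtain ⟨a, ⟨hal, hAa⟩, hmin⟩ : ∃ a, (a < l ∧ A a) ∧ ∀ k < a, ¬ (k < l ∧ A k) := by
    classical
    exact ⟨Nat.find hex, Nat.find_spec hex, fun k hk => Nat.find_min hex hk⟩
  replace hmin : ∀ k < a, ¬ A k := fun k hk h => hmin k hk ⟨by omega, h⟩
  obtain ⟨b, ⟨hbl, hAb⟩, hmax⟩ : ∃ b, (b < l ∧ A b) ∧ ∀ k, b < k → k < l → ¬ A k := by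
    classical
    have hex' : ∃ d, d < l ∧ A (l - 1 - d) := ⟨l - 1 - a, by omega, by
      rwa [show l - 1 - (l - 1 - a) = a by omega]⟩
    refine ⟨l - 1 - Nat.find hex', ⟨by omega, (Nat.find_spec hex').2⟩, fun k h1 h2 h3 => ?_⟩
    have := Nat.find_spec hex'
    refine Nat.find_min hex' (m := l - 1 - k) (by omega) ⟨by omega, ?_⟩
    rwa [show l - 1 - (l - 1 - k) = k by omega]
  have hab : a ≤ b := by
    by_contra h
    exact hmin b (by omega) hAb
  have hmid : ∀ k, a + 1 < k → k + 1 < b → ¬ A k := fun k h1 h2 h => C1 a k b h1 h2 hbl hAa h hAb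
  -- ends
  have Ea : a ≠ 0 → a + 1 < l → A (a + 1) := by
    intro h h'
    have := C2 (a - 1) (by omega) (by rwa [show a - 1 + 1 = a by omega])
    rw [show a - 1 + 2 = a + 1 by omega] at this
    exact this.resolve_left (hmin _ (by omega))
  have Eb : b + 1 ≠ l → 0 < b → A (b - 1) := by
    intro h h'
    have := C2 (b - 1) (by omega) (by rwa [show b - 1 + 1 = b by omega])
    rw [show b - 1 + 2 = b + 1 by omega] at this
    exact this.resolve_right (hmax _ (by omega) (by omega))
  obtain ⟨d, rfl⟩ := Nat.exists_eq_add_of_le hab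
  rcases (by omega : d = 0 ∨ d = 1 ∨ d = 2 ∨ d = 3 ∨ 4 ≤ d) with rfl | rfl | rfl | rfl | hd
  · have h : a = 0 ∨ a + 1 = l := by
      by_contra hh
      exact hmax _ (by omega) (by omega) (Ea (by omega) (by omega))
    rcases h with h | h
    · right; left
      intro k hk
      exact iff_of_eq_pt a (by omega) hAa (fun e => hmax _ (by omega) hk)
    · right; right; left
      intro k hk
      exact iff_of_eq_pt a (by omega) hAa (fun e => hmin _ (by omega))
  · have h : a = 0 ∨ a + 2 = l := by
      by_contra hh
      have n1 : ¬ m ≤ a := fun h => B1 a h (by omega) hAa hAb (hmax _ (by omega) (by omega)) (fun k _ h => hmin k h)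
      refine B2 (a - 1) (by omega) ?_ ?_ (hmin _ (by omega)) (fun k h1 h2 => hmax k (by omega) (by omega))
      · rwa [show a - 1 + 1 = a by omega]
      · rwa [show a - 1 + 2 = a + 1 by omega]
    right; right; right; right
    have hiff : ∀ k < l, (A k ↔ k = a ∨ k = a + 1) := by
      intro k hk
      constructor
      · intro h
        by_contra hh
        rcases (by omega : k < a ∨ a + 1 < k) with h' | h'
        · exact hmin _ h' h
        · exact hmax _ h' hk h
      · rintro (rfl | rfl) <;> assumption
    rcases h with h | h
    · refine ⟨0, by omega, fun k hk => ?_⟩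
      rw [hiff k hk]; omega
    · refine ⟨a + 1, by omega, fun k hk => ?_⟩
      rw [hiff k hk]; omega
  · have h1 : A (a + 1) := by
      by_cases h : a = 0
      · have := Eb (by omega) (by omega)
        rwa [show a + 2 - 1 = a + 1 by omega] at this
      · exact Ea h (by omega)
    right; right; right; right
    refine ⟨a + 1, by omega, fun k hk => ?_⟩
    constructor
    · intro h
      by_contra hh
      rcases (by omega : k < a ∨ a + 2 < k) with h' | h'
      · exact hmin _ h' h
      · exact hmax _ h' hk h
    · intro h
      rcases (by omega : k = a ∨ k = a + 1 ∨ k = a + 2) with rfl | rfl | rfl <;> assumption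
  · exfalso
    by_cases h1 : A (a + 1) <;> by_cases h2 : A (a + 2)
    · have n1 : ¬ m ≤ a := fun h => B3 a (a + 3) h (by omega) (by omega) hbl hAa h1 hAb (fun k _ h => hmin k h)
      have n2 : ¬ (a + 3 + m < l) := fun h => B3' (a + 2) a (by omega) (by omega) (by omega)
        h2 hAb hAa (fun k h1 h2 => hmax k (by omega) (by omega))
      have n3 : ¬ m ≤ a + 1 := fun h => B5 (a + 2) a (by omega) h (by omega) h2 hAb
        (hmax _ (by omega) (by omega)) hAa hmin
      omega
    · have e : a + 4 = l := by
        by_contra hh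
        exact h2 (Eb (by omega) (by omega))
      exact B3 a (a + 3) (by omega) (by omega) (by omega) hbl hAa h1 hAb (fun k _ h => hmin k h)
    · have e : a = 0 := by
        by_contra hh
        exact h1 (Ea (by omega) (by omega))
      exact B3' (a + 2) a (by omega) (by omega) (by omega)
        h2 hAb hAa (fun k h1 h2 => hmax k (by omega) (by omega))
    · have e : a = 0 := by
        by_contra hh
        exact h1 (Ea (by omega) (by omega))
      exact h2 (Eb (by omega) (by omega))
  · by_cases h1 : A (a + 1) <;> by_cases h2 : A (a + d - 1)
    · exfalso
      have e2 : A (a + d - 2 + 1) := by rwa [show a + d - 2 + 1 = a + d - 1 by omega]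
      have e3 : A (a + d - 2 + 2) := by rwa [show a + d - 2 + 2 = a + d by omega]
      have n1 : ¬ (a + d + m ≤ l) := fun h => B4 a (a + d) (by omega) h hAa h1
        (hmid _ (by omega) (by omega)) hAb hmax
      have n2 : ¬ (m ≤ a + 1) := fun h => B4' (a + d - 2) a (by omega) h (by omega) e2 e3
        (hmid _ (by omega) (by omega)) hAa hmin
      have n3 : ¬ (a + 1 + m < a + d - 1) := fun h => B3' a (a + d) (by omega) (by omega) (by omega)
        hAa h1 hAb (fun k h1 h2 => hmid k (by omega) (by omega))
      omega
    · exfalso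
      have e : a + d + 1 = l := by
        by_contra hh
        exact h2 (Eb (by omega) (by omega))
      have hmid' : ∀ k, a + 1 < k → k < a + d → ¬ A k := by
        intro k h3 h4
        by_cases h5 : k = a + d - 1
        · rwa [h5]
        · exact hmid k h3 (by omega)
      have n1 : ¬ m ≤ a := fun h => B3 a (a + d) h (by omega) (by omega) hbl hAa h1 hAb (fun k _ h => hmin k h)
      have n3 : ¬ (a + 2 + m < a + d) := fun h => B3' a (a + d) (by omega) (by omega) (by omega)
        hAa h1 hAb (fun k h1 h2 => hmid' k (by omega) (by omega))
      have n2 : a ≠ 0 → ¬ (a + 1 + m < a + d) := fun h0 h => B2 (a - 1) (by omega)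
        (by rwa [show a - 1 + 1 = a by omega]) (by rwa [show a - 1 + 2 = a + 1 by omega])
        (hmin _ (by omega)) (fun k h1 h2 => hmid' k (by omega) (by omega))
      omega
    · exfalso
      have e : a = 0 := by
        by_contra hh
        exact h1 (Ea (by omega) (by omega))
      have hmid' : ∀ k, a < k → k + 1 < a + d → ¬ A k := by
        intro k h3 h4
        by_cases h5 : k = a + 1
        · rwa [h5]
        · exact hmid k (by omega) h4
      have e3 : A (a + d - 1 + 1) := by rwa [show a + d - 1 + 1 = a + d by omega]
      have n1 : ¬ (a + d + m < l) := fun h => B3' (a + d - 1) a (by omega) (by omega) (by omega)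
        h2 e3 hAa (fun k h1 h2 => hmax k (by omega) (by omega))
      have n2 : ¬ (a + m + 1 < a + d - 1) := fun h => B3 (a + d - 1) a (by omega) (by omega)
        (by omega) hal h2 e3 hAa (fun k h1 h2 => hmid' k (by omega) (by omega))
      have n3 : a + d + 1 < l → ¬ (a + m < a + d - 1) := fun h0 h => B1 (a + d - 1) (by omega)
        (by omega) h2 e3 (hmax _ (by omega) (by omega)) (fun k h1 h2 => hmid' k (by omega) (by omega))
      omega
    · have ea : a = 0 := by
        by_contra hh
        exact h1 (Ea (by omega) (by omega))
      have eb : a + d + 1 = l := by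
        by_contra hh
        exact h2 (Eb (by omega) (by omega))
      right; right; right; left
      intro k hk
      constructor
      · intro h
        by_contra hh
        by_cases h5 : k = a + 1
        · exact h1 (h5 ▸ h)
        · by_cases h6 : k = a + d - 1
          · exact h2 (h6 ▸ h)
          · exact hmid k (by omega) (by omega) h
      · intro h
        rcases (by omega : k = a ∨ k = a + d) with rfl | rfl <;> assumption

/-- closed neighbourhood relation -/
def Cl {V : Type*} (G : SimpleGraph V) (u v : V) : Prop := u = v ∨ G.Adj u v

lemma abstract_fat {V I : Type*} {G : SimpleGraph V} {H : SimpleGraph I}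
    (hconn : G.Connected)
    (hgood : ∀ g : H ↪g G, ∀ v, (∃ k, Cl G v (g k)) → ∃ j, ∀ k, (Cl G v (g k) ↔ Cl H j k))
    (P1 : ∀ i : I, ∃ j, H.Adj i j)
    (P2 : ∀ i j : I, (∀ k, Cl H i k ↔ Cl H j k) → i = j)
    (P3 : ∀ i j i' j' : I, (∀ k, k ≠ i → (Cl H j' k ↔ Cl H j k)) →
      (∀ k, k ≠ j → (Cl H i' k ↔ Cl H i k)) → (Cl H j' i ↔ Cl H i' j) → (Cl H j' i ↔ Cl H j i))
    (f : H ↪g G) [hI : Nonempty I] :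
    ∃ L : I → Set V, (∀ i, (L i).Nonempty) ∧ (∀ i j, i ≠ j → Disjoint (L i) (L j)) ∧
      (∀ i j u v, u ∈ L i → v ∈ L j → u ≠ v → (G.Adj u v ↔ Cl H i j)) ∧
      ∀ v, ∃ i, v ∈ L i := by
  classical
  have Hs : ∀ i j, Cl H i j → Cl H j i := by
    rintro i j (rfl | h)
    · exact Or.inl rfl
    · exact Or.inr h.symm
  have Gs : ∀ i j, Cl G i j → Cl G j i := by
    rintro i j (rfl | h)
    · exact Or.inl rfl
    · exact Or.inr h.symm
  have hff : ∀ i k, Cl G (f i) (f k) ↔ Cl H i k := by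
    intro i k
    simp [Cl]
  -- replacement
  have rep : ∀ i u, (∀ k, Cl G u (f k) ↔ Cl H i k) →
      ∃ g : H ↪g G, g i = u ∧ ∀ k, k ≠ i → g k = f k := by
    intro i u hu
    have hne : ∀ k, k ≠ i → u ≠ f k ∧ (G.Adj u (f k) ↔ H.Adj i k) := by
      intro k hk
      have hn : u ≠ f k := by
        rintro rfl
        exact hk (P2 _ _ fun k' => by rw [← hu, hff])
      refine ⟨hn, ?_⟩
      have := hu k
      simp only [Cl, hn, hk.symm, false_or] at this
      exact this
    refine ⟨⟨⟨Function.update f i u, ?_⟩, ?_⟩, ?_, ?_⟩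
    · intro x y hxy
      by_cases hx : x = i <;> by_cases hy : y = i
      · rw [hx, hy]
      · subst hx
        rw [Function.update_self, Function.update_of_ne hy] at hxy
        exact absurd hxy (hne y hy).1
      · subst hy
        rw [Function.update_self, Function.update_of_ne hx] at hxy
        exact absurd hxy.symm (hne x hx).1
      · rw [Function.update_of_ne hx, Function.update_of_ne hy] at hxy
        exact f.injective hxy
    · intro x y
      change G.Adj (Function.update f i u x) (Function.update f i u y) ↔ _
      by_cases hx : x = i <;> by_cases hy : y = i
      · subst hx; subst hy; simp
      · subst hx
        rw [Function.update_self, Function.update_of_ne hy]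
        exact (hne y hy).2
      · subst hy
        rw [Function.update_self, Function.update_of_ne hx, G.adj_comm, H.adj_comm]
        exact (hne x hx).2
      · rw [Function.update_of_ne hx, Function.update_of_ne hy]
        exact f.map_adj_iff
    · change Function.update f i u i = u
      simp
    · intro k hk
      change Function.update f i u k = f k
      simp [hk]
  have adj1 : ∀ i j u v, (∀ k, Cl G u (f k) ↔ Cl H i k) → (∀ k, Cl G v (f k) ↔ Cl H j k) →
      ∃ j', (∀ k, k ≠ i → (Cl H j' k ↔ Cl H j k)) ∧ (Cl H j' i ↔ Cl G u v) := by
    intro i j u v hu hv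
    obtain ⟨g, gi, gk⟩ := rep i u hu
    have : ∃ k, Cl G v (g k) := by
      by_cases hji : j = i
      · obtain ⟨k, hk⟩ := P1 j
        refine ⟨k, ?_⟩
        rw [gk k (by rw [← hji]; exact hk.ne'), hv]
        exact Or.inr hk
      · refine ⟨j, ?_⟩
        rw [gk j hji, hv]
        exact Or.inl rfl
    obtain ⟨j', hj'⟩ := hgood g v this
    refine ⟨j', fun k hk => ?_, ?_⟩
    · rw [← hj', gk k hk, hv]
    · rw [← hj', gi]
      exact ⟨Gs _ _, Gs _ _⟩
  refine ⟨fun i => {v | ∀ k, Cl G v (f k) ↔ Cl H i k}, fun i => ⟨f i, hff i⟩, ?_, ?_, ?_⟩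
  · intro i j hij
    rw [Set.disjoint_left]
    intro v h1 h2
    exact hij (P2 _ _ fun k => by rw [← h1, ← h2])
  · intro i j u v hu hv huv
    obtain ⟨j', h1, h2⟩ := adj1 i j u v hu hv
    obtain ⟨i', h3, h4⟩ := adj1 j i v u hv hu
    have h5 := P3 i j i' j' h1 h3 (by rw [h2, h4]; exact ⟨Gs _ _, Gs _ _⟩)
    rw [h2] at h5
    have : G.Adj u v ↔ Cl G u v := by simp [Cl, huv]
    rw [this, h5]
    exact ⟨Hs _ _, Hs _ _⟩
  · -- cover
    have step : ∀ u w, G.Adj u w → (∃ i, ∀ k, Cl G u (f k) ↔ Cl H i k) →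
        (∃ i, ∀ k, Cl G w (f k) ↔ Cl H i k) := by
      rintro u w huw ⟨i, hu⟩
      apply hgood
      by_contra hno
      push Not at hno
      obtain ⟨g, gi, gk⟩ := rep i u hu
      obtain ⟨j, hj⟩ := hgood g w ⟨i, Or.inr (by rw [gi]; exact huw.symm)⟩
      have hall : ∀ k, k ≠ i → ¬ Cl H j k := by
        intro k hk
        rw [← hj, gk k hk]
        exact hno k
      obtain ⟨k, hk⟩ := P1 j
      by_cases h : k = i
      · subst h
        exact hall j hk.ne (Or.inl rfl)
      · exact hall k h (Or.inr hk)
    have walk : ∀ u v, G.Walk u v → (∃ i, ∀ k, Cl G u (f k) ↔ Cl H i k) →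
        (∃ i, ∀ k, Cl G v (f k) ↔ Cl H i k) := by
      intro u v p
      induction p with
      | nil => exact id
      | cons h p ih => exact fun hh => ih (step _ _ h hh)
    intro v
    obtain ⟨i0⟩ := hI
    obtain ⟨p⟩ := hconn.preconnected (f i0) v
    exact walk _ _ p ⟨i0, hff i0⟩

lemma allowed_ball {A : ℕ → Prop} {l : ℕ} (h : Allowed A l) (p : ℕ) (h0 : 0 < p) (h1 : p + 1 < l)
    (hp : A p) : ∃ j < l, ∀ k < l, (A k ↔ k = j ∨ k + 1 = j ∨ j + 1 = k) := by
  rcases h with h | h | h | h | h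
  · exact absurd hp (h p (by omega))
  · have := (h p (by omega)).1 hp; omega
  · have := (h p (by omega)).1 hp; omega
  · have := (h p (by omega)).1 hp; omega
  · exact h

def CycG (l : ℕ) : SimpleGraph (Fin (l + 1)) where
  Adj i j := i ≠ j ∧ (i.val + 1 = j.val ∨ j.val + 1 = i.val ∨ (i.val = l ∧ j.val = 0) ∨
    (j.val = l ∧ i.val = 0))
  symm := ⟨by intro i j h; exact ⟨h.1.symm, by tauto⟩⟩
  loopless := ⟨fun i h => h.1 rfl⟩

lemma cl_path {l : ℕ} (i j : Fin l) : Cl (SimpleGraph.pathGraph l) i j ↔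
    (i.val = j.val ∨ i.val + 1 = j.val ∨ j.val + 1 = i.val) := by
  simp only [Cl, SimpleGraph.pathGraph_adj, Fin.ext_iff]

lemma cl_cyc {l : ℕ} (i j : Fin (l + 1)) : Cl (CycG l) i j ↔
    (i.val = j.val ∨ i.val + 1 = j.val ∨ j.val + 1 = i.val ∨ (i.val = l ∧ j.val = 0) ∨
    (j.val = l ∧ i.val = 0)) := by
  simp only [Cl, CycG, Fin.ext_iff, ne_eq]
  tauto

lemma path_aux {l : ℕ} (hl : 5 ≤ l) (i j j' : ℕ) (hj : j < l) (hj' : j' < l)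
    (h : ∀ k < l, k ≠ i → ((j' = k ∨ j' + 1 = k ∨ k + 1 = j') ↔ (j = k ∨ j + 1 = k ∨ k + 1 = j))) :
    j' = j ∨ (j + j' = 1 ∧ i = 2) ∨ (j + j' + 3 = 2 * l ∧ i + 3 = l) := by
  by_contra hh
  have h1 := h j hj
  have h2 := h j' hj'
  have h3 := h (j + 1)
  have h4 := h (j' + 1)
  have h5 := h (j - 1) (by omega)
  have h6 := h (j' - 1) (by omega)
  clear h
  rcases (by omega : j < j' ∨ j' < j) with h | h
  · omega
  · omega

lemma path_P3 {l : ℕ} (hl : 5 ≤ l) (i j i' j' : Fin l)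
    (h1 : ∀ k, k ≠ i → (Cl (SimpleGraph.pathGraph l) j' k ↔ Cl (SimpleGraph.pathGraph l) j k))
    (h2 : ∀ k, k ≠ j → (Cl (SimpleGraph.pathGraph l) i' k ↔ Cl (SimpleGraph.pathGraph l) i k))
    (h3 : Cl (SimpleGraph.pathGraph l) j' i ↔ Cl (SimpleGraph.pathGraph l) i' j) :
    (Cl (SimpleGraph.pathGraph l) j' i ↔ Cl (SimpleGraph.pathGraph l) j i) := by
  simp only [cl_path] at *
  have a1 := path_aux hl i j j' j.2 j'.2 (fun k hk hki => h1 ⟨k, hk⟩ (by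
    intro h; apply hki; rw [← h]))
  have a2 := path_aux hl j i i' i.2 i'.2 (fun k hk hki => h2 ⟨k, hk⟩ (by
    intro h; apply hki; rw [← h]))
  have := i.2
  have := j.2
  omega

lemma cyc_aux {l : ℕ} (hl : 5 ≤ l) (i j j' : ℕ) (hj : j < l + 1) (hj' : j' < l + 1)
    (h : ∀ k < l + 1, k ≠ i → ((j' = k ∨ j' + 1 = k ∨ k + 1 = j' ∨ (j' = l ∧ k = 0) ∨ (k = l ∧ j' = 0))
      ↔ (j = k ∨ j + 1 = k ∨ k + 1 = j ∨ (j = l ∧ k = 0) ∨ (k = l ∧ j = 0)))) :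
    j' = j := by
  by_contra hh
  have two : ∀ x y, x < l + 1 → y < l + 1 → x ≠ y →
      ((j' = x ∨ j' + 1 = x ∨ x + 1 = j' ∨ (j' = l ∧ x = 0) ∨ (x = l ∧ j' = 0)) →
      ¬ (j = x ∨ j + 1 = x ∨ x + 1 = j ∨ (j = l ∧ x = 0) ∨ (x = l ∧ j = 0))) →
      ((j = y ∨ j + 1 = y ∨ y + 1 = j ∨ (j = l ∧ y = 0) ∨ (y = l ∧ j = 0)) →
      ¬ (j' = y ∨ j' + 1 = y ∨ y + 1 = j' ∨ (j' = l ∧ y = 0) ∨ (y = l ∧ j' = 0))) →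
      (j' = x ∨ j' + 1 = x ∨ x + 1 = j' ∨ (j' = l ∧ x = 0) ∨ (x = l ∧ j' = 0)) →
      (j = y ∨ j + 1 = y ∨ y + 1 = j ∨ (j = l ∧ y = 0) ∨ (y = l ∧ j = 0)) → False := by
    intro x y hx hy hxy a b c d
    by_cases hxi : x = i
    · exact b d ((h y hy (by omega)).2 d)
    · exact a c ((h x hx hxi).1 c)
  clear h
  by_cases hR : j = j' ∨ j + 1 = j' ∨ j' + 1 = j ∨ (j = l ∧ j' = 0) ∨ (j' = l ∧ j = 0)
  · rcases hR with hR | hR | hR | ⟨hR, hR'⟩ | ⟨hR, hR'⟩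
    · omega
    · obtain ⟨x, hx⟩ : ∃ x, (j' = l ∧ x = 0) ∨ (j' < l ∧ x = j' + 1) := by
        by_cases e : j' = l
        · exact ⟨0, by omega⟩
        · exact ⟨j' + 1, by omega⟩
      obtain ⟨y, hy⟩ : ∃ y, (j = 0 ∧ y = l) ∨ (0 < j ∧ y + 1 = j) := by
        by_cases e : j = 0
        · exact ⟨l, by omega⟩
        · exact ⟨j - 1, by omega⟩
      clear hh
      apply two x y <;> omega
    · obtain ⟨x, hx⟩ : ∃ x, (j = l ∧ x = 0) ∨ (j < l ∧ x = j + 1) := by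
        by_cases e : j = l
        · exact ⟨0, by omega⟩
        · exact ⟨j + 1, by omega⟩
      obtain ⟨y, hy⟩ : ∃ y, (j' = 0 ∧ y = l) ∨ (0 < j' ∧ y + 1 = j') := by
        by_cases e : j' = 0
        · exact ⟨l, by omega⟩
        · exact ⟨j' - 1, by omega⟩
      clear hh
      apply two y x <;> omega
    · apply two 1 (l - 1) <;> omega
    · apply two (l - 1) 1 <;> omega
  · apply two j' j <;> omega

lemma cyc_P3' {l : ℕ} (hl : 5 ≤ l) (i j j' : Fin (l + 1))
    (h1 : ∀ k, k ≠ i → (Cl (CycG l) j' k ↔ Cl (CycG l) j k)) : j' = j := by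
  simp only [cl_cyc] at *
  exact Fin.ext (cyc_aux hl i j j' j.2 j'.2 (fun k hk hki => h1 ⟨k, hk⟩ (by
    intro h; apply hki; rw [← h])))

lemma cyc_good {V : Type*} {G : SimpleGraph V} {l : ℕ} (hl : 5 ≤ l)
    (hall : ∀ (f : ℕ → V), IndPath G f l → ∀ v, (∀ k < l, v ≠ f k) →
      Allowed (fun k => G.Adj v (f k)) l)
    (g : CycG l ↪g G) (v : V) (hv : ∃ k, Cl G v (g k)) :
    ∃ j, ∀ k, (Cl G v (g k) ↔ Cl (CycG l) j k) := by
  by_cases hon : ∃ j, v = g j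
  · obtain ⟨j, rfl⟩ := hon
    exact ⟨j, fun k => by simp [Cl]⟩
  push Not at hon
  have hcl : ∀ k, Cl G v (g k) ↔ G.Adj v (g k) := fun k => by simp [Cl, hon k]
  simp only [hcl] at hv ⊢
  let gg : ℕ → V := fun k => if h : k < l + 1 then g ⟨k, h⟩ else v
  have hgg : ∀ k (h : k < l + 1), gg k = g ⟨k, h⟩ := fun k h => dif_pos h
  let idx : ℕ → ℕ → ℕ := fun r k => if r + k < l + 1 then r + k else r + k - (l + 1)
  have hidx : ∀ r k, r ≤ l → k ≤ l → idx r k < l + 1 ∧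
      ((idx r k = r + k) ∨ (idx r k + l + 1 = r + k)) := by
    intro r k h1 h2
    simp only [idx]; split_ifs <;> omega
  let A : ℕ → Prop := fun k => G.Adj v (gg k)
  have key : ∀ r ≤ l, ∀ p, 0 < p → p + 1 < l → A (idx r p) →
      ∃ j < l, ∀ k < l, (A (idx r k) ↔ k = j ∨ k + 1 = j ∨ j + 1 = k) := by
    intro r hr p h0 h1 hp
    refine allowed_ball (A := fun k => A (idx r k)) (hall (fun k => gg (idx r k)) ?_ v ?_) p h0 h1 hp
    · constructor
      · intro i hi j hj e
        have hi' := hidx r i hr (by omega)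
        have hj' := hidx r j hr (by omega)
        dsimp only at e
        rw [hgg _ hi'.1, hgg _ hj'.1] at e
        have := g.injective e
        rw [Fin.mk.injEq] at this
        omega
      · intro i hi j hj
        have hi' := hidx r i hr (by omega)
        have hj' := hidx r j hr (by omega)
        dsimp only
        rw [hgg _ hi'.1, hgg _ hj'.1, g.map_adj_iff]
        simp only [CycG, ne_eq, Fin.mk.injEq]
        omega
    · intro k hk
      have hk' := hidx r k hr (by omega)
      rw [hgg _ hk'.1]
      exact hon _
  obtain ⟨k0, hk0⟩ := hv
  have hk0A : A k0.val := by
    change G.Adj v (gg k0.val)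
    rw [hgg _ k0.2]; exact hk0
  have tr : ∀ x y, x = y → A x → A y := fun x y h hx => h ▸ hx
  have eqidx : ∀ r k x, x < l + 1 → r ≤ l → k ≤ l → (r + k = x ∨ r + k = x + l + 1) →
      x = idx r k := by
    intro r k x h1 h2 h3 h4
    have := hidx r k h2 h3
    omega
  -- centre
  obtain ⟨t, ht, t0, t1, t2⟩ : ∃ t ≤ l, A t ∧ A (idx t 1) ∧ A (idx t l) := by
    have hk0l := k0.2
    have hr := hidx k0 (l - 1) (by omega) (by omega)
    obtain ⟨j, hj, hjk⟩ := key (idx k0 (l - 1)) (by omega) 2 (by omega) (by omega)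
      (tr _ _ (eqidx _ _ _ k0.2 (by omega) (by omega) (by omega)) hk0A)
    have h2 := (hjk 2 (by omega)).1
      (tr _ _ (eqidx _ _ _ k0.2 (by omega) (by omega) (by omega)) hk0A)
    have hc := hidx (idx k0 (l - 1)) j (by omega) (by omega)
    refine ⟨idx (idx k0 (l - 1)) j, by omega, (hjk j hj).2 (by omega), ?_, ?_⟩
    · have hc' := hidx (idx (idx k0 (l - 1)) j) 1 (by omega) (by omega)
      exact tr _ _ (eqidx _ _ _ (by omega) (by omega) (by omega) (by omega)).symm
        ((hjk (j + 1) (by omega)).2 (by omega))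
    · have hc' := hidx (idx (idx k0 (l - 1)) j) l (by omega) (by omega)
      exact tr _ _ (eqidx _ _ _ (by omega) (by omega) (by omega) (by omega)).symm
        ((hjk (j - 1) (by omega)).2 (by omega))
  have i1 := hidx t 1 ht (by omega)
  have i2 := hidx t l ht (by omega)
  have i3 := hidx t (l - 1) ht (by omega)
  have b1 : ∀ k < l, (A (idx (idx t (l - 1)) k) ↔ k = 2 ∨ k + 1 = 2 ∨ 2 + 1 = k) := by
    have p2 := tr _ (idx (idx t (l - 1)) 2) (eqidx _ _ _ (by omega) (by omega) (by omega) (by omega)) t0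
    have p3 := tr _ (idx (idx t (l - 1)) 3) (eqidx _ _ _ (by omega) (by omega) (by omega) (by omega)) t1
    have p1 := tr _ (idx (idx t (l - 1)) 1) (eqidx _ _ _ (by omega) (by omega) (by omega) (by omega)) t2
    obtain ⟨j, hj, hjk⟩ := key _ (by omega) 2 (by omega) (by omega) p2
    have q1 := (hjk 1 (by omega)).1 p1
    have q3 := (hjk 3 (by omega)).1 p3
    obtain rfl : j = 2 := by omega
    exact hjk
  have b2 : ∀ k < l, (A (idx (idx t l) k) ↔ k = 1 ∨ k + 1 = 1 ∨ 1 + 1 = k) := by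
    have p2 := tr _ (idx (idx t l) 1) (eqidx _ _ _ (by omega) (by omega) (by omega) (by omega)) t0
    have p3 := tr _ (idx (idx t l) 2) (eqidx _ _ _ (by omega) (by omega) (by omega) (by omega)) t1
    have p1 := tr _ (idx (idx t l) 0) (eqidx _ _ _ (by omega) (by omega) (by omega) (by omega)) t2
    obtain ⟨j, hj, hjk⟩ := key _ (by omega) 1 (by omega) (by omega) p2
    have q1 := (hjk 0 (by omega)).1 p1
    have q3 := (hjk 2 (by omega)).1 p3
    obtain rfl : j = 1 := by omega
    exact hjk
  refine ⟨⟨t, by omega⟩, fun k => ?_⟩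
  rw [← hgg k.val k.2, cl_cyc]
  change A k.val ↔ _
  have hk := k.2
  obtain ⟨s, hs, hs'⟩ : ∃ s ≤ l, k.val = idx (idx t (l - 1)) s := by
    by_cases h : idx t (l - 1) ≤ k.val
    · exact ⟨k.val - idx t (l - 1), by omega, eqidx _ _ _ hk (by omega) (by omega) (by omega)⟩
    · exact ⟨k.val + l + 1 - idx t (l - 1), by omega, eqidx _ _ _ hk (by omega) (by omega) (by omega)⟩
  have i4 := hidx (idx t (l - 1)) s (by omega) hs
  rw [← hs'] at i4
  by_cases hsl : s < l
  · rw [hs', b1 s hsl, ← hs']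
    dsimp only
    omega
  · have := eqidx (idx t l) (l - 1) k.val hk (by omega) (by omega) (by omega)
    rw [this, b2 _ (by omega), ← this]
    dsimp only
    omega

lemma path_good {V : Type*} {G : SimpleGraph V} {l : ℕ} (hl : 5 ≤ l)
    (hall : ∀ (f : ℕ → V), IndPath G f l → ∀ v, (∀ k < l, v ≠ f k) →
      Allowed (fun k => G.Adj v (f k)) l)
    (hmax : ∀ f, ¬ IndPath G f (l + 1))
    (hnc : ∀ f : ℕ → V, IndPath G f l → ∀ v, (∀ k < l, v ≠ f k) →
      ¬ (∀ k < l, (G.Adj v (f k) ↔ k = 0 ∨ k + 1 = l)))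
    (g : SimpleGraph.pathGraph l ↪g G) (v : V) (hv : ∃ k, Cl G v (g k)) :
    ∃ j, ∀ k, (Cl G v (g k) ↔ Cl (SimpleGraph.pathGraph l) j k) := by
  by_cases hon : ∃ j, v = g j
  · obtain ⟨j, rfl⟩ := hon
    exact ⟨j, fun k => by simp [Cl]⟩
  push Not at hon
  have hcl : ∀ k, Cl G v (g k) ↔ G.Adj v (g k) := fun k => by simp [Cl, hon k]
  simp only [hcl] at hv ⊢
  let f : ℕ → V := fun k => if h : k < l then g ⟨k, h⟩ else v
  have hgg : ∀ k (h : k < l), f k = g ⟨k, h⟩ := fun k h => dif_pos h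
  have hf : IndPath G f l := by
    constructor
    · intro i hi j hj e
      rw [hgg _ hi, hgg _ hj] at e
      have := g.injective e
      rwa [Fin.mk.injEq] at this
    · intro i hi j hj
      rw [hgg _ hi, hgg _ hj, g.map_adj_iff, SimpleGraph.pathGraph_adj]
  have hvf : ∀ k < l, v ≠ f k := fun k hk => by rw [hgg _ hk]; exact hon _
  obtain ⟨hi, hadj⟩ := hf
  have hall' := hall f ⟨hi, hadj⟩ v hvf
  simp only [Allowed] at hall'
  rcases hall' with h | h | h | h | ⟨j, hj, h⟩
  · obtain ⟨k, hk⟩ := hv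
    exact absurd (by rw [hgg _ k.2]; exact hk) (h k.val k.2)
  · exfalso
    refine hmax (fun k => if k = 0 then v else f (k - 1)) ⟨fun a ha b hb e => ?_, fun a ha b hb => ?_⟩
    · dsimp only at e
      split_ifs at e with p q q
      · omega
      · exact absurd e (hvf _ (by omega))
      · exact absurd e.symm (hvf _ (by omega))
      · have := hi _ (by omega) _ (by omega) e
        omega
    · dsimp only
      split_ifs with p q q
      · simp; omega
      · rw [h _ (by omega)]; omega
      · rw [G.adj_comm, h _ (by omega)]; omega
      · rw [hadj _ (by omega) _ (by omega)]; omega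
  · exfalso
    refine hmax (fun k => if k = l then v else f k) ⟨fun a ha b hb e => ?_, fun a ha b hb => ?_⟩
    · dsimp only at e
      split_ifs at e with p q q
      · omega
      · exact absurd e (hvf _ (by omega))
      · exact absurd e.symm (hvf _ (by omega))
      · exact hi _ (by omega) _ (by omega) e
    · dsimp only
      split_ifs with p q q
      · simp; omega
      · rw [h _ (by omega)]; omega
      · rw [G.adj_comm, h _ (by omega)]; omega
      · rw [hadj _ (by omega) _ (by omega)]
  · exact absurd h (hnc f ⟨hi, hadj⟩ v hvf)
  · refine ⟨⟨j, hj⟩, fun k => ?_⟩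
    rw [← hgg k.val k.2, h k.val k.2, cl_path]
    dsimp only
    omega

/-- **Theorem 4 (Statement 3).** Let `m ≥ 1` and let `G` be a connected
`{K_{1,3}, B_{1,m}}`-free graph.  Then `G` contains `P_{max{3m, m+4}}` as an induced
subgraph iff `G` belongs to `𝒫(max{3m, m+4})`. -/
theorem stmt3 {V : Type*} [Fintype V] (m : ℕ) (hm : 1 ≤ m) (G : SimpleGraph V)
    (hconn : G.Connected)
    (hK13 : ¬ ContainsInduced G K13) (hB1m : ¬ ContainsInduced G (Bgraph m)) :
    ContainsInduced G (SimpleGraph.pathGraph (max (3 * m) (m + 4))) ↔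
      MemFatFamily G (max (3 * m) (m + 4)) := by
  obtain ⟨p, hp⟩ : ∃ p, p = max (3 * m) (m + 4) := ⟨_, rfl⟩
  rw [← hp]
  have hp1 : 3 * m ≤ p := hp ▸ le_max_left _ _
  have hp2 : m + 4 ≤ p := hp ▸ le_max_right _ _
  clear hp
  constructor
  · rintro ⟨e⟩
    by_cases hc : ∃ l, p ≤ l ∧ ∃ f : ℕ → V, IndPath G f l ∧ ∃ v, (∀ k < l, v ≠ f k) ∧
        (∀ k < l, (G.Adj v (f k) ↔ k = 0 ∨ k + 1 = l))
    · obtain ⟨l, hpl, f, ⟨hi, hadj⟩, v, hv, hvA⟩ := hc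
      have hl : 5 ≤ l := by omega
      obtain ⟨g⟩ : ContainsInduced G (CycG l) := by
        refine mk_emb (fun i => if i.val < l then f i.val else v) ?_ ?_
        · rintro ⟨x, hx⟩ ⟨y, hy⟩ h
          rw [Fin.mk.injEq]
          dsimp only at h
          split_ifs at h with h1 h2 h2
          · exact hi _ h1 _ h2 h
          · exact absurd h.symm (hv _ h1)
          · exact absurd h (hv _ h2)
          · omega
        · rintro ⟨x, hx⟩ ⟨y, hy⟩
          simp only [CycG, ne_eq, Fin.mk.injEq]
          split_ifs with h1 h2 h2
          · rw [hadj _ h1 _ h2]; omega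
          · rw [G.adj_comm, hvA _ h1]; omega
          · rw [hvA _ h2]; omega
          · simp; omega
      obtain ⟨L, h1, h2, h3, h4⟩ := abstract_fat (H := CycG l) hconn
        (fun g v hv => cyc_good hl (fun f hf v hv => allowed hm hK13 hB1m f l (by omega) (by omega) hf v hv) g v hv)
        (by
          intro i
          by_cases h : i.val = l
          · refine ⟨⟨0, by omega⟩, ?_⟩
            exact ⟨fun e => by have := congrArg Fin.val e; dsimp only at this; omega, by dsimp only; omega⟩
          · refine ⟨⟨i.val + 1, by omega⟩, ?_⟩
            exact ⟨fun e => by have := congrArg Fin.val e; dsimp only at this; omega, by dsimp only; omega⟩)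
        (fun i j h => cyc_P3' hl i j i (fun k _ => h k))
        (fun i j i' j' h _ _ => by rw [cyc_P3' hl i j j' h]) g
      refine ⟨l, hpl, Or.inr ⟨hl, L, ⟨h1, h2, ?_⟩, h4⟩⟩
      intro i j u v hu hv' huv
      rw [h3 i j u v hu hv' huv, cl_cyc, Fin.ext_iff]
      have hmod : ∀ x : Fin (l + 1), (x.val + 1) % (l + 1) = if x.val = l then 0 else x.val + 1 := by
        intro x
        split_ifs with h
        · rw [h]; exact Nat.mod_self _
        · exact Nat.mod_eq_of_lt (by omega)
      rw [hmod, hmod]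
      have := i.2
      have := j.2
      split_ifs <;> omega
    · push Not at hc
      obtain ⟨l, hpl, ⟨f, hi, hadj⟩, hmax⟩ : ∃ l, p ≤ l ∧ (∃ f : ℕ → V, IndPath G f l) ∧
          ∀ f, ¬ IndPath G f (l + 1) := by
        by_contra hno
        push Not at hno
        have hall : ∀ d, ∃ f : ℕ → V, IndPath G f (p + d) := by
          intro d
          induction d with
          | zero =>
            have h0 : 0 < p := by omega
            let f : ℕ → V := fun k => if h : k < p then e ⟨k, h⟩ else e ⟨0, h0⟩
            have hgg : ∀ k (h : k < p), f k = e ⟨k, h⟩ := fun k h => dif_pos h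
            refine ⟨f, ?_, ?_⟩
            · intro i hi j hj h
              rw [hgg _ hi, hgg _ hj] at h
              have := e.injective h
              rwa [Fin.mk.injEq] at this
            · intro i hi j hj
              rw [hgg _ hi, hgg _ hj, e.map_adj_iff, SimpleGraph.pathGraph_adj]
          | succ d ih => exact hno (p + d) (by omega) ih
        obtain ⟨f, hf, -⟩ := hall (Fintype.card V + 1)
        have := Fintype.card_le_of_injective (fun i : Fin (p + (Fintype.card V + 1)) => f i.val)
          (fun i j h => Fin.ext (hf _ i.2 _ j.2 h))
        rw [Fintype.card_fin] at this
        omega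
      have hl : 5 ≤ l := by omega
      obtain ⟨g⟩ : ContainsInduced G (SimpleGraph.pathGraph l) :=
        mk_emb (fun i => f i.val) (fun i j h => Fin.ext (hi _ i.2 _ j.2 h))
          (fun i j => by rw [SimpleGraph.pathGraph_adj]; exact hadj _ i.2 _ j.2)
      have : Nonempty (Fin l) := ⟨⟨0, by omega⟩⟩
      obtain ⟨L, h1, h2, h3, h4⟩ := abstract_fat (H := SimpleGraph.pathGraph l) hconn
        (fun g v hv => path_good hl
          (fun f hf v hv => allowed hm hK13 hB1m f l (by omega) (by omega) hf v hv) hmax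
          (fun f hf v hv h => by
            obtain ⟨k, hk, h'⟩ := hc l hpl f hf v hv
            have := h k hk
            tauto) g v hv)
        (by
          intro i
          by_cases h : i.val = 0
          · refine ⟨⟨1, by omega⟩, ?_⟩
            rw [SimpleGraph.pathGraph_adj]; simp [h]
          · refine ⟨⟨i.val - 1, by omega⟩, ?_⟩
            rw [SimpleGraph.pathGraph_adj]; dsimp only; omega)
        (fun i j h => by
          simp only [cl_path] at h
          have a1 := path_aux hl l j i j.2 i.2 (fun k hk _ => h ⟨k, hk⟩)
          exact Fin.ext (by omega))
        (fun i j i' j' => path_P3 hl i j i' j') g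
      refine ⟨l, hpl, Or.inl ⟨hl, L, ⟨h1, h2, ?_⟩, h4⟩⟩
      intro i j u v hu hv' huv
      rw [h3 i j u v hu hv' huv, cl_path, Fin.ext_iff]
  · rintro ⟨l, hpl, ⟨hl, L, ⟨h1, h2, h3⟩, -⟩ | ⟨hl, L, ⟨h1, h2, h3⟩, -⟩⟩
    · choose s hs using h1
      have inj : ∀ i j, s i = s j → i = j := by
        intro i j h
        by_contra hn
        exact Set.disjoint_left.1 (h2 i j hn) (hs i) (h ▸ hs j)
      refine mk_emb (fun i => s ⟨i.val, by omega⟩) (fun i j h => ?_) (fun i j => ?_)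
      · have := inj _ _ h
        rw [Fin.mk.injEq] at this
        exact Fin.ext this
      · rw [SimpleGraph.pathGraph_adj]
        by_cases hij : i = j
        · subst hij; simp
        · rw [h3 _ _ _ _ (hs _) (hs _) (fun h => hij (by
            have := inj _ _ h
            rw [Fin.mk.injEq] at this
            exact Fin.ext this))]
          rw [Fin.ext_iff] at hij
          simp only [Fin.mk.injEq]
          omega
    · choose s hs using h1
      have inj : ∀ i j, s i = s j → i = j := by
        intro i j h
        by_contra hn
        exact Set.disjoint_left.1 (h2 i j hn) (hs i) (h ▸ hs j)
      refine mk_emb (fun i => s ⟨i.val, by omega⟩) (fun i j h => ?_) (fun i j => ?_)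
      · have := inj _ _ h
        rw [Fin.mk.injEq] at this
        exact Fin.ext this
      · rw [SimpleGraph.pathGraph_adj]
        by_cases hij : i = j
        · subst hij; simp
        · rw [h3 _ _ _ _ (hs _) (hs _) (fun h => hij (by
            have := inj _ _ h
            rw [Fin.mk.injEq] at this
            exact Fin.ext this))]
          rw [Fin.ext_iff] at hij
          simp only [Fin.mk.injEq]
          rw [Nat.mod_eq_of_lt (by omega), Nat.mod_eq_of_lt (by omega)]
          omega
end

section
/- Let G be a connected {K_{1,3}, Z_2}-free graph which contains N as an induced subgraph. Then G is a pointed generalized comb. -/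
open SimpleGraph

/-- `Z_k = N_{k,0,0}`: a triangle `0,1,2` together with a path of length `k`
attached at the vertex `2`. -/
def Zgraph (k : ℕ) : SimpleGraph (Fin (k + 3)) :=
  SimpleGraph.fromRel (fun a b =>
    (a.val = 0 ∧ b.val = 1) ∨ (a.val = 0 ∧ b.val = 2) ∨ (a.val = 1 ∧ b.val = 2) ∨
    (2 ≤ a.val ∧ b.val = a.val + 1))

/-- The net `N = N_{1,1,1}`: a triangle `0,1,2` with pendant vertices `3,4,5`
attached to `0,1,2` respectively. -/
def Ngraph : SimpleGraph (Fin 6) :=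
  graphOfList 6 [(0,1), (0,2), (1,2), (0,3), (1,4), (2,5)]

/-- `G` is a pointed generalized comb: there are `m ≥ 3` leaf vertices `A 0,…,A (m-1)`,
a clique `C` with `|C| ≥ m` covering the rest of the graph, and pairwise disjoint nonempty
subcliques `R i ⊆ C` such that each `A i` is joined exactly to the vertices of `R i`. -/
def IsPointedGeneralizedComb {V : Type*} (G : SimpleGraph V) : Prop :=
  ∃ (m : ℕ) (A : Fin m → V) (C : Set V) (R : Fin m → Set V),
    3 ≤ m ∧
    Function.Injective A ∧
    (∀ i, A i ∉ C) ∧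
    (∀ v : V, (∃ i, v = A i) ∨ v ∈ C) ∧
    m ≤ C.ncard ∧
    (∀ i, (R i).Nonempty) ∧
    (∀ i, R i ⊆ C) ∧
    (∀ i j, i ≠ j → Disjoint (R i) (R j)) ∧
    (∀ u v : V, u ≠ v →
      (G.Adj u v ↔ (u ∈ C ∧ v ∈ C) ∨ ∃ i, (u = A i ∧ v ∈ R i) ∨ (v = A i ∧ u ∈ R i)))


theorem claw_aux {V : Type*} (G : SimpleGraph V) (h : ¬ ContainsInduced G K13)
    (a x y z : V) (h1 : G.Adj a x) (h2 : G.Adj a y) (h3 : G.Adj a z)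
    (hxy : x ≠ y) (hxz : x ≠ z) (hyz : y ≠ z) : G.Adj x y ∨ G.Adj x z ∨ G.Adj y z := by
  by_contra hc
  push Not at hc
  obtain ⟨n1, n2, n3⟩ := hc
  apply h
  have e1 := h1.ne
  have e2 := h2.ne
  have e3 := h3.ne
  refine ⟨⟨⟨![a, x, y, z], ?_⟩, ?_⟩⟩
  · intro i j hij
    fin_cases i <;> fin_cases j <;> simp_all
  · intro i j
    change G.Adj (![a, x, y, z] i) (![a, x, y, z] j) ↔ _
    fin_cases i <;> fin_cases j <;>
      simp_all [K13, graphOfList, SimpleGraph.fromRel_adj, G.adj_comm]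

theorem z2_aux {V : Type*} (G : SimpleGraph V) (h : ¬ ContainsInduced G (Zgraph 2))
    (a b c d e : V) (h1 : G.Adj a b) (h2 : G.Adj a c) (h3 : G.Adj b c)
    (h4 : G.Adj c d) (h5 : G.Adj d e) (n1 : ¬ G.Adj a d) (n2 : ¬ G.Adj b d)
    (n3 : ¬ G.Adj a e) (n4 : ¬ G.Adj b e) (n5 : ¬ G.Adj c e) : False := by
  apply h
  have e1 := h1.ne
  have e2 := h2.ne
  have e3 := h3.ne
  have e4 := h4.ne
  have e5 := h5.ne
  have f1 : a ≠ d := by rintro rfl; exact n2 h1.symm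
  have f2 : b ≠ d := by rintro rfl; exact n1 h1
  have f3 : a ≠ e := by rintro rfl; exact n5 h2.symm
  have f4 : b ≠ e := by rintro rfl; exact n5 h3.symm
  have f5 : c ≠ e := by rintro rfl; exact n3 h2
  have s1 := h1.symm
  have s2 := h2.symm
  have s3 := h3.symm
  have s4 := h4.symm
  have s5 := h5.symm
  have m1 : ¬ G.Adj d a := fun t => n1 t.symm
  have m2 : ¬ G.Adj d b := fun t => n2 t.symm
  have m3 : ¬ G.Adj e a := fun t => n3 t.symm
  have m4 : ¬ G.Adj e b := fun t => n4 t.symm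
  have m5 : ¬ G.Adj e c := fun t => n5 t.symm
  refine ⟨⟨⟨![a, b, c, d, e], ?_⟩, ?_⟩⟩
  · intro i j hij
    fin_cases i <;> fin_cases j <;> first | rfl | (exfalso; simp at hij; grind)
  · intro i j
    change G.Adj (![a, b, c, d, e] i) (![a, b, c, d, e] j) ↔ _
    fin_cases i <;> fin_cases j <;>
      simp [Zgraph, SimpleGraph.fromRel_adj, *]

theorem net_aux {V : Type*} (G : SimpleGraph V) (h : ContainsInduced G Ngraph) :
    ∃ c l : Fin 3 → V, (∀ i j, i ≠ j → G.Adj (c i) (c j)) ∧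
      (∀ i j, G.Adj (c i) (l j) ↔ i = j) ∧ (∀ i j, ¬ G.Adj (l i) (l j)) ∧
      Function.Injective l := by
  obtain ⟨f⟩ := h
  refine ⟨fun i => f (![0,1,2] i), fun i => f (![3,4,5] i), ?_, ?_, ?_, ?_⟩
  · intro i j
    rw [f.map_adj_iff]
    fin_cases i <;> fin_cases j <;> simp [Ngraph, graphOfList]
  · intro i j
    rw [f.map_adj_iff]
    fin_cases i <;> fin_cases j <;> simp [Ngraph, graphOfList]
  · intro i j
    rw [f.map_adj_iff]
    fin_cases i <;> fin_cases j <;> simp [Ngraph, graphOfList]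
  · intro i j hij
    have := f.injective hij
    revert this
    fin_cases i <;> fin_cases j <;> simp

theorem third (i j : Fin 3) : ∃ k, k ≠ i ∧ k ≠ j := by
  revert i j; decide

theorem miss3 (P Q : Fin 3 → Prop) (hP : ∀ i j, P i → P j → i = j)
    (hQ : ∀ i j, Q i → Q j → i = j) : ∃ i, ¬ P i ∧ ¬ Q i := by
  have a1 := hP 0 1
  have a2 := hP 0 2
  have a3 := hP 1 2
  have b1 := hQ 0 1
  have b2 := hQ 0 2
  have b3 := hQ 1 2
  by_contra hc
  have c0 : ¬ (¬ P 0 ∧ ¬ Q 0) := fun t => hc ⟨0, t⟩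
  have c1 : ¬ (¬ P 1 ∧ ¬ Q 1) := fun t => hc ⟨1, t⟩
  have c2 : ¬ (¬ P 2 ∧ ¬ Q 2) := fun t => hc ⟨2, t⟩
  clear hP hQ hc
  simp at a1 a2 a3 b1 b2 b3
  tauto

theorem stmt4 {V : Type*} [Fintype V] (G : SimpleGraph V) (hconn : G.Connected)
    (hK13 : ¬ ContainsInduced G K13) (hZ2 : ¬ ContainsInduced G (Zgraph 2))
    (hN : ContainsInduced G Ngraph) :
    IsPointedGeneralizedComb G := by
  classical
  obtain ⟨c, l, hcc, hcl, hll, hlinj⟩ := net_aux G hN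
  have claw := claw_aux G hK13
  have z2 := z2_aux G hZ2
  have hcl1 : ∀ i, G.Adj (c i) (l i) := fun i => (hcl i i).2 rfl
  have hcl0 : ∀ i j, i ≠ j → ¬ G.Adj (c i) (l j) := fun i j h t => h ((hcl i j).1 t)
  have hclne : ∀ i j, c i ≠ l j := by
    intro i j h
    obtain ⟨k, hk, hk'⟩ := third i j
    exact hcl0 k j hk' (h ▸ hcc k i hk)
  -- step A
  have stepA : ∀ v i j, G.Adj v (c i) → v ≠ l i → v ≠ c j → G.Adj v (c j) := by
    intro v i j h1 h2 h3
    by_contra h4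
    have hij : i ≠ j := by rintro rfl; exact h4 h1
    obtain ⟨k, hki, hkj⟩ := third i j
    have hvl : G.Adj v (l i) := by
      rcases claw (c i) v (c j) (l i) h1.symm (hcc i j hij) (hcl1 i) h3 h2 (hclne j i) with
        h | h | h
      · exact absurd h h4
      · exact h
      · exact absurd h (hcl0 j i hij.symm)
    have key : ∀ m, m ≠ i → ¬ G.Adj v (c m) → G.Adj v (l m) := by
      intro m hm hv
      by_contra hvm
      exact z2 v (l i) (c i) (c m) (l m) hvl h1 (hcl1 i).symm (hcc i m hm.symm) (hcl1 m) hv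
        (fun t => hcl0 m i hm t.symm) hvm (hll i m) (hcl0 i m hm.symm)
    have hvlj := key j hij.symm h4
    by_cases hvk : G.Adj v (c k)
    · rcases claw v (l i) (l j) (c k) hvl hvlj hvk (fun t => hij (hlinj t))
        (hclne k i).symm (hclne k j).symm with h | h | h
      · exact hll _ _ h
      · exact hcl0 k i hki h.symm
      · exact hcl0 k j hkj h.symm
    · have hvlk := key k hki hvk
      rcases claw v (l i) (l j) (l k) hvl hvlj hvlk (fun t => hij (hlinj t))
        (fun t => hki (hlinj t).symm) (fun t => hkj (hlinj t).symm) with h | h | h <;>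
      exact hll _ _ h
  let C : Set V := {v | ∀ i, v = c i ∨ G.Adj v (c i)}
  have hcC : ∀ i, c i ∈ C := by
    intro i j
    by_cases h : i = j
    · left; rw [h]
    · right; exact hcc i j h
  have hlC : ∀ i, l i ∉ C := by
    intro i h
    obtain ⟨k, hk, _⟩ := third i i
    rcases h k with h | h
    · exact hclne _ _ h.symm
    · exact hcl0 k i hk h.symm
  have hL : ∀ v, v ∉ C → ∀ i, G.Adj v (c i) → v = l i := by
    intro v hv i h
    by_contra hne
    apply hv
    intro j
    by_cases hj : v = c j
    · exact Or.inl hj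
    · exact Or.inr (stepA v i j h hne hj)
  -- at most one l
  have hone : ∀ v ∈ C, ∀ i j, G.Adj v (l i) → G.Adj v (l j) → i = j := by
    intro v hv i j h1 h2
    by_contra hij
    obtain ⟨k, hki, hkj⟩ := third i j
    rcases hv k with h | h
    · subst h; exact hcl0 k i hki h1
    · rcases claw v (l i) (l j) (c k) h1 h2 h (fun t => hij (hlinj t))
        (hclne k i).symm (hclne k j).symm with h | h | h
      · exact hll _ _ h
      · exact hcl0 k i hki h.symm
      · exact hcl0 k j hkj h.symm
  have hmiss : ∀ u ∈ C, ∀ v ∈ C, ∃ i, ¬ G.Adj u (l i) ∧ ¬ G.Adj v (l i) := by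
    intro u hu v hv
    exact miss3 _ _ (hone u hu) (hone v hv)
  have hclq : ∀ u ∈ C, ∀ v ∈ C, u ≠ v → G.Adj u v := by
    intro u hu v hv huv
    by_contra hn
    obtain ⟨i, hi, hi'⟩ := hmiss u hu v hv
    rcases hu i with h | h
    · subst h; exact hi (hcl1 i)
    rcases hv i with h' | h'
    · subst h'; exact hi' (hcl1 i)
    rcases claw (c i) u v (l i) h.symm h'.symm (hcl1 i) huv
      (fun t => hlC i (t ▸ hu)) (fun t => hlC i (t ▸ hv)) with h | h | h
    · exact hn h
    · exact hi h
    · exact hi' h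
  -- l i is not adjacent to anything outside C
  have hlL : ∀ v, v ∉ C → ∀ i, ¬ G.Adj v (l i) := by
    intro v hv i h
    by_cases hvl : ∃ j, v = l j
    · obtain ⟨j, rfl⟩ := hvl; exact hll _ _ h
    have hno : ∀ j, ¬ G.Adj v (c j) := fun j t => hvl ⟨j, hL v hv j t⟩
    obtain ⟨j, hji, _⟩ := third i i
    obtain ⟨k, hki, hkj⟩ := third i j
    exact z2 (c j) (c k) (c i) (l i) v (hcc _ _ hkj.symm) (hcc _ _ hji) (hcc _ _ hki)
      (hcl1 i) h.symm (hcl0 _ _ hji) (hcl0 _ _ hki) (fun t => hno _ t.symm)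
      (fun t => hno _ t.symm) (fun t => hno _ t.symm)
  have hLL0 : ∀ w, w ∉ C → ∀ w', w' ∉ C → ∀ x ∈ C, G.Adj w x → ¬ G.Adj w w' := by
    intro w hw w' hw' x hx hwx hww
    have hno : ∀ j, ¬ G.Adj w (c j) := fun j t => by
      have := hL w hw j t
      subst this; exact hlL w' hw' j hww.symm
    have hno' : ∀ j, ¬ G.Adj w' (c j) := fun j t => by
      have := hL w' hw' j t
      subst this; exact hlL w hw j hww
    have hxc : ∀ j, G.Adj x (c j) := by
      intro j
      rcases hx j with h | h
      · subst h; exact absurd hwx (hno j)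
      · exact h
    by_cases hx' : G.Adj w' x
    · obtain ⟨i, hi, _⟩ := hmiss x hx x hx
      exact z2 w w' x (c i) (l i) hww hwx hx' (hxc i) (hcl1 i) (hno i) (hno' i)
        (hlL w hw i) (hlL w' hw' i) hi
    · exact z2 (c 0) (c 1) x w w' (hcc _ _ (by decide)) (hxc 0).symm (hxc 1).symm hwx.symm hww
        (fun t => hno _ t.symm) (fun t => hno _ t.symm) (fun t => hno' _ t.symm)
        (fun t => hno' _ t.symm) (fun t => hx' t.symm)
  have hreach : ∀ v, v ∈ C ∨ ∃ x ∈ C, G.Adj v x := by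
    have step : ∀ u v, G.Adj u v → (u ∈ C ∨ ∃ x ∈ C, G.Adj u x) →
        (v ∈ C ∨ ∃ x ∈ C, G.Adj v x) := by
      intro u v huv hu
      by_cases hv : v ∈ C
      · exact Or.inl hv
      by_cases huC : u ∈ C
      · exact Or.inr ⟨u, huC, huv.symm⟩
      rcases hu with hu | ⟨x, hx, hux⟩
      · exact absurd hu huC
      · exact absurd huv (hLL0 u huC v hv x hx hux)
    intro v
    obtain ⟨p⟩ := hconn.preconnected (c 0) v
    have : ∀ (a b : V), G.Walk a b → (a ∈ C ∨ ∃ x ∈ C, G.Adj a x) →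
        (b ∈ C ∨ ∃ x ∈ C, G.Adj b x) := by
      intro a b p
      induction p with
      | nil => exact id
      | cons h _ ih => exact fun t => ih (step _ _ h t)
    exact this _ _ p (Or.inl (hcC 0))
  have hnb : ∀ w, w ∉ C → ∃ x ∈ C, G.Adj w x := fun w hw => (hreach w).resolve_left hw
  have hLL : ∀ w, w ∉ C → ∀ w', w' ∉ C → ¬ G.Adj w w' := by
    intro w hw w' hw'
    obtain ⟨x, hx, h⟩ := hnb w hw
    exact hLL0 w hw w' hw' x hx h
  have huniq : ∀ x ∈ C, ∀ w, w ∉ C → ∀ w', w' ∉ C → G.Adj w x → G.Adj w' x → w = w' := by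
    intro x hx w hw w' hw' h h'
    by_contra hne
    by_cases hxc : ∃ j, x = c j
    · obtain ⟨j, rfl⟩ := hxc
      exact hne ((hL w hw j h).trans (hL w' hw' j h').symm)
    have hex : ∃ i, ¬ G.Adj w (c i) ∧ ¬ G.Adj w' (c i) := by
      have a : ∀ w, w ∉ C → ∀ i j, G.Adj w (c i) → G.Adj w (c j) → i = j :=
        fun w hw i j t t' => hlinj ((hL w hw i t).symm.trans (hL w hw j t'))
      exact miss3 _ _ (a w hw) (a w' hw')
    obtain ⟨i, hi, hi'⟩ := hex
    have hxi : G.Adj x (c i) := (hx i).resolve_left (fun t => hxc ⟨i, t⟩)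
    rcases claw x w w' (c i) h.symm h'.symm hxi hne (fun t => hw (t ▸ hcC i))
      (fun t => hw' (t ▸ hcC i)) with t | t | t
    · exact hLL w hw w' hw' t
    · exact hi t
    · exact hi' t
  let L := {v : V // v ∉ C}
  let e : L ≃ Fin (Fintype.card L) := Fintype.equivFin L
  refine ⟨Fintype.card L, fun i => (e.symm i).1, C, fun i => {x | x ∈ C ∧ G.Adj (e.symm i).1 x},
    ?_, ?_, ?_, ?_, ?_, ?_, ?_, ?_, ?_⟩
  · have := Fintype.card_le_of_injective (fun i : Fin 3 => (⟨l i, hlC i⟩ : L))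
      (fun i j h => hlinj (congrArg Subtype.val h))
    rwa [Fintype.card_fin] at this
  · exact fun i j h => e.symm.injective (Subtype.ext h)
  · exact fun i => (e.symm i).2
  · intro v
    by_cases h : v ∈ C
    · exact Or.inr h
    · exact Or.inl ⟨e ⟨v, h⟩, by simp⟩
  · choose f hf hf' using hnb
    have := Fintype.card_le_of_injective (fun w : L => (⟨f w.1 w.2, hf w.1 w.2⟩ : C)) (by
      intro w w' h
      have h2 : f w.1 w.2 = f w'.1 w'.2 := congrArg Subtype.val h
      exact Subtype.ext (huniq _ (hf w.1 w.2) _ w.2 _ w'.2 (hf' w.1 w.2) (h2 ▸ hf' w'.1 w'.2)))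
    rwa [← Nat.card_eq_fintype_card (α := C), Nat.card_coe_set_eq] at this
  · intro i
    obtain ⟨x, hx, h⟩ := hnb _ (e.symm i).2
    exact ⟨x, hx, h⟩
  · exact fun i x hx => hx.1
  · intro i j hij
    rw [Set.disjoint_left]
    rintro x ⟨hx, h⟩ ⟨_, h'⟩
    exact hij (e.symm.injective (Subtype.ext
      (huniq x hx _ (e.symm i).2 _ (e.symm j).2 h h')))
  · intro u v huv
    constructor
    · intro h
      by_cases hu : u ∈ C
      · by_cases hv : v ∈ C
        · exact Or.inl ⟨hu, hv⟩
        · exact Or.inr ⟨e ⟨v, hv⟩, Or.inr ⟨by simp, hu, by simpa using h.symm⟩⟩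
      · by_cases hv : v ∈ C
        · exact Or.inr ⟨e ⟨u, hu⟩, Or.inl ⟨by simp, hv, by simpa using h⟩⟩
        · exact absurd h (hLL u hu v hv)
    · rintro (⟨hu, hv⟩ | ⟨i, ⟨h1, h2⟩ | ⟨h1, h2⟩⟩)
      · exact hclq u hu v hv huv
      · rw [h1]; exact h2.2
      · rw [h1]; exact h2.2.symm
end
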